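/- arXiv:2508.08809 — 2 statements merged into one kernel-verified Lean document; each statement's English description precedes it below -/
import Mathlib

section
/- Let μ ∈ (0,1]. There is a constant C, independent of μ, such that for every λ > 0, every t ∈ ℝ \ {0} and every Schwartz function f on ℝ², ‖S_{μ,2}(t) P_λ f‖_{L^∞(ℝ²)} ≤ C μ^{-1/2} |t|^{-1} ⟨√μ λ⟩^{3/2} ‖f‖_{L^1(ℝ²)}. -/
noncomputable section

open MeasureTheory SchwartzMap
open scoped FourierTransform ENNReal

/-- The plane `ℝ²` as a Euclidean space. -/
abbrev E2 := EuclideanSpace ℝ (Fin 2)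

/-- The Japanese bracket `⟨x⟩ = (1 + x²)^{1/2}`. -/
def jap (x : ℝ) : ℝ := (1 + x ^ 2) ^ ((1 : ℝ) / 2)

/-- The symbol `m₂(ξ) = |ξ| (tanh|ξ|/|ξ|)^{1/2}`, with `m₂(0) = 0`. -/
def m2 (ξ : E2) : ℝ :=
  if ‖ξ‖ = 0 then 0 else ‖ξ‖ * Real.sqrt (Real.tanh ‖ξ‖ / ‖ξ‖)

/-- The propagator `S_{μ,2}(t) f = (e^{i(t/√μ) m₂(√μ ξ)} f̂(ξ))^∨`. -/
def prop2 (μ t : ℝ) (f : E2 → ℂ) : E2 → ℂ :=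
  𝓕⁻ (fun ξ : E2 =>
    Complex.exp (Complex.I * ((t / Real.sqrt μ) * m2 (Real.sqrt μ • ξ) : ℝ)) * 𝓕 f ξ)

/-- The Littlewood–Paley projection `P_λ`, `(P_λ f)^(ξ) = β(|ξ|/λ) f̂(ξ)`,
where `β(s) = χ(s) - χ(2s)`. -/
def proj2 (χ : ℝ → ℝ) (lam : ℝ) (f : E2 → ℂ) : E2 → ℂ :=
  𝓕⁻ (fun ξ : E2 => ((χ (‖ξ‖ / lam) - χ (2 * ‖ξ‖ / lam) : ℝ) : ℂ) * 𝓕 f ξ)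


/-! ### van der Corput lemmas -/

lemma vdc1 {a b κ : ℝ} (hab : a ≤ b) {φ φ' φ'' : ℝ → ℝ}
    (h1 : ∀ x ∈ Set.Icc a b, HasDerivAt φ (φ' x) x)
    (h2 : ∀ x ∈ Set.Icc a b, HasDerivAt φ' (φ'' x) x)
    (hc : ContinuousOn φ'' (Set.Icc a b))
    (hneg : ∀ x ∈ Set.Icc a b, φ'' x ≤ 0) (hk : 0 < κ)
    (hφ : ∀ x ∈ Set.Icc a b, κ ≤ |φ' x|) :
    ‖∫ x in a..b, Complex.exp (Complex.I * (φ x : ℝ))‖ ≤ 4 / κ := by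
  have hu : Set.uIcc a b = Set.Icc a b := Set.uIcc_of_le hab
  have hne : ∀ x ∈ Set.Icc a b, φ' x ≠ 0 := fun x hx h => by
    have := hφ x hx
    rw [h, abs_zero] at this
    linarith
  have hcφ : ContinuousOn φ (Set.Icc a b) := fun x hx => (h1 x hx).continuousAt.continuousWithinAt
  have hcφ' : ContinuousOn φ' (Set.Icc a b) :=
    fun x hx => (h2 x hx).continuousAt.continuousWithinAt
  have hcq : ContinuousOn (fun x => -φ'' x / φ' x ^ 2) (Set.Icc a b) :=
    hc.neg.div (hcφ'.pow 2) (fun x hx => pow_ne_zero 2 (hne x hx))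
  have hce : ContinuousOn (fun x => Complex.exp (Complex.I * (φ x : ℝ))) (Set.Icc a b) := by
    apply Complex.continuous_exp.comp_continuousOn
    exact continuousOn_const.mul (Complex.continuous_ofReal.comp_continuousOn hcφ)
  have hq : ∀ x ∈ Set.Icc a b, HasDerivAt (fun x => (φ' x)⁻¹) (-φ'' x / φ' x ^ 2) x :=
    fun x hx => (h2 x hx).inv (hne x hx)
  have hE : ∀ x ∈ Set.Icc a b, HasDerivAt (fun x => Complex.exp (Complex.I * (φ x : ℝ)))
      (Complex.exp (Complex.I * (φ x : ℝ)) * (Complex.I * (φ' x : ℝ))) x := fun x hx =>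
    (((h1 x hx).ofReal_comp).const_mul Complex.I).cexp
  have hF : ∀ x ∈ Set.Icc a b, HasDerivAt
      (fun x => -Complex.I * (Complex.exp (Complex.I * (φ x : ℝ)) * (((φ' x)⁻¹ : ℝ) : ℂ)))
      (Complex.exp (Complex.I * (φ x : ℝ)) +
        -Complex.I * (Complex.exp (Complex.I * (φ x : ℝ)) * ((-φ'' x / φ' x ^ 2 : ℝ) : ℂ))) x := by
    intro x hx
    have := ((hE x hx).mul (hq x hx).ofReal_comp).const_mul (-Complex.I)
    refine this.congr_deriv ?_
    have h0 : ((φ' x : ℝ) : ℂ) ≠ 0 := by exact_mod_cast hne x hx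
    push_cast
    field_simp
    linear_combination (-(φ' x : ℂ) ^ 2) * Complex.I_sq
  have hIntv1 : IntervalIntegrable (fun x => Complex.exp (Complex.I * (φ x : ℝ))) volume a b :=
    ContinuousOn.intervalIntegrable (by rwa [hu])
  have hcF2 : ContinuousOn (fun x => -Complex.I *
      (Complex.exp (Complex.I * (φ x : ℝ)) * ((-φ'' x / φ' x ^ 2 : ℝ) : ℂ))) (Set.Icc a b) :=
    continuousOn_const.mul (hce.mul (Complex.continuous_ofReal.comp_continuousOn hcq))
  have hIntv2 : IntervalIntegrable (fun x => -Complex.I *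
      (Complex.exp (Complex.I * (φ x : ℝ)) * ((-φ'' x / φ' x ^ 2 : ℝ) : ℂ))) volume a b :=
    ContinuousOn.intervalIntegrable (by rwa [hu])
  have hIntvq : IntervalIntegrable (fun x => -φ'' x / φ' x ^ 2) volume a b :=
    ContinuousOn.intervalIntegrable (by rwa [hu])
  have ftc := intervalIntegral.integral_eq_sub_of_hasDerivAt (a := a) (b := b)
    (by rw [hu]; exact hF) (hIntv1.add hIntv2)
  rw [intervalIntegral.integral_add hIntv1 hIntv2] at ftc
  have ftc2 := intervalIntegral.integral_eq_sub_of_hasDerivAt (a := a) (b := b)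
    (by rw [hu]; exact hq) hIntvq
  have hb : ∀ x ∈ Set.Icc a b, |(φ' x)⁻¹| ≤ 1 / κ := by
    intro x hx
    rw [abs_inv, one_div]
    exact inv_anti₀ hk (hφ x hx)
  have hnE : ∀ x, ‖Complex.exp (Complex.I * (φ x : ℝ))‖ = 1 := fun x => by
    rw [mul_comm]; exact Complex.norm_exp_ofReal_mul_I _
  have hn2 : ‖∫ x in a..b, -Complex.I *
      (Complex.exp (Complex.I * (φ x : ℝ)) * ((-φ'' x / φ' x ^ 2 : ℝ) : ℂ))‖ ≤ 2 / κ := by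
    calc _ ≤ ∫ x in a..b, -φ'' x / φ' x ^ 2 := by
          apply intervalIntegral.norm_integral_le_of_norm_le hab _ hIntvq
          refine Filter.Eventually.of_forall fun x hx => ?_
          have hx' : x ∈ Set.Icc a b := Set.Ioc_subset_Icc_self hx
          rw [norm_mul, norm_mul, hnE, norm_neg, Complex.norm_I, Complex.norm_real, one_mul, one_mul,
            Real.norm_of_nonneg]
          exact div_nonneg (by linarith [hneg x hx']) (sq_nonneg _)
      _ = (φ' b)⁻¹ - (φ' a)⁻¹ := ftc2
      _ ≤ 2 / κ := by
          have := hb a ⟨le_rfl, hab⟩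
          have := hb b ⟨hab, le_rfl⟩
          have e : 2 / κ = 1 / κ + 1 / κ := by ring
          rw [e]
          linarith [neg_abs_le ((φ' a)⁻¹), le_abs_self ((φ' b)⁻¹)]
  have hn3 : ∀ x ∈ Set.Icc a b,
      ‖-Complex.I * (Complex.exp (Complex.I * (φ x : ℝ)) * (((φ' x)⁻¹ : ℝ) : ℂ))‖ ≤ 1 / κ := by
    intro x hx
    rw [norm_mul, norm_mul, hnE, norm_neg, Complex.norm_I, Complex.norm_real, one_mul, one_mul]
    exact hb x hx
  rw [eq_sub_of_add_eq ftc]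
  refine (norm_sub_le _ _).trans ?_
  refine (add_le_add (norm_sub_le _ _) hn2).trans ?_
  have e : 4 / κ = 1 / κ + 1 / κ + 2 / κ := by ring
  rw [e]
  have := hn3 a ⟨le_rfl, hab⟩
  have := hn3 b ⟨hab, le_rfl⟩
  linarith

lemma vdc2 {a b κ : ℝ} (hab : a ≤ b) {φ φ' φ'' : ℝ → ℝ}
    (h1 : ∀ x ∈ Set.Icc a b, HasDerivAt φ (φ' x) x)
    (h2 : ∀ x ∈ Set.Icc a b, HasDerivAt φ' (φ'' x) x)
    (hc : ContinuousOn φ'' (Set.Icc a b)) (hk : 0 < κ)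
    (hneg : ∀ x ∈ Set.Icc a b, φ'' x ≤ -κ) :
    ‖∫ x in a..b, Complex.exp (Complex.I * (φ x : ℝ))‖ ≤ 10 / √κ := by
  have hcφ : ContinuousOn φ (Set.Icc a b) := fun x hx => (h1 x hx).continuousAt.continuousWithinAt
  have hcφ' : ContinuousOn φ' (Set.Icc a b) :=
    fun x hx => (h2 x hx).continuousAt.continuousWithinAt
  have hce : ContinuousOn (fun x => Complex.exp (Complex.I * (φ x : ℝ))) (Set.Icc a b) := by
    apply Complex.continuous_exp.comp_continuousOn
    exact continuousOn_const.mul (Complex.continuous_ofReal.comp_continuousOn hcφ)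
  have hnE : ∀ x, ‖Complex.exp (Complex.I * (φ x : ℝ))‖ = 1 := fun x => by
    rw [mul_comm]; exact Complex.norm_exp_ofReal_mul_I _
  -- mean value inequality
  have mv : ∀ x ∈ Set.Icc a b, ∀ y ∈ Set.Icc a b, x ≤ y → φ' y - φ' x ≤ -κ * (y - x) := by
    apply Convex.image_sub_le_mul_sub_of_deriv_le (convex_Icc a b) hcφ'
    · intro x hx
      rw [interior_Icc] at hx
      exact (h2 x (Set.Ioo_subset_Icc_self hx)).differentiableAt.differentiableWithinAt
    · intro x hx
      rw [interior_Icc] at hx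
      rw [(h2 x (Set.Ioo_subset_Icc_self hx)).deriv]
      exact hneg x (Set.Ioo_subset_Icc_self hx)
  obtain ⟨x0, hx0, hl, hr⟩ : ∃ x0 ∈ Set.Icc a b, (∀ x ∈ Set.Icc a b, x < x0 → κ * (x0 - x) ≤ φ' x) ∧
      (∀ x ∈ Set.Icc a b, x0 < x → φ' x ≤ -κ * (x - x0)) := by
    have ha : a ∈ Set.Icc a b := ⟨le_rfl, hab⟩
    have hb : b ∈ Set.Icc a b := ⟨hab, le_rfl⟩
    by_cases hA : 0 ≤ φ' b
    · refine ⟨b, hb, fun x hx hxb => ?_, fun x hx hxb => absurd hx.2 (not_le.2 hxb)⟩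
      have := mv x hx b hb hxb.le
      linarith
    by_cases hB : φ' a ≤ 0
    · refine ⟨a, ha, fun x hx hxb => absurd hx.1 (not_le.2 hxb), fun x hx hxb => ?_⟩
      have := mv a ha x hx hxb.le
      linarith
    obtain ⟨x0, hx0, h0⟩ := intermediate_value_Icc' hab hcφ'
      (show (0 : ℝ) ∈ Set.Icc (φ' b) (φ' a) from ⟨by linarith, by linarith⟩)
    refine ⟨x0, hx0, fun x hx hxb => ?_, fun x hx hxb => ?_⟩
    · have := mv x hx x0 hx0 hxb.le
      linarith
    · have := mv x0 hx0 x hx hxb.le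
      linarith
  have hsk : 0 < √κ := Real.sqrt_pos.2 hk
  have hkk : √κ * √κ = κ := Real.mul_self_sqrt hk.le
  set δ : ℝ := 1 / √κ with hδ
  have hδ0 : 0 < δ := by positivity
  have hκδ : κ * δ = √κ := by
    rw [hδ, mul_one_div, div_eq_iff hsk.ne']
    exact hkk.symm
  set c := max a (x0 - δ) with hcdef
  set d := min b (x0 + δ) with hddef
  have hac : a ≤ c := le_max_left _ _
  have hcx : c ≤ x0 := max_le hx0.1 (by linarith)
  have hxd : x0 ≤ d := le_min hx0.2 (by linarith)
  have hdb : d ≤ b := min_le_left _ _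
  have hc1 : x0 - δ ≤ c := le_max_right _ _
  have hd1 : d ≤ x0 + δ := min_le_right _ _
  have I1 : ‖∫ x in a..c, Complex.exp (Complex.I * (φ x : ℝ))‖ ≤ 4 / √κ := by
    rcases hac.lt_or_eq with h | h
    · have hceq : c = x0 - δ := by
        rcases max_choice a (x0 - δ) with h' | h'
        · exact absurd (hcdef.trans h') (ne_of_gt h)
        · exact h'
      have hs : Set.Icc a c ⊆ Set.Icc a b := Set.Icc_subset_Icc_right (by linarith)
      refine vdc1 hac (fun x hx => h1 x (hs hx)) (fun x hx => h2 x (hs hx)) (hc.mono hs)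
        (fun x hx => by linarith [hneg x (hs hx)]) hsk (fun x hx => ?_)
      have := hl x (hs hx) (by linarith [hx.2])
      refine le_trans ?_ (this.trans (le_abs_self _))
      rw [← hκδ]
      exact mul_le_mul_of_nonneg_left (by linarith [hx.2]) hk.le
    · rw [← h]; simp; positivity
  have I3 : ‖∫ x in d..b, Complex.exp (Complex.I * (φ x : ℝ))‖ ≤ 4 / √κ := by
    rcases hdb.lt_or_eq with h | h
    · have hceq : d = x0 + δ := by
        rcases min_choice b (x0 + δ) with h' | h'
        · exact absurd (hddef.trans h') (ne_of_lt h)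
        · exact h'
      have hs : Set.Icc d b ⊆ Set.Icc a b := Set.Icc_subset_Icc_left (by linarith)
      refine vdc1 hdb (fun x hx => h1 x (hs hx)) (fun x hx => h2 x (hs hx)) (hc.mono hs)
        (fun x hx => by linarith [hneg x (hs hx)]) hsk (fun x hx => ?_)
      have := hr x (hs hx) (by linarith [hx.1])
      refine le_trans ?_ (neg_le_abs _)
      rw [← hκδ]
      have h3 : κ * δ ≤ κ * (x - x0) := mul_le_mul_of_nonneg_left (by linarith [hx.1]) hk.le
      linarith
    · rw [h]; simp; positivity
  have I2 : ‖∫ x in c..d, Complex.exp (Complex.I * (φ x : ℝ))‖ ≤ 2 / √κ := by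
    have := intervalIntegral.norm_integral_le_of_norm_le_const (a := c) (b := d) (C := 1)
      (f := fun x => Complex.exp (Complex.I * (φ x : ℝ))) (fun x _ => (hnE x).le)
    refine this.trans ?_
    rw [one_mul, abs_of_nonneg (by linarith)]
    have e : 2 / √κ = 2 * δ := by rw [hδ]; ring
    rw [e]; linarith
  have hIntv : ∀ u v, a ≤ u → u ≤ v → v ≤ b → IntervalIntegrable
      (fun x => Complex.exp (Complex.I * (φ x : ℝ))) volume u v := by
    intro u v hu huv hv
    apply ContinuousOn.intervalIntegrable
    rw [Set.uIcc_of_le huv]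
    exact hce.mono (Set.Icc_subset_Icc hu hv)
  have i1 := hIntv a c le_rfl hac (by linarith)
  have i2 := hIntv c d hac (by linarith) hdb
  have i3 := hIntv d b (by linarith) hdb le_rfl
  rw [← intervalIntegral.integral_add_adjacent_intervals (i1.trans i2) i3,
    ← intervalIntegral.integral_add_adjacent_intervals i1 i2]
  refine (norm_add_le _ _).trans ?_
  refine (add_le_add (norm_add_le _ _) I3).trans ?_
  have e : 10 / √κ = 4 / √κ + 2 / √κ + 4 / √κ := by ring
  rw [e]
  linarith

lemma vdc_amp {a b M G : ℝ} (hab : a ≤ b) {φ : ℝ → ℝ} (hφ : Continuous φ) {A A' : ℝ → ℂ}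
    (hA : ∀ x ∈ Set.Icc a b, HasDerivAt A (A' x) x) (hA' : ContinuousOn A' (Set.Icc a b))
    (hb : A b = 0) (hM : ∀ x ∈ Set.Icc a b, ‖A' x‖ ≤ M)
    (hG : ∀ x ∈ Set.Icc a b, ‖∫ y in a..x, Complex.exp (Complex.I * (φ y : ℝ))‖ ≤ G) :
    ‖∫ x in a..b, A x * Complex.exp (Complex.I * (φ x : ℝ))‖ ≤ M * G * (b - a) := by
  have hu : Set.uIcc a b = Set.Icc a b := Set.uIcc_of_le hab
  have hce : Continuous (fun x => Complex.exp (Complex.I * (φ x : ℝ))) := by fun_prop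
  have hd : ∀ x ∈ Set.uIcc a b, HasDerivAt
      (fun x => ∫ y in a..x, Complex.exp (Complex.I * (φ y : ℝ)))
      (Complex.exp (Complex.I * (φ x : ℝ))) x := fun x _ => hce.integral_hasStrictDerivAt a x |>.hasDerivAt
  rw [intervalIntegral.integral_mul_deriv_eq_deriv_mul (by rwa [hu]) hd
    (ContinuousOn.intervalIntegrable (by rwa [hu])) (hce.intervalIntegrable _ _)]
  rw [hb]
  simp only [zero_mul, intervalIntegral.integral_same, mul_zero, sub_zero, zero_sub, norm_neg]
  have := intervalIntegral.norm_integral_le_of_norm_le_const (a := a) (b := b) (C := M * G)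
      (f := fun x => A' x * ∫ y in a..x, Complex.exp (Complex.I * (φ y : ℝ))) (fun x hx => ?_)
  · rwa [abs_of_nonneg (by linarith)] at this
  · have hx' : x ∈ Set.Icc a b := by
      rw [Set.uIoc_of_le hab] at hx
      exact Set.Ioc_subset_Icc_self hx
    rw [norm_mul]
    exact mul_le_mul (hM x hx') (hG x hx') (norm_nonneg _) ((norm_nonneg _).trans (hM x hx'))

/-! ### The Bessel function -/

def JB (ρ : ℝ) : ℝ := ∫ θ in (-Real.pi)..Real.pi, Real.cos (ρ * Real.cos θ)
def JB1 (ρ : ℝ) : ℝ := ∫ θ in (-Real.pi)..Real.pi, -(Real.cos θ * Real.sin (ρ * Real.cos θ))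
def JB2 (ρ : ℝ) : ℝ := ∫ θ in (-Real.pi)..Real.pi, -(Real.cos θ ^ 2 * Real.cos (ρ * Real.cos θ))

lemma JB_hasDerivAt (ρ : ℝ) : HasDerivAt JB (JB1 ρ) ρ := by
  refine (intervalIntegral.hasDerivAt_integral_of_dominated_loc_of_deriv_le
    (F := fun ρ θ => Real.cos (ρ * Real.cos θ))
    (F' := fun ρ θ => -(Real.cos θ * Real.sin (ρ * Real.cos θ))) (bound := fun _ => 1)
    (s := Set.univ) Filter.univ_mem ?_ ?_ ?_ ?_ ?_ ?_).2
  · exact Filter.Eventually.of_forall fun x => (by fun_prop : Continuous _).aestronglyMeasurable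
  · exact (by fun_prop : Continuous _).intervalIntegrable _ _
  · exact (by fun_prop : Continuous _).aestronglyMeasurable
  · refine Filter.Eventually.of_forall fun θ _ x _ => ?_
    rw [norm_neg, norm_mul]
    exact mul_le_one₀ (Real.abs_cos_le_one _) (norm_nonneg _) (Real.abs_sin_le_one _)
  · exact continuous_const.intervalIntegrable _ _
  · refine Filter.Eventually.of_forall fun θ _ x _ => ?_
    have := ((hasDerivAt_id x).mul_const (Real.cos θ)).cos
    refine this.congr_deriv ?_
    simp; ring

lemma JB1_hasDerivAt (ρ : ℝ) : HasDerivAt JB1 (JB2 ρ) ρ := by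
  refine (intervalIntegral.hasDerivAt_integral_of_dominated_loc_of_deriv_le
    (F := fun ρ θ => -(Real.cos θ * Real.sin (ρ * Real.cos θ)))
    (F' := fun ρ θ => -(Real.cos θ ^ 2 * Real.cos (ρ * Real.cos θ))) (bound := fun _ => 1)
    (s := Set.univ) Filter.univ_mem ?_ ?_ ?_ ?_ ?_ ?_).2
  · exact Filter.Eventually.of_forall fun x => (by fun_prop : Continuous _).aestronglyMeasurable
  · exact (by fun_prop : Continuous _).intervalIntegrable _ _
  · exact (by fun_prop : Continuous _).aestronglyMeasurable
  · refine Filter.Eventually.of_forall fun θ _ x _ => ?_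
    rw [norm_neg, norm_mul, norm_pow]
    exact mul_le_one₀ (pow_le_one₀ (norm_nonneg _) (Real.abs_cos_le_one _)) (norm_nonneg _)
      (Real.abs_cos_le_one _)
  · exact continuous_const.intervalIntegrable _ _
  · refine Filter.Eventually.of_forall fun θ _ x _ => ?_
    have := ((((hasDerivAt_id x).mul_const (Real.cos θ)).sin).const_mul (Real.cos θ)).neg
    refine this.congr_deriv ?_
    simp; ring

lemma JB_continuous : Continuous JB :=
  continuous_iff_continuousAt.2 fun x => (JB_hasDerivAt x).continuousAt

lemma JB1_continuous : Continuous JB1 :=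
  continuous_iff_continuousAt.2 fun x => (JB1_hasDerivAt x).continuousAt

lemma JB2_continuous : Continuous JB2 := by
  unfold JB2
  apply intervalIntegral.continuous_parametric_intervalIntegral_of_continuous'
  fun_prop

lemma JB_ode (ρ : ℝ) : ρ * (JB ρ + JB2 ρ) = - JB1 ρ := by
  have e1 : JB ρ + JB2 ρ = ∫ θ in (-Real.pi)..Real.pi,
      (Real.cos (ρ * Real.cos θ) + -(Real.cos θ ^ 2 * Real.cos (ρ * Real.cos θ))) := by
    rw [intervalIntegral.integral_add]
    · rfl
    · exact (by fun_prop : Continuous _).intervalIntegrable _ _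
    · exact (by fun_prop : Continuous _).intervalIntegrable _ _
  have hi1 : IntervalIntegrable (fun θ => ρ * (Real.cos (ρ * Real.cos θ) +
      -(Real.cos θ ^ 2 * Real.cos (ρ * Real.cos θ)))) volume (-Real.pi) Real.pi :=
    (by fun_prop : Continuous _).intervalIntegrable _ _
  have hi2 : IntervalIntegrable (fun θ => -(Real.cos θ * Real.sin (ρ * Real.cos θ)))
      volume (-Real.pi) Real.pi :=
    (by fun_prop : Continuous _).intervalIntegrable _ _
  have key := intervalIntegral.integral_eq_sub_of_hasDerivAt (a := -Real.pi) (b := Real.pi)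
    (f := fun θ => -(Real.sin θ * Real.sin (ρ * Real.cos θ)))
    (f' := fun θ => ρ * (Real.cos (ρ * Real.cos θ) +
      -(Real.cos θ ^ 2 * Real.cos (ρ * Real.cos θ))) + -(Real.cos θ * Real.sin (ρ * Real.cos θ)))
    (fun θ _ => by
      have := ((Real.hasDerivAt_sin θ).mul
        (((Real.hasDerivAt_cos θ).const_mul ρ).sin)).neg
      refine this.congr_deriv ?_
      have := Real.sin_sq θ
      linear_combination (ρ * Real.cos (ρ * Real.cos θ)) * this) (hi1.add hi2)
  rw [intervalIntegral.integral_add hi1 hi2, intervalIntegral.integral_const_mul, ← e1] at key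
  simp only [Real.sin_pi, Real.sin_neg] at key
  have : ρ * (JB ρ + JB2 ρ) + JB1 ρ = 0 := by
    rw [JB1, key]; simp
  linarith

lemma JB_abs_le (ρ : ℝ) : |JB ρ| ≤ 2 * Real.pi := by
  have := intervalIntegral.norm_integral_le_of_norm_le_const (a := -Real.pi) (b := Real.pi) (C := 1)
      (f := fun θ => Real.cos (ρ * Real.cos θ)) (fun x _ => Real.abs_cos_le_one _)
  rw [abs_of_nonneg (by linarith [Real.pi_pos])] at this
  calc _ ≤ _ := this
    _ = _ := by ring

lemma JB1_abs_le (ρ : ℝ) : |JB1 ρ| ≤ 2 * Real.pi := by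
  have := intervalIntegral.norm_integral_le_of_norm_le_const (a := -Real.pi) (b := Real.pi) (C := 1)
      (f := fun θ => -(Real.cos θ * Real.sin (ρ * Real.cos θ))) (fun x _ => by
        rw [norm_neg, norm_mul]
        exact mul_le_one₀ (Real.abs_cos_le_one _) (norm_nonneg _) (Real.abs_sin_le_one _))
  rw [abs_of_nonneg (by linarith [Real.pi_pos])] at this
  calc _ ≤ _ := this
    _ = _ := by ring

def EB (ρ : ℝ) : ℝ := ρ * (JB ρ ^ 2 + JB1 ρ ^ 2) + JB ρ * JB1 ρ + JB ρ ^ 2 / (2 * ρ)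

lemma EB_hasDerivAt {ρ : ℝ} (h : 0 < ρ) : HasDerivAt EB (-(JB ρ ^ 2 / (2 * ρ ^ 2))) ρ := by
  have hJ := JB_hasDerivAt ρ
  have hJ1 := JB1_hasDerivAt ρ
  have h2 : HasDerivAt (fun x : ℝ => 2 * x) 2 ρ := by
    simpa using (hasDerivAt_id ρ).const_mul (2 : ℝ)
  have := (((hasDerivAt_id ρ).mul ((hJ.pow 2).add (hJ1.pow 2))).add (hJ.mul hJ1)).add
    ((hJ.pow 2).div h2 (by positivity))
  refine this.congr_deriv ?_
  have ode : JB2 ρ = - JB1 ρ / ρ - JB ρ := by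
    have := JB_ode ρ
    field_simp
    linarith
  simp
  rw [ode]
  field_simp
  ring

lemma JB_decay : ∃ D : ℝ, 0 < D ∧ ∀ ρ : ℝ, 0 < ρ → |JB ρ| + |JB1 ρ| ≤ D / √ρ := by
  have hanti : AntitoneOn EB (Set.Ioi 0) := by
    apply antitoneOn_of_deriv_nonpos (convex_Ioi 0)
    · exact fun x hx => (EB_hasDerivAt hx).continuousAt.continuousWithinAt
    · rw [interior_Ioi]
      exact fun x hx => (EB_hasDerivAt hx).differentiableAt.differentiableWithinAt
    · rw [interior_Ioi]
      intro x hx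
      rw [(EB_hasDerivAt hx).deriv]
      have : 0 ≤ JB x ^ 2 / (2 * x ^ 2) := by positivity
      linarith
  have hE1 : ∀ ρ, 1 ≤ ρ → ρ * (JB ρ ^ 2 + JB1 ρ ^ 2) ≤ 2 * EB 1 := by
    intro ρ hρ
    have h0 : 0 < ρ := by linarith
    have := hanti (Set.mem_Ioi.2 one_pos) (Set.mem_Ioi.2 h0) hρ
    have h3 : 0 ≤ JB ρ ^ 2 / (2 * ρ) := by positivity
    unfold EB at this ⊢
    nlinarith [sq_nonneg (JB ρ + JB1 ρ), mul_nonneg (sub_nonneg.2 hρ)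
      (add_nonneg (sq_nonneg (JB ρ)) (sq_nonneg (JB1 ρ)))]
  have hE0 : 0 ≤ EB 1 := by
    have := hE1 1 le_rfl
    nlinarith [sq_nonneg (JB 1), sq_nonneg (JB1 1)]
  refine ⟨4 * Real.pi + √(4 * EB 1), by positivity, fun ρ hρ => ?_⟩
  have hs : 0 < √ρ := Real.sqrt_pos.2 hρ
  rw [le_div_iff₀ hs]
  rcases le_total ρ 1 with h | h
  · have h1 : √ρ ≤ 1 := Real.sqrt_le_one.2 h
    have := JB_abs_le ρ
    have := JB1_abs_le ρ
    have h4 : 0 ≤ √(4 * EB 1) := Real.sqrt_nonneg _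
    nlinarith [abs_nonneg (JB ρ), abs_nonneg (JB1 ρ)]
  · have : (|JB ρ| + |JB1 ρ|) * √ρ ≤ √(4 * EB 1) := by
      apply Real.le_sqrt_of_sq_le
      rw [mul_pow, Real.sq_sqrt hρ.le]
      have := hE1 ρ h
      have h5 : (|JB ρ| + |JB1 ρ|) ^ 2 ≤ 2 * (JB ρ ^ 2 + JB1 ρ ^ 2) := by
        rw [← sq_abs (JB ρ), ← sq_abs (JB1 ρ)]
        nlinarith [sq_nonneg (|JB ρ| - |JB1 ρ|)]
      nlinarith
    linarith [Real.pi_pos]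

/-! ### The symbol -/

def MM (r : ℝ) : ℝ := √(r * Real.tanh r)
def SS (r : ℝ) : ℝ := 1 - Real.tanh r ^ 2
def MM1 (r : ℝ) : ℝ := (Real.tanh r + r * SS r) / (2 * √(r * Real.tanh r))
def MM2 (r : ℝ) : ℝ :=
  -(((Real.tanh r - r * SS r) ^ 2 + 4 * r ^ 2 * Real.tanh r ^ 2 * SS r) /
    (4 * √(r * Real.tanh r) ^ 3))

lemma tanh_hasDerivAt (r : ℝ) : HasDerivAt Real.tanh (SS r) r := by
  have e : Real.tanh = fun x => Real.sinh x / Real.cosh x := by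
    funext x; exact Real.tanh_eq_sinh_div_cosh x
  have hc : Real.cosh r ≠ 0 := (Real.cosh_pos r).ne'
  have := (Real.hasDerivAt_sinh r).div (Real.hasDerivAt_cosh r) hc
  rw [e]
  refine this.congr_deriv ?_
  rw [SS, Real.tanh_eq_sinh_div_cosh]
  field_simp

lemma tanh_cont : Continuous Real.tanh :=
  continuous_iff_continuousAt.2 fun x => (tanh_hasDerivAt x).continuousAt

lemma SS_cont : Continuous SS := continuous_const.sub (tanh_cont.pow 2)

lemma MM_cont : Continuous MM := Real.continuous_sqrt.comp (continuous_id.mul tanh_cont)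

lemma tanh_lower {r : ℝ} (hr : 0 < r) : r / (1 + r) ≤ Real.tanh r := by
  rw [Real.tanh_eq_sinh_div_cosh, div_le_div_iff₀ (by linarith) (Real.cosh_pos r),
    Real.sinh_eq, Real.cosh_eq]
  have h1 : 1 + 2 * r ≤ Real.exp (2 * r) := by linarith [Real.add_one_le_exp (2 * r)]
  have h2 : Real.exp (2 * r) * Real.exp (-r) = Real.exp r := by
    rw [← Real.exp_add]; congr 1; ring
  have h3 := mul_le_mul_of_nonneg_right h1 (Real.exp_pos (-r)).le
  rw [h2] at h3
  linarith

lemma tanh_p {r : ℝ} (hr : 0 < r) : 0 < Real.tanh r :=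
  lt_of_lt_of_le (by positivity) (tanh_lower hr)

lemma SS_pos (r : ℝ) : 0 < SS r := by
  unfold SS
  nlinarith [Real.tanh_lt_one r, Real.neg_one_lt_tanh r]

lemma tanh_le_self {r : ℝ} (hr : 0 < r) : Real.tanh r ≤ r := by
  have hm : MonotoneOn (fun x => x - Real.tanh x) (Set.univ) := by
    apply monotoneOn_of_deriv_nonneg convex_univ
    · exact (continuous_id.sub tanh_cont).continuousOn
    · exact fun x _ => ((hasDerivAt_id x).sub (tanh_hasDerivAt x)).differentiableAt.differentiableWithinAt
    · intro x _
      rw [((hasDerivAt_id' x).fun_sub (tanh_hasDerivAt x)).deriv, SS]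
      nlinarith [sq_nonneg (Real.tanh x)]
  have := hm (Set.mem_univ 0) (Set.mem_univ r) hr.le
  simp at this
  exact this

lemma tanh_upper {r : ℝ} (hr : 0 < r) : Real.tanh r ≤ 2 * r / (1 + r) := by
  rw [le_div_iff₀ (by linarith)]
  nlinarith [tanh_le_self hr, Real.tanh_lt_one r, tanh_p hr]

lemma MM_hasDerivAt {r : ℝ} (hr : 0 < r) : HasDerivAt MM (MM1 r) r := by
  have := ((hasDerivAt_id' r).fun_mul (tanh_hasDerivAt r)).sqrt (mul_pos hr (tanh_p hr)).ne'
  refine this.congr_deriv ?_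
  rw [MM1, one_mul]

lemma MM1_hasDerivAt {r : ℝ} (hr : 0 < r) : HasDerivAt MM1 (MM2 r) r := by
  have hg : 0 < r * Real.tanh r := mul_pos hr (tanh_p hr)
  have hs := ((hasDerivAt_id' r).fun_mul (tanh_hasDerivAt r)).sqrt hg.ne'
  have hS : HasDerivAt SS (-(2 * Real.tanh r * SS r)) r := by
    have := ((tanh_hasDerivAt r).fun_pow 2).const_sub 1
    refine this.congr_deriv ?_
    simp
  have hw : 0 < √(r * Real.tanh r) := Real.sqrt_pos.2 hg
  have := ((tanh_hasDerivAt r).fun_add ((hasDerivAt_id' r).fun_mul hS)).fun_div (hs.const_mul 2)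
    (by positivity)
  refine this.congr_deriv ?_
  rw [MM2]
  have hw2 : √(r * Real.tanh r) ^ 2 = r * Real.tanh r := Real.sq_sqrt hg.le
  set w := √(r * Real.tanh r)
  set T := Real.tanh r
  set S := SS r
  field_simp
  rw [hw2]
  ring

lemma MM2_contOn : ContinuousOn MM2 (Set.Ioi 0) := by
  have h1 := tanh_cont
  have h2 := SS_cont
  unfold MM2
  apply ContinuousOn.neg
  apply ContinuousOn.div
  · fun_prop
  · fun_prop
  · intro r hr
    have : 0 < √(r * Real.tanh r) := Real.sqrt_pos.2 (mul_pos hr (tanh_p hr))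
    positivity

lemma MM1_lower {r : ℝ} (hr : 0 < r) : 1 / (2 * √(1 + r)) ≤ MM1 r := by
  have hT := tanh_p hr
  have hg : 0 < r * Real.tanh r := mul_pos hr hT
  have hw : 0 < √(r * Real.tanh r) := Real.sqrt_pos.2 hg
  have h1 : √(r * Real.tanh r) ≤ Real.tanh r * √(1 + r) := by
    rw [Real.sqrt_le_left (by positivity), mul_pow, Real.sq_sqrt (by linarith)]
    have := tanh_lower hr
    rw [div_le_iff₀ (by linarith)] at this
    nlinarith
  rw [MM1, div_le_div_iff₀ (by positivity) (by positivity)]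
  have : 0 ≤ r * SS r := mul_nonneg hr.le (SS_pos r).le
  nlinarith [Real.sqrt_nonneg (1 + r), mul_nonneg this (Real.sqrt_nonneg (1 + r))]

lemma MM2_upper {r : ℝ} (hr : 0 < r) : MM2 r ≤ -(1 / 128 * (r / √(1 + r) ^ 5)) := by
  have hT := tanh_p hr
  have hS := SS_pos r
  have hg : 0 < r * Real.tanh r := mul_pos hr hT
  have hw : 0 < √(r * Real.tanh r) := Real.sqrt_pos.2 hg
  have hlow := tanh_lower hr
  have hup := tanh_upper hr
  have h1r : 0 < 1 + r := by linarith
  set q := r / (1 + r) with hq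
  have hq0 : 0 < q := by positivity
  have hq1 : q ≤ 1 := by rw [hq, div_le_one h1r]; linarith
  have hN : q ^ 4 / 4 ≤ (Real.tanh r - r * SS r) ^ 2 + 4 * r ^ 2 * Real.tanh r ^ 2 * SS r := by
    rcases le_total (SS r) (1 / (2 * (1 + r))) with h | h
    · have h3 : r * SS r ≤ q / 2 := by
        calc r * SS r ≤ r * (1 / (2 * (1 + r))) := mul_le_mul_of_nonneg_left h hr.le
          _ = q / 2 := by rw [hq]; field_simp
      have h4 : (q / 2) ^ 2 ≤ (Real.tanh r - r * SS r) ^ 2 :=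
        pow_le_pow_left₀ (by positivity) (by linarith) 2
      have h5 : 0 ≤ 4 * r ^ 2 * Real.tanh r ^ 2 * SS r := by positivity
      have h6 : q ^ 4 ≤ q ^ 2 := pow_le_pow_of_le_one hq0.le hq1 (by norm_num)
      linarith
    · have h3 : q ^ 2 ≤ Real.tanh r ^ 2 := pow_le_pow_left₀ hq0.le hlow 2
      have h4 : q ^ 2 ≤ r ^ 2 * (1 / (1 + r)) := by
        rw [hq, div_pow, mul_one_div]
        apply div_le_div_of_nonneg_left (by positivity) h1r
        nlinarith
      have h5 : r ^ 2 * (1 / (1 + r)) ≤ 2 * r ^ 2 * SS r := by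
        have : (1 : ℝ) / (1 + r) ≤ 2 * SS r := by
          have e : (1 : ℝ) / (2 * (1 + r)) = 1 / (1 + r) / 2 := by field_simp
          rw [e] at h; linarith
        nlinarith [sq_nonneg r]
      have h6 : q ^ 2 * q ^ 2 ≤ (2 * r ^ 2 * SS r) * Real.tanh r ^ 2 :=
        mul_le_mul (h4.trans h5) h3 (by positivity) (by positivity)
      nlinarith [sq_nonneg (Real.tanh r - r * SS r), sq_nonneg (q ^ 2)]
  have hwle : √(r * Real.tanh r) ≤ 2 * (r / √(1 + r)) := by
    rw [Real.sqrt_le_left (by positivity), mul_pow, div_pow, Real.sq_sqrt h1r.le]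
    calc r * Real.tanh r ≤ r * (2 * r / (1 + r)) := mul_le_mul_of_nonneg_left hup hr.le
      _ ≤ 2 ^ 2 * (r ^ 2 / (1 + r)) := by
        rw [show r * (2 * r / (1 + r)) = 2 * (r ^ 2 / (1 + r)) by ring]
        have : 0 ≤ r ^ 2 / (1 + r) := by positivity
        linarith
  have hw3 : √(r * Real.tanh r) ^ 3 ≤ (2 * (r / √(1 + r))) ^ 3 :=
    pow_le_pow_left₀ hw.le hwle 3
  rw [MM2, neg_le_neg_iff]
  rw [le_div_iff₀ (by positivity)]
  refine le_trans ?_ hN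
  refine (mul_le_mul_of_nonneg_left (mul_le_mul_of_nonneg_left hw3 (by norm_num : (0 : ℝ) ≤ 4))
    (by positivity)).trans ?_
  have hv : 0 < √(1 + r) := Real.sqrt_pos.2 h1r
  have hv2 : √(1 + r) ^ 2 = 1 + r := Real.sq_sqrt h1r.le
  have hq' : q = r / √(1 + r) ^ 2 := by rw [hv2]
  rw [hq']
  set v := √(1 + r)
  apply le_of_eq
  field_simp
  norm_num

/-! ### The radial oscillatory integral -/

def aB (σ ρ : ℝ) : ℂ := Complex.exp (-(Complex.I * σ * ρ)) * ((JB ρ : ℂ) - Complex.I * σ * JB1 ρ) / 2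

def aB1 (σ ρ : ℝ) : ℂ := Complex.exp (-(Complex.I * σ * ρ)) * (-(Complex.I * σ) * (JB ρ + JB2 ρ)) / 2

lemma norm_expB (σ ρ : ℝ) : ‖Complex.exp (-(Complex.I * σ * ρ))‖ = 1 := by
  have : -(Complex.I * σ * ρ) = ((-(σ * ρ) : ℝ) : ℂ) * Complex.I := by push_cast; ring
  rw [this]; exact Complex.norm_exp_ofReal_mul_I _

lemma aB_hasDerivAt {σ : ℝ} (hσ : σ ^ 2 = 1) (ρ : ℝ) : HasDerivAt (aB σ) (aB1 σ ρ) ρ := by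
  have h1 : HasDerivAt (fun x : ℝ => Complex.exp (-(Complex.I * σ * x)))
      (Complex.exp (-(Complex.I * σ * ρ)) * (-(Complex.I * σ))) ρ := by
    have := (((hasDerivAt_id' ρ).ofReal_comp).const_mul (Complex.I * σ)).fun_neg.cexp
    refine this.congr_deriv ?_
    simp
  have h2 := (JB_hasDerivAt ρ).ofReal_comp.fun_sub
    ((JB1_hasDerivAt ρ).ofReal_comp.const_mul (Complex.I * σ))
  have := (h1.fun_mul h2).div_const 2
  refine this.congr_deriv ?_
  have hs : (σ : ℂ) ^ 2 = 1 := by exact_mod_cast hσ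
  rw [aB1]
  linear_combination (Complex.exp (-(Complex.I * σ * ρ)) * JB1 ρ / 2) *
    ((σ : ℂ) ^ 2 * Complex.I_sq - hs)

lemma aB_continuous (σ : ℝ) : Continuous (aB σ) := by
  have := JB_continuous
  have := JB1_continuous
  unfold aB; fun_prop

lemma aB1_continuous (σ : ℝ) : Continuous (aB1 σ) := by
  have := JB_continuous
  have := JB2_continuous
  unfold aB1; fun_prop

lemma aB_sum (ρ : ℝ) : (JB ρ : ℂ) = aB 1 ρ * Complex.exp (Complex.I * ρ) +
    aB (-1) ρ * Complex.exp (-(Complex.I * ρ)) := by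
  have e : Complex.exp (-(Complex.I * ρ)) * Complex.exp (Complex.I * ρ) = 1 := by
    rw [← Complex.exp_add]; simp
  unfold aB
  simp only [Complex.ofReal_one, Complex.ofReal_neg, mul_one, mul_neg, neg_mul, neg_neg]
  linear_combination (-(JB ρ : ℂ)) * e

lemma aB_norm {σ : ℝ} (hσ : |σ| = 1) (ρ : ℝ) : ‖aB σ ρ‖ ≤ (|JB ρ| + |JB1 ρ|) / 2 := by
  rw [aB, norm_div, norm_mul, norm_expB, one_mul]
  simp only [Complex.norm_ofNat]
  gcongr
  refine (norm_sub_le _ _).trans ?_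
  simp [hσ]

lemma aB1_norm {σ : ℝ} (hσ : |σ| = 1) (ρ : ℝ) : |ρ| * ‖aB1 σ ρ‖ = |JB1 ρ| / 2 := by
  rw [aB1, norm_div, norm_mul, norm_expB, one_mul]
  have h : ‖(-(Complex.I * σ) * (JB ρ + JB2 ρ) : ℂ)‖ = |JB ρ + JB2 ρ| := by
    rw [norm_mul, ← Complex.ofReal_add, Complex.norm_real]
    simp [hσ]
  rw [h]
  simp only [Complex.norm_ofNat]
  rw [← mul_div_assoc, ← abs_mul, JB_ode, abs_neg]

lemma amp_bound {σ : ℝ} (hσ : |σ| = 1) {b b' : ℝ → ℝ} (hb : ∀ x, HasDerivAt b (b' x) x)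
    {B : ℝ} (hB : ∀ x ∈ Set.Icc (1 / 2 : ℝ) 2, |b x| ≤ B ∧ |b' x| ≤ B)
    {Λ R : ℝ} (hΛ : 0 < Λ) (hR : 0 ≤ R) {r : ℝ} (hr : r ∈ Set.Icc (Λ / 2) (2 * Λ)) :
    ∃ A', A' = aB1 σ (r * R) * (R : ℂ) * ((r * b (r / Λ) : ℝ) : ℂ) +
        aB σ (r * R) * ((b (r / Λ) + r * (b' (r / Λ) / Λ) : ℝ) : ℂ) ∧
    HasDerivAt (fun r : ℝ => aB σ (r * R) * ((r * b (r / Λ) : ℝ) : ℂ)) A' r ∧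
    ‖A'‖ ≤ 2 * B * (|JB (r * R)| + |JB1 (r * R)|) := by
  have hσ2 : σ ^ 2 = 1 := by rw [← sq_abs, hσ]; norm_num
  refine ⟨_, rfl, ?_, ?_⟩
  · have h1 : HasDerivAt (fun r : ℝ => aB σ (r * R)) (aB1 σ (r * R) * (R : ℂ)) r := by
      have hin : HasDerivAt (fun r : ℝ => r * R) R r := by
        simpa using (hasDerivAt_id' r).mul_const R
      have := HasDerivAt.scomp r (aB_hasDerivAt hσ2 (r * R)) hin
      refine this.congr_deriv ?_
      rw [Complex.real_smul, mul_comm]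
    have h2 : HasDerivAt (fun r : ℝ => b (r / Λ)) (b' (r / Λ) / Λ) r := by
      have hin : HasDerivAt (fun r : ℝ => r / Λ) (1 / Λ) r := (hasDerivAt_id' r).div_const Λ
      have := (hb (r / Λ)).comp r hin
      refine this.congr_deriv ?_
      ring
    have h3 := ((hasDerivAt_id' r).fun_mul h2).ofReal_comp
    refine (h1.fun_mul h3).congr_deriv ?_
    rw [one_mul]
  · have hr0 : 0 < r := by linarith [hr.1]
    have hmem : r / Λ ∈ Set.Icc (1 / 2 : ℝ) 2 := by
      constructor
      · rw [le_div_iff₀ hΛ]; linarith [hr.1]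
      · rw [div_le_iff₀ hΛ]; linarith [hr.2]
    obtain ⟨hB1, hB2⟩ := hB _ hmem
    have hB0 : 0 ≤ B := (abs_nonneg _).trans hB1
    have n1 := aB_norm hσ (r * R)
    have n2 := aB1_norm hσ (r * R)
    rw [abs_of_nonneg (by positivity)] at n2
    set J := |JB (r * R)|
    set J1 := |JB1 (r * R)|
    have hJ : 0 ≤ J := abs_nonneg _
    have hJ1 : 0 ≤ J1 := abs_nonneg _
    have t1 : ‖aB1 σ (r * R) * (R : ℂ) * ((r * b (r / Λ) : ℝ) : ℂ)‖ ≤ J1 / 2 * B := by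
      rw [norm_mul, norm_mul, Complex.norm_real, Complex.norm_real, Real.norm_eq_abs,
        Real.norm_eq_abs, abs_mul, abs_of_nonneg hR, abs_of_pos hr0, ← n2]
      calc _ = r * R * ‖aB1 σ (r * R)‖ * |b (r / Λ)| := by ring
        _ ≤ _ := by gcongr
    have t2 : ‖aB σ (r * R) * ((b (r / Λ) + r * (b' (r / Λ) / Λ) : ℝ) : ℂ)‖
        ≤ (J + J1) / 2 * (3 * B) := by
      rw [norm_mul, Complex.norm_real, Real.norm_eq_abs]
      apply mul_le_mul n1 _ (abs_nonneg _) (by positivity)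
      refine (abs_add_le _ _).trans ?_
      have : |r * (b' (r / Λ) / Λ)| ≤ 2 * B := by
        rw [show r * (b' (r / Λ) / Λ) = (r / Λ) * b' (r / Λ) by ring, abs_mul,
          abs_of_pos (by positivity)]
        exact mul_le_mul hmem.2 hB2 (abs_nonneg _) (by norm_num)
      linarith
    refine (norm_add_le _ _).trans ((add_le_add t1 t2).trans ?_)
    nlinarith [mul_nonneg hB0 hJ, mul_nonneg hB0 hJ1]

lemma radial_one {σ : ℝ} (hσ : |σ| = 1) {b b' : ℝ → ℝ} (hb : ∀ x, HasDerivAt b (b' x) x)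
    (hb'c : Continuous b') (hb2 : b 2 = 0)
    {B D : ℝ} (hB : ∀ x ∈ Set.Icc (1 / 2 : ℝ) 2, |b x| ≤ B ∧ |b' x| ≤ B)
    (hD : ∀ ρ : ℝ, 0 < ρ → |JB ρ| + |JB1 ρ| ≤ D / √ρ) (hD0 : 0 < D)
    {Λ R s : ℝ} (hΛ : 0 < Λ) (hR : 0 ≤ R) (hs : 0 < s) :
    ‖∫ r in (Λ / 2)..(2 * Λ), (aB σ (r * R) * ((r * b (r / Λ) : ℝ) : ℂ)) *
      Complex.exp (Complex.I * (s * MM r + σ * (r * R) : ℝ))‖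
      ≤ (384 * Real.pi * B + 15360 * B * D) / s * √(1 + Λ) ^ 3 := by
  have hab : Λ / 2 ≤ 2 * Λ := by linarith
  have hB0 : 0 ≤ B := (abs_nonneg _).trans (hB 1 (by norm_num)).1
  have hv : 0 < √(1 + Λ) := by positivity
  have hv2 : √(1 + Λ) ^ 2 = 1 + Λ := Real.sq_sqrt (by linarith)
  set v := √(1 + Λ) with hvdef
  have hpos : ∀ r ∈ Set.Icc (Λ / 2) (2 * Λ), 0 < r := fun r hr => by linarith [hr.1]
  have hsq : ∀ r ∈ Set.Icc (Λ / 2) (2 * Λ), √(1 + r) ≤ 2 * v := fun r hr => by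
    rw [Real.sqrt_le_left (by positivity), mul_pow, hv2]
    linarith [hr.2]
  have hM1 : ∀ r ∈ Set.Icc (Λ / 2) (2 * Λ), 1 / (4 * v) ≤ MM1 r := fun r hr => by
    refine le_trans ?_ (MM1_lower (hpos r hr))
    have : 0 < √(1 + r) := Real.sqrt_pos.2 (by linarith [hpos r hr])
    apply one_div_le_one_div_of_le (by positivity)
    linarith [hsq r hr]
  have hM2 : ∀ r ∈ Set.Icc (Λ / 2) (2 * Λ), MM2 r ≤ -(Λ / (8192 * v ^ 5)) := fun r hr => by
    refine (MM2_upper (hpos r hr)).trans (neg_le_neg ?_)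
    have h0 : 0 < √(1 + r) := Real.sqrt_pos.2 (by linarith [hpos r hr])
    have h5 : √(1 + r) ^ 5 ≤ (2 * v) ^ 5 := pow_le_pow_left₀ h0.le (hsq r hr) 5
    calc Λ / (8192 * v ^ 5) = 1 / 128 * ((Λ / 2) / (2 * v) ^ 5) := by field_simp; norm_num
      _ ≤ 1 / 128 * (r / √(1 + r) ^ 5) := by
        have : (Λ / 2) / (2 * v) ^ 5 ≤ r / √(1 + r) ^ 5 :=
          div_le_div₀ (hpos r hr).le hr.1 (by positivity) h5
        linarith
  have hφ1 : ∀ r ∈ Set.Icc (Λ / 2) (2 * Λ), HasDerivAt (fun r => s * MM r + σ * (r * R))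
      (s * MM1 r + σ * R) r := fun r hr => by
    have h2 : HasDerivAt (fun r : ℝ => r * R) R r := by
        simpa using (hasDerivAt_id' r).mul_const R
    exact ((MM_hasDerivAt (hpos r hr)).const_mul s).fun_add (h2.const_mul σ)
  have hφ2 : ∀ r ∈ Set.Icc (Λ / 2) (2 * Λ), HasDerivAt (fun r => s * MM1 r + σ * R)
      (s * MM2 r) r := fun r hr =>
    ((MM1_hasDerivAt (hpos r hr)).const_mul s).add_const _
  have hφc : ContinuousOn (fun r => s * MM2 r) (Set.Icc (Λ / 2) (2 * Λ)) :=
    continuousOn_const.mul (MM2_contOn.mono fun r hr => hpos r hr)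
  have hcont : Continuous (fun r => s * MM r + σ * (r * R)) := by
    have := MM_cont
    fun_prop
  have hbc : Continuous b := continuous_iff_continuousAt.2 fun x => (hb x).continuousAt
  have hA'c : ContinuousOn (fun r : ℝ => aB1 σ (r * R) * (R : ℂ) * ((r * b (r / Λ) : ℝ) : ℂ) +
        aB σ (r * R) * ((b (r / Λ) + r * (b' (r / Λ) / Λ) : ℝ) : ℂ))
        (Set.Icc (Λ / 2) (2 * Λ)) := by
    have h1 := aB_continuous σ
    have h2 := aB1_continuous σ
    apply Continuous.continuousOn
    fun_prop
  have hAb : aB σ ((2 * Λ) * R) * ((2 * Λ * b (2 * Λ / Λ) : ℝ) : ℂ) = 0 := by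
    rw [mul_div_assoc, div_self hΛ.ne', mul_one, hb2]; simp
  have hAd : ∀ r ∈ Set.Icc (Λ / 2) (2 * Λ), HasDerivAt
      (fun r : ℝ => aB σ (r * R) * ((r * b (r / Λ) : ℝ) : ℂ))
      (aB1 σ (r * R) * (R : ℂ) * ((r * b (r / Λ) : ℝ) : ℂ) +
        aB σ (r * R) * ((b (r / Λ) + r * (b' (r / Λ) / Λ) : ℝ) : ℂ)) r := fun r hr => by
    obtain ⟨A', rfl, h, -⟩ := amp_bound hσ hb hB hΛ hR hr
    exact h
  have hAn : ∀ r ∈ Set.Icc (Λ / 2) (2 * Λ),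
      ‖aB1 σ (r * R) * (R : ℂ) * ((r * b (r / Λ) : ℝ) : ℂ) +
        aB σ (r * R) * ((b (r / Λ) + r * (b' (r / Λ) / Λ) : ℝ) : ℂ)‖ ≤
        2 * B * (|JB (r * R)| + |JB1 (r * R)|) := fun r hr => by
    obtain ⟨A', rfl, -, h⟩ := amp_bound hσ hb hB hΛ hR hr
    exact h
  rcases le_or_gt R (s / (8 * v)) with hcase | hcase
  · -- small R
    have hG : ∀ x ∈ Set.Icc (Λ / 2) (2 * Λ), ‖∫ y in (Λ / 2)..x,
        Complex.exp (Complex.I * (s * MM y + σ * (y * R) : ℝ))‖ ≤ 4 / (s / (8 * v)) := by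
      intro x hx
      have hsub : Set.Icc (Λ / 2) x ⊆ Set.Icc (Λ / 2) (2 * Λ) := Set.Icc_subset_Icc_right hx.2
      refine vdc1 hx.1 (fun r hr => hφ1 r (hsub hr)) (fun r hr => hφ2 r (hsub hr))
        (hφc.mono hsub) (fun r hr => ?_) (by positivity) (fun r hr => ?_)
      · have h1 := hM2 r (hsub hr)
        have : 0 ≤ Λ / (8192 * v ^ 5) := by positivity
        nlinarith
      · refine le_trans ?_ (le_abs_self _)
        have h1 := mul_le_mul_of_nonneg_left (hM1 r (hsub hr)) hs.le
        have h2 : -R ≤ σ * R := by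
          have : -1 ≤ σ := by rw [← hσ]; exact neg_abs_le σ
          nlinarith
        have e : s * (1 / (4 * v)) = s / (8 * v) + s / (8 * v) := by field_simp; norm_num
        linarith
    have hM : ∀ r ∈ Set.Icc (Λ / 2) (2 * Λ),
        ‖aB1 σ (r * R) * (R : ℂ) * ((r * b (r / Λ) : ℝ) : ℂ) +
        aB σ (r * R) * ((b (r / Λ) + r * (b' (r / Λ) / Λ) : ℝ) : ℂ)‖ ≤
        2 * B * (4 * Real.pi) := fun r hr => by
      refine (hAn r hr).trans (mul_le_mul_of_nonneg_left ?_ (by positivity))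
      linarith [JB_abs_le (r * R), JB1_abs_le (r * R)]
    refine (vdc_amp hab hcont hAd hA'c hAb hM hG).trans ?_
    calc 2 * B * (4 * Real.pi) * (4 / (s / (8 * v))) * (2 * Λ - Λ / 2)
        = 384 * Real.pi * B / s * (v * Λ) := by field_simp; ring
      _ ≤ (384 * Real.pi * B + 15360 * B * D) / s * v ^ 3 := by
        have : v * Λ ≤ v ^ 3 := by nlinarith
        have hp := Real.pi_pos
        gcongr
        have : 0 ≤ 15360 * B * D := by positivity
        linarith
  · -- large R
    have hR0 : 0 < R := lt_of_le_of_lt (by positivity) hcase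
    set κ := s * (Λ / (8192 * v ^ 5)) with hκ
    have hκ0 : 0 < κ := by positivity
    have hG : ∀ x ∈ Set.Icc (Λ / 2) (2 * Λ), ‖∫ y in (Λ / 2)..x,
        Complex.exp (Complex.I * (s * MM y + σ * (y * R) : ℝ))‖ ≤ 10 / √κ := by
      intro x hx
      have hsub : Set.Icc (Λ / 2) x ⊆ Set.Icc (Λ / 2) (2 * Λ) := Set.Icc_subset_Icc_right hx.2
      refine vdc2 hx.1 (fun r hr => hφ1 r (hsub hr)) (fun r hr => hφ2 r (hsub hr))
        (hφc.mono hsub) hκ0 (fun r hr => ?_)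
      have h1 := mul_le_mul_of_nonneg_left (hM2 r (hsub hr)) hs.le
      rw [hκ]; linarith
    have hM : ∀ r ∈ Set.Icc (Λ / 2) (2 * Λ),
        ‖aB1 σ (r * R) * (R : ℂ) * ((r * b (r / Λ) : ℝ) : ℂ) +
        aB σ (r * R) * ((b (r / Λ) + r * (b' (r / Λ) / Λ) : ℝ) : ℂ)‖ ≤
        2 * B * (D / √(Λ / 2 * R)) := fun r hr => by
      refine (hAn r hr).trans (mul_le_mul_of_nonneg_left ?_ (by positivity))
      refine (hD _ (mul_pos (hpos r hr) hR0)).trans ?_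
      have : √(Λ / 2 * R) ≤ √(r * R) := Real.sqrt_le_sqrt (mul_le_mul_of_nonneg_right hr.1 hR)
      have h0 : 0 < √(Λ / 2 * R) := by positivity
      gcongr
    refine (vdc_amp hab hcont hAd hA'c hAb hM hG).trans ?_
    have hkey : s * Λ / (512 * v ^ 3) ≤ √(Λ / 2 * R) * √κ := by
      rw [← Real.sqrt_mul (by positivity)]
      apply Real.le_sqrt_of_sq_le
      calc (s * Λ / (512 * v ^ 3)) ^ 2 = s ^ 2 * Λ ^ 2 / v ^ 6 * (1 / 262144) := by
            field_simp; norm_num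
        _ ≤ s ^ 2 * Λ ^ 2 / v ^ 6 * (1 / 131072) := by gcongr; norm_num
        _ = Λ / 2 * (s / (8 * v)) * κ := by rw [hκ]; field_simp; norm_num
        _ ≤ Λ / 2 * R * κ := by gcongr
    have h0 : 0 < √(Λ / 2 * R) := by positivity
    have h1 : 0 < √κ := by positivity
    calc 2 * B * (D / √(Λ / 2 * R)) * (10 / √κ) * (2 * Λ - Λ / 2)
        = 30 * B * D * Λ / (√(Λ / 2 * R) * √κ) := by field_simp; ring
      _ ≤ 30 * B * D * Λ / (s * Λ / (512 * v ^ 3)) := by gcongr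
      _ = 15360 * B * D / s * v ^ 3 := by field_simp; ring
      _ ≤ (384 * Real.pi * B + 15360 * B * D) / s * v ^ 3 := by
        have hp := Real.pi_pos
        gcongr
        have : 0 ≤ 384 * Real.pi * B := by positivity
        linarith

/-- The main one-dimensional estimate. -/
lemma radial_pos {b b' : ℝ → ℝ} (hb : ∀ x, HasDerivAt b (b' x) x)
    (hb'c : Continuous b') (hb2 : b 2 = 0) :
    ∃ C : ℝ, 0 < C ∧ ∀ Λ R s : ℝ, 0 < Λ → 0 ≤ R → 0 < s →
    ‖∫ r in (Λ / 2)..(2 * Λ), ((JB (r * R) * (r * b (r / Λ)) : ℝ) : ℂ) *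
      Complex.exp (Complex.I * (s * MM r : ℝ))‖ ≤ C / s * √(1 + Λ) ^ 3 := by
  obtain ⟨D, hD0, hD⟩ := JB_decay
  have hbc : Continuous b := continuous_iff_continuousAt.2 fun x => (hb x).continuousAt
  obtain ⟨B1, hB1⟩ := (isCompact_Icc (a := (1 / 2 : ℝ)) (b := 2)).exists_bound_of_continuousOn
    hbc.continuousOn
  obtain ⟨B2, hB2⟩ := (isCompact_Icc (a := (1 / 2 : ℝ)) (b := 2)).exists_bound_of_continuousOn
    hb'c.continuousOn
  set B := max 1 (max B1 B2) with hBdef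
  have hB : ∀ x ∈ Set.Icc (1 / 2 : ℝ) 2, |b x| ≤ B ∧ |b' x| ≤ B := fun x hx =>
    ⟨(hB1 x hx).trans ((le_max_left _ _).trans (le_max_right _ _)),
      (hB2 x hx).trans ((le_max_right _ _).trans (le_max_right _ _))⟩
  have hB0 : 0 < B := lt_of_lt_of_le one_pos (le_max_left _ _)
  refine ⟨2 * (384 * Real.pi * B + 15360 * B * D), by have := Real.pi_pos; positivity,
    fun Λ R s hΛ hR hs => ?_⟩
  have b1 := radial_one (σ := 1) (by simp) hb hb'c hb2 hB hD hD0 hΛ hR hs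
  have b2 := radial_one (σ := -1) (by simp) hb hb'c hb2 hB hD hD0 hΛ hR hs
  have hMc := MM_cont
  have c1 := aB_continuous 1
  have c2 := aB_continuous (-1)
  have e : (fun r : ℝ => ((JB (r * R) * (r * b (r / Λ)) : ℝ) : ℂ) *
      Complex.exp (Complex.I * (s * MM r : ℝ))) = fun r : ℝ =>
      (aB 1 (r * R) * ((r * b (r / Λ) : ℝ) : ℂ)) *
        Complex.exp (Complex.I * (s * MM r + 1 * (r * R) : ℝ)) +
      (aB (-1) (r * R) * ((r * b (r / Λ) : ℝ) : ℂ)) *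
        Complex.exp (Complex.I * (s * MM r + (-1) * (r * R) : ℝ)) := by
    funext r
    rw [Complex.ofReal_mul, aB_sum (r * R)]
    have e1 : Complex.exp (Complex.I * (s * MM r + 1 * (r * R) : ℝ)) =
        Complex.exp (Complex.I * ((r * R : ℝ) : ℂ)) * Complex.exp (Complex.I * (s * MM r : ℝ)) := by
      rw [← Complex.exp_add]; congr 1; push_cast; ring
    have e2 : Complex.exp (Complex.I * (s * MM r + (-1) * (r * R) : ℝ)) =
        Complex.exp (-(Complex.I * ((r * R : ℝ) : ℂ))) *
          Complex.exp (Complex.I * (s * MM r : ℝ)) := by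
      rw [← Complex.exp_add]; congr 1; push_cast; ring
    rw [e1, e2]; ring
  rw [e, intervalIntegral.integral_add]
  · refine (norm_add_le _ _).trans ((add_le_add b1 b2).trans (le_of_eq ?_))
    ring
  · exact Continuous.intervalIntegrable (by fun_prop) _ _
  · exact Continuous.intervalIntegrable (by fun_prop) _ _

lemma radial_main {b b' : ℝ → ℝ} (hb : ∀ x, HasDerivAt b (b' x) x)
    (hb'c : Continuous b') (hb2 : b 2 = 0) :
    ∃ C : ℝ, 0 < C ∧ ∀ Λ R s : ℝ, 0 < Λ → 0 ≤ R → s ≠ 0 →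
    ‖∫ r in (Λ / 2)..(2 * Λ), ((JB (r * R) * (r * b (r / Λ)) : ℝ) : ℂ) *
      Complex.exp (Complex.I * (s * MM r : ℝ))‖ ≤ C / |s| * √(1 + Λ) ^ 3 := by
  obtain ⟨C, hC, h⟩ := radial_pos hb hb'c hb2
  refine ⟨C, hC, fun Λ R s hΛ hR hs => ?_⟩
  rcases hs.lt_or_gt with hs' | hs'
  · have := h Λ R (-s) hΛ hR (by linarith)
    rw [abs_of_neg hs']
    refine le_trans (le_of_eq ?_) this
    rw [intervalIntegral.integral_of_le (by linarith), intervalIntegral.integral_of_le (by linarith),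
      ← Complex.norm_conj, ← integral_conj]
    congr 1
    congr 1
    funext r
    rw [map_mul, Complex.conj_ofReal, ← Complex.exp_conj, map_mul, Complex.conj_ofReal,
      Complex.conj_I]
    congr 2
    push_cast; ring
  · rw [abs_of_pos hs']
    exact h Λ R s hΛ hR hs'

/-! ### Polar coordinates -/

lemma JB_complex (ρ α : ℝ) : ∫ θ in (-Real.pi)..Real.pi,
    Complex.exp (Complex.I * (ρ * Real.cos (θ - α) : ℝ)) = (JB ρ : ℂ) := by
  have hper : Function.Periodic (fun θ : ℝ => Complex.exp (Complex.I * (ρ * Real.cos θ : ℝ)))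
      (2 * Real.pi) := fun θ => by
    simp only [Real.cos_add_two_pi]
  have h1 : ∫ θ in (-Real.pi)..Real.pi, Complex.exp (Complex.I * (ρ * Real.cos (θ - α) : ℝ)) =
      ∫ θ in (-Real.pi)..Real.pi, Complex.exp (Complex.I * (ρ * Real.cos θ : ℝ)) := by
    rw [intervalIntegral.integral_comp_sub_right
      (fun θ => Complex.exp (Complex.I * (ρ * Real.cos θ : ℝ)))]
    have := hper.intervalIntegral_add_eq (-Real.pi - α) (-Real.pi)
    rw [show -Real.pi - α + 2 * Real.pi = Real.pi - α by ring,
      show -Real.pi + 2 * Real.pi = Real.pi by ring] at this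
    exact this
  rw [h1]
  have hs : ∫ θ in (-Real.pi)..Real.pi, Real.sin (ρ * Real.cos θ) = 0 := by
    have hper2 : Function.Periodic (fun θ : ℝ => Real.sin (ρ * Real.cos θ))
      (2 * Real.pi) := fun θ => by
      simp only [Real.cos_add_two_pi]
    have e1 : ∫ θ in (-Real.pi)..Real.pi, Real.sin (ρ * Real.cos (θ + Real.pi)) =
        ∫ θ in (-Real.pi)..Real.pi, Real.sin (ρ * Real.cos θ) := by
      rw [intervalIntegral.integral_comp_add_right
        (fun θ => Real.sin (ρ * Real.cos θ))]
      have := hper2.intervalIntegral_add_eq (-Real.pi + Real.pi) (-Real.pi)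
      rw [show -Real.pi + Real.pi + 2 * Real.pi = Real.pi + Real.pi by ring,
        show -Real.pi + 2 * Real.pi = Real.pi by ring] at this
      exact this
    simp only [Real.cos_add_pi, mul_neg, Real.sin_neg, intervalIntegral.integral_neg] at e1
    linarith
  have e : ∀ θ : ℝ, Complex.exp (Complex.I * (ρ * Real.cos θ : ℝ)) =
      ((Real.cos (ρ * Real.cos θ) : ℝ) : ℂ) + ((Real.sin (ρ * Real.cos θ) : ℝ) : ℂ) * Complex.I := by
    intro θ
    rw [mul_comm, Complex.exp_mul_I, Complex.ofReal_cos, Complex.ofReal_sin]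
  simp_rw [e]
  rw [intervalIntegral.integral_add, intervalIntegral.integral_mul_const,
    intervalIntegral.integral_ofReal, intervalIntegral.integral_ofReal, hs]
  · simp [JB]
  · exact Continuous.intervalIntegrable (by fun_prop) _ _
  · exact Continuous.intervalIntegrable (by fun_prop) _ _

lemma polar_E2 (G : E2 → ℂ) : ∫ ξ, G ξ = ∫ p in (Set.Ioi (0 : ℝ)) ×ˢ (Set.Ioo (-Real.pi) Real.pi),
    (p.1 : ℂ) * G (!₂[p.1 * Real.cos p.2, p.1 * Real.sin p.2]) := by
  have h1 : ∫ ξ, G ξ = ∫ y : Fin 2 → ℝ, G (WithLp.toLp 2 y) :=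
    ((PiLp.volume_preserving_toLp (Fin 2)).integral_comp
      (MeasurableEquiv.toLp 2 (Fin 2 → ℝ)).measurableEmbedding G).symm
  have h2 : ∫ y : Fin 2 → ℝ, G (WithLp.toLp 2 y) = ∫ p : ℝ × ℝ, G (!₂[p.1, p.2]) := by
    rw [← ((volume_preserving_finTwoArrow ℝ).symm).integral_comp
      (MeasurableEquiv.finTwoArrow (α := ℝ)).symm.measurableEmbedding]
    rfl
  rw [h1, h2, ← integral_comp_polarCoord_symm]
  rfl

lemma polar_radial {h : ℝ → ℂ} (hc : Continuous h) {a b : ℝ} (ha : 0 < a) (hab : a ≤ b)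
    (hz : ∀ r, 0 < r → r ∉ Set.Icc a b → h r = 0) (w : E2) :
    ∫ ξ : E2, Complex.exp (Complex.I * (inner ℝ w ξ : ℝ)) * h ‖ξ‖ =
      ∫ r in a..b, (r * JB (r * ‖w‖) : ℝ) * h r := by
  obtain ⟨α, hα0, hα1⟩ : ∃ α : ℝ, w 0 = ‖w‖ * Real.cos α ∧ w 1 = ‖w‖ * Real.sin α := by
    have hn : ‖w‖ = ‖(⟨w 0, w 1⟩ : ℂ)‖ := by
      rw [EuclideanSpace.norm_eq, Complex.norm_def, Complex.normSq_apply]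
      simp [Fin.sum_univ_two, sq]
    refine ⟨Complex.arg ⟨w 0, w 1⟩, ?_, ?_⟩
    · rw [hn, Complex.norm_mul_cos_arg]
    · rw [hn, Complex.norm_mul_sin_arg]
  rw [polar_E2]
  have e : ∀ p ∈ (Set.Ioi (0 : ℝ)) ×ˢ (Set.Ioo (-Real.pi) Real.pi),
      (p.1 : ℂ) * (Complex.exp (Complex.I *
        (inner ℝ w (!₂[p.1 * Real.cos p.2, p.1 * Real.sin p.2]) : ℝ)) *
        h ‖(!₂[p.1 * Real.cos p.2, p.1 * Real.sin p.2] : E2)‖) =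
      ((p.1 : ℂ) * h p.1) * Complex.exp (Complex.I * ((p.1 * ‖w‖) * Real.cos (p.2 - α) : ℝ)) := by
    intro p hp
    have hp1 : 0 < p.1 := hp.1
    have hn : ‖(!₂[p.1 * Real.cos p.2, p.1 * Real.sin p.2] : E2)‖ = p.1 := by
      rw [EuclideanSpace.norm_eq]
      simp only [Fin.sum_univ_two, Real.norm_eq_abs, sq_abs]
      rw [show (p.1 : ℝ) = √(p.1 ^ 2) by rw [Real.sqrt_sq hp1.le]]
      congr 1
      simp [Real.sqrt_sq hp1.le]
      linear_combination p.1 ^ 2 * (Real.cos_sq_add_sin_sq p.2)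
    have hi : inner ℝ w (!₂[p.1 * Real.cos p.2, p.1 * Real.sin p.2] : E2) =
        (p.1 * ‖w‖) * Real.cos (p.2 - α) := by
      rw [PiLp.inner_apply]
      simp only [Fin.sum_univ_two]
      rw [Real.cos_sub, hα0, hα1]
      simp
      ring
    rw [hn, hi]; ring
  rw [setIntegral_congr_fun (measurableSet_Ioi.prod measurableSet_Ioo) e]
  have hsub : (Set.Icc a b) ×ˢ (Set.Ioo (-Real.pi) Real.pi) ⊆
      (Set.Ioi (0 : ℝ)) ×ˢ (Set.Ioo (-Real.pi) Real.pi) :=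
    Set.prod_mono_left fun r hr => lt_of_lt_of_le ha hr.1
  rw [setIntegral_eq_of_subset_of_forall_sdiff_eq_zero (measurableSet_Ioi.prod measurableSet_Ioo)
    hsub]
  swap
  · rintro p ⟨hp, hp'⟩
    have : p.1 ∉ Set.Icc a b := fun hh => hp' ⟨hh, hp.2⟩
    rw [hz p.1 hp.1 this]; simp
  rw [Measure.volume_eq_prod, setIntegral_prod]
  swap
  · have hcomp : IsCompact ((Set.Icc a b) ×ˢ (Set.Icc (-Real.pi) Real.pi)) :=
      isCompact_Icc.prod isCompact_Icc
    have hcont : Continuous (fun p : ℝ × ℝ => ((p.1 : ℂ) * h p.1) *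
        Complex.exp (Complex.I * ((p.1 * ‖w‖) * Real.cos (p.2 - α) : ℝ))) := by fun_prop
    exact (hcont.continuousOn.integrableOn_compact hcomp).mono_set
      (Set.prod_mono_right Set.Ioo_subset_Icc_self)
  rw [intervalIntegral.integral_of_le hab, ← integral_Icc_eq_integral_Ioc]
  congr 1
  funext r
  dsimp only
  rw [integral_const_mul, ← integral_Ioc_eq_integral_Ioo,
    ← intervalIntegral.integral_of_le (by linarith [Real.pi_pos])]
  have := JB_complex (r * ‖w‖) α
  rw [this]
  push_cast; ring

lemma m2_eq (ξ : E2) : m2 ξ = MM ‖ξ‖ := by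
  unfold m2 MM
  split_ifs with h
  · simp [h]
  · have hr : 0 < ‖ξ‖ := lt_of_le_of_ne (norm_nonneg _) (Ne.symm h)
    have : ‖ξ‖ * Real.tanh ‖ξ‖ = ‖ξ‖ ^ 2 * (Real.tanh ‖ξ‖ / ‖ξ‖) := by field_simp
    rw [this, Real.sqrt_mul (by positivity), Real.sqrt_sq hr.le]

lemma kernel_bound {b b' : ℝ → ℝ} (hb : ∀ x, HasDerivAt b (b' x) x)
    (hb'c : Continuous b') (hz : ∀ x, 0 < x → x ∉ Set.Ioo (1 / 2 : ℝ) 2 → b x = 0) :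
    ∃ C : ℝ, 0 < C ∧ ∀ μ lam t : ℝ, 0 < μ → 0 < lam → t ≠ 0 → ∀ w : E2,
    ‖∫ ξ : E2, Complex.exp (Complex.I * (inner ℝ w ξ : ℝ)) *
      (Complex.exp (Complex.I * ((t / √μ) * m2 (√μ • ξ) : ℝ)) * ((b (‖ξ‖ / lam) : ℝ) : ℂ))‖ ≤
      C * (1 / √μ) * (1 / |t|) * √(1 + √μ * lam) ^ 3 := by
  obtain ⟨C, hC, h⟩ := radial_main hb hb'c (hz 2 (by norm_num) (by simp))
  refine ⟨C, hC, fun μ lam t hμ hlam ht w => ?_⟩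
  have hbc : Continuous b := continuous_iff_continuousAt.2 fun x => (hb x).continuousAt
  have hs : 0 < √μ := Real.sqrt_pos.2 hμ
  have hMc := MM_cont
  have e1 := polar_radial (h := fun r => Complex.exp (Complex.I * ((t / √μ) * MM (√μ * r) : ℝ)) *
    ((b (r / lam) : ℝ) : ℂ)) (by fun_prop) (a := lam / 2) (b := 2 * lam) (by positivity)
    (by linarith) (fun r hr hr' => by
      rw [hz (r / lam) (by positivity) (fun hh => hr' ⟨?_, ?_⟩)]
      · simp
      · have := hh.1.le; rw [le_div_iff₀ hlam] at this; linarith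
      · have := hh.2.le; rw [div_le_iff₀ hlam] at this; linarith) w
  have e0 : ∀ ξ : E2, m2 (√μ • ξ) = MM (√μ * ‖ξ‖) := fun ξ => by
    rw [m2_eq, norm_smul, Real.norm_of_nonneg hs.le]
  simp_rw [e0]
  rw [e1]
  have e2 : ∀ r : ℝ, ((r * JB (r * ‖w‖) : ℝ) : ℂ) *
      (Complex.exp (Complex.I * ((t / √μ) * MM (√μ * r) : ℝ)) * ((b (r / lam) : ℝ) : ℂ)) =
      (fun x : ℝ => (1 / √μ : ℂ) * (((JB (x * (‖w‖ / √μ)) * (x * b (x / (√μ * lam))) : ℝ) : ℂ) *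
        Complex.exp (Complex.I * ((t / √μ) * MM x : ℝ)))) (√μ * r) := by
    intro r
    simp only
    rw [show √μ * r * (‖w‖ / √μ) = r * ‖w‖ by field_simp,
      show √μ * r / (√μ * lam) = r / lam by field_simp]
    have hs' : ((√μ : ℝ) : ℂ) ≠ 0 := by exact_mod_cast hs.ne'
    push_cast
    field_simp
  simp_rw [e2]
  rw [intervalIntegral.integral_comp_mul_left
    (fun x : ℝ => (1 / √μ : ℂ) * (((JB (x * (‖w‖ / √μ)) * (x * b (x / (√μ * lam))) : ℝ) : ℂ) *
        Complex.exp (Complex.I * ((t / √μ) * MM x : ℝ)))) hs.ne',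
    intervalIntegral.integral_const_mul]
  have hk := h (√μ * lam) (‖w‖ / √μ) (t / √μ) (by positivity) (by positivity)
    (div_ne_zero ht hs.ne')
  rw [show √μ * lam / 2 = √μ * (lam / 2) by ring, show 2 * (√μ * lam) = √μ * (2 * lam) by ring] at hk
  rw [norm_smul, norm_mul]
  have hn1 : ‖(√μ)⁻¹‖ = 1 / √μ := by rw [Real.norm_of_nonneg (by positivity), one_div]
  have hn2 : ‖(1 / (√μ : ℂ))‖ = 1 / √μ := by
    rw [norm_div, norm_one, Complex.norm_real, Real.norm_of_nonneg hs.le]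
  rw [hn1, hn2]
  refine (mul_le_mul_of_nonneg_left (mul_le_mul_of_nonneg_left hk (by positivity))
    (by positivity)).trans (le_of_eq ?_)
  rw [abs_div, abs_of_pos hs]
  have : 0 < |t| := abs_pos.2 ht
  field_simp

/-- The Littlewood-Paley piece of a Schwartz function has the expected Fourier transform. -/
lemma fourier_piece {b : ℝ → ℝ} (hbs : ContDiff ℝ (⊤ : ℕ∞) b)
    (hz0 : ∀ x, 0 ≤ x → x ≤ 1 / 2 → b x = 0) (hz2 : ∀ x, 2 ≤ x → b x = 0)
    {lam : ℝ} (hl : 0 < lam) (f : 𝓢(E2, ℂ)) :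
    𝓕 (𝓕⁻ (fun ξ : E2 => ((b (‖ξ‖ / lam) : ℝ) : ℂ) * 𝓕 (⇑f) ξ)) =
      fun ξ : E2 => ((b (‖ξ‖ / lam) : ℝ) : ℂ) * 𝓕 (⇑f) ξ := by
  set h : E2 → ℂ := fun ξ : E2 => ((b (‖ξ‖ / lam) : ℝ) : ℂ) * 𝓕 (⇑f) ξ with hh
  have hF : ContDiff ℝ (⊤ : ℕ∞) (𝓕 (⇑f) : E2 → ℂ) := (𝓕 f : 𝓢(E2, ℂ)).smooth ⊤
  have hsm : ContDiff ℝ (⊤ : ℕ∞) h := by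
    rw [contDiff_iff_contDiffAt]
    intro x
    by_cases hx : x = 0
    · have : h =ᶠ[nhds x] fun _ => (0 : ℂ) := by
        have : Metric.ball (0 : E2) (lam / 2) ∈ nhds x := by
          rw [hx]; exact Metric.ball_mem_nhds _ (by positivity)
        filter_upwards [this] with y hy
        rw [mem_ball_zero_iff] at hy
        rw [hh]
        simp only
        rw [hz0 _ (by positivity) (by rw [div_le_iff₀ hl]; linarith)]
        simp
      exact contDiffAt_const.congr_of_eventuallyEq this
    · have h1 : ContDiffAt ℝ (⊤ : ℕ∞) (fun ξ : E2 => b (‖ξ‖ / lam)) x := by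
        apply hbs.contDiffAt.comp
        exact (contDiffAt_norm ℝ hx).div_const _
      exact (Complex.ofRealCLM.contDiff.contDiffAt.comp x h1).mul hF.contDiffAt
  have hcs : HasCompactSupport h := by
    refine HasCompactSupport.intro (isCompact_closedBall (0 : E2) (2 * lam)) ?_
    intro x hx
    rw [mem_closedBall_zero_iff, not_le] at hx
    rw [hh]
    simp only
    rw [hz2 _ (by rw [le_div_iff₀ hl]; linarith)]
    simp
  let H : 𝓢(E2, ℂ) := hcs.toSchwartzMap hsm
  have e : h = ⇑H := rfl
  rw [e]
  apply Continuous.fourier_fourierInv_eq H.continuous H.integrable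
  exact (𝓕 H : 𝓢(E2, ℂ)).integrable

lemma b_facts (χ : ℝ → ℝ) (hχ : ContDiff ℝ (⊤ : ℕ∞) χ)
    (hsupp : Function.support χ ⊆ Set.Ioo (-2 : ℝ) 2)
    (hone : ∀ s ∈ Set.Icc (-1 : ℝ) 1, χ s = 1) :
    ∃ b b' : ℝ → ℝ, (∀ x, b x = χ x - χ (2 * x)) ∧ ContDiff ℝ (⊤ : ℕ∞) b ∧
      (∀ x, HasDerivAt b (b' x) x) ∧ Continuous b' ∧
      (∀ x, 0 ≤ x → x ≤ 1 / 2 → b x = 0) ∧ (∀ x, 2 ≤ x → b x = 0) := by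
  have hb : ContDiff ℝ (⊤ : ℕ∞) (fun x => χ x - χ (2 * x)) :=
    hχ.sub (hχ.comp (contDiff_const.mul contDiff_id))
  have h0 : ∀ y, 2 ≤ y → χ y = 0 := by
    intro y hy
    by_contra hne
    have := (hsupp (Function.mem_support.2 hne)).2
    linarith
  refine ⟨fun x => χ x - χ (2 * x), deriv (fun x => χ x - χ (2 * x)), fun x => rfl, hb, ?_, ?_,
    ?_, ?_⟩
  · intro x
    exact ((hb.differentiable (by simp)) x).hasDerivAt
  · exact hb.continuous_deriv (by exact_mod_cast le_top)
  · intro x hx hx2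
    simp only
    rw [hone x ⟨by linarith, by linarith⟩, hone (2 * x) ⟨by linarith, by linarith⟩, sub_self]
  · intro x hx
    simp only
    rw [h0 x hx, h0 (2 * x) (by linarith), sub_self]

lemma pointwise_bound {b : ℝ → ℝ} (hbs : ContDiff ℝ (⊤ : ℕ∞) b)
    (hz2 : ∀ x, 2 ≤ x → b x = 0) {μ lam t K : ℝ} (hl : 0 < lam)
    (hK : ∀ w : E2, ‖∫ ξ : E2, Complex.exp (Complex.I * (inner ℝ w ξ : ℝ)) *
      (Complex.exp (Complex.I * ((t / √μ) * m2 (√μ • ξ) : ℝ)) * ((b (‖ξ‖ / lam) : ℝ) : ℂ))‖ ≤ K)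
    (f : 𝓢(E2, ℂ)) (x : E2) :
    ‖𝓕⁻ (fun ξ : E2 => Complex.exp (Complex.I * ((t / √μ) * m2 (√μ • ξ) : ℝ)) *
      (((b (‖ξ‖ / lam) : ℝ) : ℂ) * 𝓕 (⇑f) ξ)) x‖ ≤ K * ∫ z, ‖f z‖ := by
  set G : E2 → ℂ := fun ξ => Complex.exp (Complex.I * ((t / √μ) * m2 (√μ • ξ) : ℝ)) *
    ((b (‖ξ‖ / lam) : ℝ) : ℂ) with hG
  set g : E2 → ℂ := fun ξ => Complex.exp (↑(2 * Real.pi * inner ℝ ξ x) * Complex.I) * G ξ with hg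
  have hGc : Continuous G := by
    have h1 : Continuous fun ξ : E2 => m2 (√μ • ξ) := by
      simp only [m2_eq]
      exact MM_cont.comp (by fun_prop)
    have h2 : Continuous b := hbs.continuous
    rw [hG]
    fun_prop
  have hgc : Continuous g := by rw [hg]; fun_prop
  have hgs : HasCompactSupport g := by
    refine HasCompactSupport.intro (isCompact_closedBall (0 : E2) (2 * lam)) ?_
    intro y hy
    rw [mem_closedBall_zero_iff, not_le] at hy
    rw [hg, hG]
    simp only
    rw [hz2 _ (by rw [le_div_iff₀ hl]; linarith)]
    simp
  have hgi : Integrable g := hgc.integrable_of_hasCompactSupport hgs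
  have e1 : 𝓕⁻ (fun ξ : E2 => Complex.exp (Complex.I * ((t / √μ) * m2 (√μ • ξ) : ℝ)) *
      (((b (‖ξ‖ / lam) : ℝ) : ℂ) * 𝓕 (⇑f) ξ)) x = ∫ ξ, 𝓕 (⇑f) ξ • g ξ := by
    rw [Real.fourierInv_eq']
    congr 1
    ext ξ
    simp only [hg, hG, smul_eq_mul]
    ring
  have e2 : ∫ ξ, 𝓕 (⇑f) ξ • g ξ = ∫ z, f z • 𝓕 g z := by
    simpa using! (VectorFourier.integral_fourierIntegral_smul_eq_flip (L := innerₗ E2)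
      Real.continuous_fourierChar continuous_inner f.integrable hgi)
  have e3 : ∀ z, ‖𝓕 g z‖ ≤ K := by
    intro z
    have := hK ((2 * Real.pi) • (x - z))
    convert this using 2
    rw [Real.fourier_eq']
    congr 1
    ext ξ
    simp only [hg, smul_eq_mul]
    rw [← mul_assoc, ← Complex.exp_add]
    congr 2
    rw [inner_smul_left, inner_sub_left, real_inner_comm ξ x, real_inner_comm ξ z]
    push_cast
    simp
    ring
  rw [e1, e2]
  calc ‖∫ z, f z • 𝓕 g z‖ ≤ ∫ z, K * ‖f z‖ := by
        apply norm_integral_le_of_norm_le (f.integrable.norm.const_mul K)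
        filter_upwards with z
        rw [norm_smul, mul_comm]
        exact mul_le_mul_of_nonneg_right (e3 z) (norm_nonneg _)
    _ = _ := integral_const_mul _ _

lemma jap_bound {Λ : ℝ} (hΛ : 0 < Λ) : √(1 + Λ) ^ 3 ≤ 4 * jap Λ ^ ((3 : ℝ) / 2) := by
  have hj : jap Λ = √(1 + Λ ^ 2) := by rw [jap, Real.sqrt_eq_rpow]
  have hjp : 0 < jap Λ := by rw [hj]; positivity
  have h1 : 1 + Λ ≤ 2 * jap Λ := by
    have : 1 ≤ jap Λ := by rw [hj]; exact Real.one_le_sqrt.2 (by nlinarith)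
    have : Λ ≤ jap Λ := by rw [hj]; exact Real.le_sqrt_of_sq_le (by linarith)
    linarith
  have h2 : jap Λ ^ ((3 : ℝ) / 2) = √(jap Λ) ^ 3 := by
    rw [Real.sqrt_eq_rpow, ← Real.rpow_natCast, ← Real.rpow_mul hjp.le]
    norm_num
  rw [h2]
  have h3 : √(1 + Λ) ≤ √2 * √(jap Λ) := by
    rw [← Real.sqrt_mul (by norm_num)]
    exact Real.sqrt_le_sqrt h1
  have h4 : √2 ^ 3 ≤ (4 : ℝ) := by
    have : √(2 : ℝ) ^ 2 = 2 := Real.sq_sqrt (by norm_num)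
    have h5 : √(2 : ℝ) ≤ 2 := Real.sqrt_le_left (by norm_num) |>.2 (by norm_num)
    nlinarith
  calc √(1 + Λ) ^ 3 ≤ (√2 * √(jap Λ)) ^ 3 := pow_le_pow_left₀ (Real.sqrt_nonneg _) h3 3
    _ = √2 ^ 3 * √(jap Λ) ^ 3 := mul_pow _ _ _
    _ ≤ _ := mul_le_mul_of_nonneg_right h4 (by positivity)

/-- For `μ ∈ (0,1]` there is `C`, independent of `μ`, such that for all
`λ > 0`, `t ≠ 0` and Schwartz `f` on `ℝ²`:
`‖S_{μ,2}(t) P_λ f‖_{L^∞} ≤ C μ^{-1/2} |t|^{-1} ⟨√μ λ⟩^{3/2} ‖f‖_{L^1}`. -/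
theorem dispersive_decay_2d (χ : ℝ → ℝ) (hχ : ContDiff ℝ (⊤ : ℕ∞) χ)
    (hsupp : Function.support χ ⊆ Set.Ioo (-2 : ℝ) 2)
    (hone : ∀ s ∈ Set.Icc (-1 : ℝ) 1, χ s = 1) :
    ∃ C : ℝ, 0 < C ∧
      ∀ μ : ℝ, 0 < μ → μ ≤ 1 →
        ∀ lam : ℝ, 0 < lam → ∀ t : ℝ, t ≠ 0 → ∀ f : 𝓢(E2, ℂ),
          eLpNorm (prop2 μ t (proj2 χ lam ⇑f)) ⊤ volume
            ≤ ENNReal.ofReal (C * μ ^ (-(1 : ℝ) / 2) * |t| ^ (-(1 : ℝ)) *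
                jap (Real.sqrt μ * lam) ^ ((3 : ℝ) / 2)) *
              eLpNorm (⇑f) 1 volume := by
  obtain ⟨b, b', hbχ, hbs, hbd, hb'c, hz0, hz2⟩ := b_facts χ hχ hsupp hone
  obtain ⟨C, hC, hker⟩ := kernel_bound hbd hb'c (by
    intro x hx hx2
    rw [Set.mem_Ioo, not_and_or, not_lt, not_lt] at hx2
    rcases hx2 with h | h
    · exact hz0 x hx.le h
    · exact hz2 x h)
  refine ⟨4 * C, by positivity, ?_⟩
  intro μ hμ _ lam hl t ht f
  have hs : 0 < √μ := Real.sqrt_pos.2 hμ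
  set K := 4 * C * μ ^ (-(1 : ℝ) / 2) * |t| ^ (-(1 : ℝ)) *
                jap (Real.sqrt μ * lam) ^ ((3 : ℝ) / 2) with hKdef
  have e1 : μ ^ (-(1 : ℝ) / 2) = 1 / √μ := by
    rw [neg_div, Real.rpow_neg hμ.le, ← Real.sqrt_eq_rpow, one_div]
  have e2 : |t| ^ (-(1 : ℝ)) = 1 / |t| := by
    rw [Real.rpow_neg (abs_nonneg t), Real.rpow_one, one_div]
  have hta : 0 < |t| := abs_pos.2 ht
  have hjap : 0 ≤ jap (√μ * lam) := by unfold jap; positivity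
  have hK0 : 0 ≤ K := by rw [hKdef]; positivity
  have hK : ∀ w : E2, ‖∫ ξ : E2, Complex.exp (Complex.I * (inner ℝ w ξ : ℝ)) *
      (Complex.exp (Complex.I * ((t / √μ) * m2 (√μ • ξ) : ℝ)) *
        ((b (‖ξ‖ / lam) : ℝ) : ℂ))‖ ≤ K := by
    intro w
    refine (hker μ lam t hμ hl ht w).trans ?_
    rw [hKdef, e1, e2]
    have := mul_le_mul_of_nonneg_left (jap_bound (mul_pos hs hl))
      (by positivity : 0 ≤ C * (1 / √μ) * (1 / |t|))
    refine this.trans (le_of_eq ?_)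
    ring
  have hproj : proj2 χ lam ⇑f = 𝓕⁻ (fun ξ : E2 => ((b (‖ξ‖ / lam) : ℝ) : ℂ) * 𝓕 (⇑f) ξ) := by
    unfold proj2
    congr 1
    ext ξ
    rw [hbχ, mul_div_assoc]
  have hprop : prop2 μ t (proj2 χ lam ⇑f) = 𝓕⁻ (fun ξ : E2 =>
      Complex.exp (Complex.I * ((t / √μ) * m2 (√μ • ξ) : ℝ)) *
      (((b (‖ξ‖ / lam) : ℝ) : ℂ) * 𝓕 (⇑f) ξ)) := by
    unfold prop2
    rw [hproj, fourier_piece hbs hz0 hz2 hl f]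
  have hpt := pointwise_bound hbs hz2 hl hK f
  rw [hprop, eLpNorm_exponent_top]
  refine (eLpNormEssSup_le_of_ae_bound (Filter.Eventually.of_forall hpt)).trans ?_
  rw [ENNReal.ofReal_mul hK0, eLpNorm_one_eq_lintegral_enorm,
    ofReal_integral_norm_eq_lintegral_enorm f.integrable]
end
end

section
/- Let μ ∈ (0,1] and let 2 < q ≤ ∞ and 2 ≤ r ≤ ∞ satisfy 2/q = 1/2 − 1/r. There is a constant C = C(q,r), independent of μ and λ, such that for every λ > 0 and every Schwartz function f on ℝ, (∫_ℝ ‖S_{μ,1}(t) P_λ f‖_{L^r(ℝ)}^q dt)^{1/q} ≤ C ( μ^{-1/2} λ^{-1/2} ⟨√μ λ⟩^{5/4} )^{1/2 − 1/r} ‖P_λ f‖_{L^2(ℝ)} (with the usual modification of the time norm when q = ∞). -/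
noncomputable section

open MeasureTheory SchwartzMap
open scoped FourierTransform ENNReal

/-- The symbol `m₁(ξ) = ξ (tanh|ξ|/|ξ|)^{1/2}`, with `m₁(0) = 0`. -/
def m1 (ξ : ℝ) : ℝ :=
  if ξ = 0 then 0 else ξ * Real.sqrt (Real.tanh |ξ| / |ξ|)

/-- The propagator `S_{μ,1}(t) f = (e^{i(t/√μ) m₁(√μ ξ)} f̂(ξ))^∨`. -/
def prop1 (μ t : ℝ) (f : ℝ → ℂ) : ℝ → ℂ :=
  𝓕⁻ (fun ξ : ℝ =>
    Complex.exp (Complex.I * ((t / Real.sqrt μ) * m1 (Real.sqrt μ * ξ) : ℝ)) * 𝓕 f ξ)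

/-- Littlewood–Paley projection `P_λ`, `(P_λ f)^(ξ) = β(|ξ|/λ) f̂(ξ)`, `β(s)=χ(s)-χ(2s)`. -/
def proj1 (χ : ℝ → ℝ) (lam : ℝ) (f : ℝ → ℂ) : ℝ → ℂ :=
  𝓕⁻ (fun ξ : ℝ => ((χ (|ξ| / lam) - χ (2 * |ξ| / lam) : ℝ) : ℂ) * 𝓕 f ξ)

/-- The `L^q(ℝ)`-norm in time of an `ℝ≥0∞`-valued quantity,
`(∫_ℝ g(t)^q dt)^{1/q}`, with the usual modification (essential supremum) when `q = ∞`. -/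
def timeNorm (q : ℝ≥0∞) (g : ℝ → ℝ≥0∞) : ℝ≥0∞ :=
  if q = ∞ then essSup g volume
  else (∫⁻ t : ℝ, g t ^ q.toReal) ^ (1 / q.toReal)


lemma vdc_first (ψ ψ' ψ'' : ℝ → ℝ) (a b δ : ℝ) (hab : a ≤ b) (hδ : 0 < δ)
    (h1 : ∀ x ∈ Set.Icc a b, HasDerivAt ψ (ψ' x) x)
    (h2 : ∀ x ∈ Set.Icc a b, HasDerivAt ψ' (ψ'' x) x)
    (h3 : ContinuousOn ψ'' (Set.Icc a b))
    (h4 : ∀ x ∈ Set.Icc a b, 0 ≤ ψ'' x)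
    (h5 : ∀ x ∈ Set.Icc a b, δ ≤ |ψ' x|) :
    ‖∫ x in a..b, Complex.exp (Complex.I * (ψ x : ℝ))‖ ≤ 4 / δ := by
  have hne : ∀ x ∈ Set.Icc a b, ψ' x ≠ 0 := by
    intro x hx h
    have := h5 x hx
    rw [h, abs_zero] at this
    linarith
  have hc : ContinuousOn ψ (Set.Icc a b) := fun x hx => (h1 x hx).continuousAt.continuousWithinAt
  have hc' : ContinuousOn ψ' (Set.Icc a b) := fun x hx => (h2 x hx).continuousAt.continuousWithinAt
  have hd : ∀ x ∈ Set.uIcc a b, HasDerivAt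
      (fun x => -Complex.I * (Complex.exp (Complex.I * (ψ x : ℝ)) * (((ψ' x)⁻¹ : ℝ) : ℂ)))
      (Complex.exp (Complex.I * (ψ x : ℝ)) + Complex.I * Complex.exp (Complex.I * (ψ x : ℝ)) *
        ((ψ'' x / (ψ' x) ^ 2 : ℝ) : ℂ)) x := by
    intro x hx
    rw [Set.uIcc_of_le hab] at hx
    have e1 := (((h1 x hx).ofReal_comp).const_mul Complex.I).cexp
    have e2 := ((h2 x hx).inv (hne x hx)).ofReal_comp
    have e3 := (e1.mul e2).const_mul (-Complex.I)
    refine e3.congr_deriv ?_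
    have := hne x hx
    have h' : ((ψ' x : ℝ) : ℂ) ≠ 0 := by exact_mod_cast this
    simp only [Pi.inv_apply]
    push_cast
    field_simp
    ring_nf
    simp only [Complex.I_sq]
    ring
  have hce : ContinuousOn (fun x => Complex.exp (Complex.I * (ψ x : ℝ))) (Set.Icc a b) := by
    fun_prop
  have hcq : ContinuousOn (fun x => ψ'' x / (ψ' x) ^ 2) (Set.Icc a b) :=
    h3.div (hc'.pow 2) (fun x hx => pow_ne_zero 2 (hne x hx))
  have hcq' : ContinuousOn (fun x => Complex.I * Complex.exp (Complex.I * (ψ x : ℝ)) *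
        ((ψ'' x / (ψ' x) ^ 2 : ℝ) : ℂ)) (Set.Icc a b) :=
    (continuousOn_const.mul hce).mul (Complex.continuous_ofReal.comp_continuousOn hcq)
  have i1 : IntervalIntegrable (fun x => Complex.exp (Complex.I * (ψ x : ℝ))) volume a b :=
    ContinuousOn.intervalIntegrable (by rwa [Set.uIcc_of_le hab])
  have i2 : IntervalIntegrable (fun x => Complex.I * Complex.exp (Complex.I * (ψ x : ℝ)) *
        ((ψ'' x / (ψ' x) ^ 2 : ℝ) : ℂ)) volume a b :=
    ContinuousOn.intervalIntegrable (by rwa [Set.uIcc_of_le hab])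
  have i3 : IntervalIntegrable (fun x => ψ'' x / (ψ' x) ^ 2) volume a b :=
    ContinuousOn.intervalIntegrable (by rwa [Set.uIcc_of_le hab])
  have F := intervalIntegral.integral_eq_sub_of_hasDerivAt hd (i1.add i2)
  rw [intervalIntegral.integral_add i1 i2] at F
  have hr : ∫ x in a..b, ψ'' x / (ψ' x) ^ 2 = (-(ψ' b)⁻¹) - (-(ψ' a)⁻¹) := by
    apply intervalIntegral.integral_eq_sub_of_hasDerivAt (f := fun x => -(ψ' x)⁻¹) _ i3
    intro x hx
    rw [Set.uIcc_of_le hab] at hx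
    refine ((h2 x hx).inv (hne x hx)).neg.congr_deriv ?_
    ring
  have hbd : ∀ x ∈ Set.Icc a b, |(ψ' x)⁻¹| ≤ 1 / δ := by
    intro x hx
    rw [abs_inv, ← one_div]
    exact one_div_le_one_div_of_le hδ (h5 x hx)
  have ha := hbd a (Set.left_mem_Icc.2 hab)
  have hb := hbd b (Set.right_mem_Icc.2 hab)
  have hn : ∀ y : ℝ, ‖Complex.exp (Complex.I * (y : ℝ))‖ = 1 := by
    intro y
    rw [mul_comm]
    exact Complex.norm_exp_ofReal_mul_I y
  have n2 : ‖∫ x in a..b, Complex.I * Complex.exp (Complex.I * (ψ x : ℝ)) *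
        ((ψ'' x / (ψ' x) ^ 2 : ℝ) : ℂ)‖ ≤ 2 / δ := by
    refine (intervalIntegral.norm_integral_le_integral_norm hab).trans ?_
    have : ∫ x in a..b, ‖Complex.I * Complex.exp (Complex.I * (ψ x : ℝ)) *
        ((ψ'' x / (ψ' x) ^ 2 : ℝ) : ℂ)‖ = ∫ x in a..b, ψ'' x / (ψ' x) ^ 2 := by
      apply intervalIntegral.integral_congr
      intro x hx
      rw [Set.uIcc_of_le hab] at hx
      simp only [norm_mul, hn, Complex.norm_I, one_mul, Complex.norm_real]
      rw [Real.norm_of_nonneg]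
      exact div_nonneg (h4 x hx) (sq_nonneg _)
    rw [this, hr]
    have := abs_le.1 ha
    have := abs_le.1 hb
    have : 2 / δ = 1 / δ + 1 / δ := by ring
    linarith
  have nb : ∀ x ∈ Set.Icc a b, ‖-Complex.I * (Complex.exp (Complex.I * (ψ x : ℝ)) *
      (((ψ' x)⁻¹ : ℝ) : ℂ))‖ ≤ 1 / δ := by
    intro x hx
    simp only [norm_mul, hn, norm_neg, Complex.norm_I, one_mul, Complex.norm_real]
    exact hbd x hx
  have na := nb a (Set.left_mem_Icc.2 hab)
  have nbb := nb b (Set.right_mem_Icc.2 hab)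
  rw [eq_sub_of_add_eq F]
  refine (norm_sub_le _ _).trans ?_
  have := norm_sub_le (-Complex.I * (Complex.exp (Complex.I * (ψ b : ℝ)) *
      (((ψ' b)⁻¹ : ℝ) : ℂ))) (-Complex.I * (Complex.exp (Complex.I * (ψ a : ℝ)) *
      (((ψ' a)⁻¹ : ℝ) : ℂ)))
  have e : 4 / δ = 1 / δ + 1 / δ + 2 / δ := by ring
  rw [e]
  linarith

lemma vdc_second (ψ ψ' ψ'' : ℝ → ℝ) (a b κ : ℝ) (hab : a ≤ b) (hκ : 0 < κ)
    (h1 : ∀ x ∈ Set.Icc a b, HasDerivAt ψ (ψ' x) x)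
    (h2 : ∀ x ∈ Set.Icc a b, HasDerivAt ψ' (ψ'' x) x)
    (h3 : ContinuousOn ψ'' (Set.Icc a b))
    (h4 : ∀ x ∈ Set.Icc a b, κ ≤ ψ'' x) :
    ‖∫ x in a..b, Complex.exp (Complex.I * (ψ x : ℝ))‖ ≤ 10 / Real.sqrt κ := by
  have hc : ContinuousOn ψ (Set.Icc a b) := fun x hx => (h1 x hx).continuousAt.continuousWithinAt
  have hc' : ContinuousOn ψ' (Set.Icc a b) := fun x hx => (h2 x hx).continuousAt.continuousWithinAt
  have mvt : ∀ x ∈ Set.Icc a b, ∀ y ∈ Set.Icc a b, x ≤ y → κ * (y - x) ≤ ψ' y - ψ' x := by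
    intro x hx y hy hxy
    apply Convex.mul_sub_le_image_sub_of_le_deriv (convex_Icc a b) hc' _ _ x hx y hy hxy
    · intro z hz
      exact (h2 z (interior_subset hz)).differentiableAt.differentiableWithinAt
    · intro z hz
      rw [(h2 z (interior_subset hz)).deriv]
      exact h4 z (interior_subset hz)
  have hla : a ∈ Set.Icc a b := Set.left_mem_Icc.2 hab
  have hlb : b ∈ Set.Icc a b := Set.right_mem_Icc.2 hab
  obtain ⟨c, hcab, hc1, hc2⟩ : ∃ c ∈ Set.Icc a b, (∀ x ∈ Set.Icc a b, c < x → κ * (x - c) ≤ ψ' x) ∧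
      (∀ x ∈ Set.Icc a b, x < c → ψ' x ≤ - (κ * (c - x))) := by
    by_cases hA : 0 ≤ ψ' a
    · refine ⟨a, hla, fun x hx hax => ?_, fun x hx hxa => absurd hx.1 (not_le.2 hxa)⟩
      have := mvt a hla x hx hax.le
      linarith
    by_cases hB : ψ' b ≤ 0
    · refine ⟨b, hlb, fun x hx hax => absurd hx.2 (not_le.2 hax), fun x hx hxa => ?_⟩
      have := mvt x hx b hlb hxa.le
      linarith
    · obtain ⟨c, hc, h0⟩ := intermediate_value_Icc hab hc' (⟨(not_le.1 hA).le, (not_le.1 hB).le⟩)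
      refine ⟨c, hc, fun x hx hcx => ?_, fun x hx hcx => ?_⟩
      · have := mvt c hc x hx hcx.le
        linarith
      · have := mvt x hx c hc hcx.le
        linarith
  have hs : 0 < Real.sqrt κ := Real.sqrt_pos.2 hκ
  have hss : Real.sqrt κ * Real.sqrt κ = κ := Real.mul_self_sqrt hκ.le
  set σ := Real.sqrt κ with hσ
  have hδ : 0 < 1 / σ := by positivity
  have hκδ : κ * (1 / σ) = σ := by rw [← hss]; field_simp
  obtain ⟨hca, hcb⟩ := hcab
  set p := max a (c - 1 / σ) with hp
  set s := min b (c + 1 / σ) with hs'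
  have hap : a ≤ p := le_max_left _ _
  have hpc : p ≤ c := max_le hca (by linarith)
  have hcs : c ≤ s := le_min hcb (by linarith)
  have hsb : s ≤ b := min_le_left _ _
  have hce : ContinuousOn (fun x => Complex.exp (Complex.I * (ψ x : ℝ))) (Set.Icc a b) := by
    fun_prop
  have hitg : ∀ x ∈ Set.Icc a b, ∀ y ∈ Set.Icc a b, IntervalIntegrable
      (fun x => Complex.exp (Complex.I * (ψ x : ℝ))) volume x y := by
    intro x hx y hy
    exact ContinuousOn.intervalIntegrable (hce.mono (Set.uIcc_subset_Icc hx hy))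
  have hpm : p ∈ Set.Icc a b := ⟨hap, by linarith⟩
  have hsm : s ∈ Set.Icc a b := ⟨by linarith, hsb⟩
  rw [← intervalIntegral.integral_add_adjacent_intervals (hitg a hla p hpm) (hitg p hpm b hlb),
    ← intervalIntegral.integral_add_adjacent_intervals (hitg p hpm s hsm) (hitg s hsm b hlb)]
  have n1 : ‖∫ x in a..p, Complex.exp (Complex.I * (ψ x : ℝ))‖ ≤ 4 / σ := by
    rcases le_total (c - 1 / σ) a with h | h
    · have : p = a := max_eq_left h
      rw [this, intervalIntegral.integral_same, norm_zero]
      positivity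
    · have hpe : p = c - 1 / σ := max_eq_right h
      have sub : Set.Icc a p ⊆ Set.Icc a b := Set.Icc_subset_Icc_right hpm.2
      apply vdc_first ψ ψ' ψ'' a p σ hap hs (fun x hx => h1 x (sub hx)) (fun x hx => h2 x (sub hx))
        (h3.mono sub) (fun x hx => hκ.le.trans (h4 x (sub hx)))
      intro x hx
      have hx2 := hx.2
      have hxc : 1 / σ ≤ c - x := by linarith
      have := hc2 x (sub hx) (by linarith)
      have h6 : κ * (1 / σ) ≤ κ * (c - x) := mul_le_mul_of_nonneg_left hxc hκ.le
      rw [le_abs]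
      right
      linarith
  have n3 : ‖∫ x in s..b, Complex.exp (Complex.I * (ψ x : ℝ))‖ ≤ 4 / σ := by
    rcases le_total b (c + 1 / σ) with h | h
    · have : s = b := min_eq_left h
      rw [this, intervalIntegral.integral_same, norm_zero]
      positivity
    · have hpe : s = c + 1 / σ := min_eq_right h
      have sub : Set.Icc s b ⊆ Set.Icc a b := Set.Icc_subset_Icc_left hsm.1
      apply vdc_first ψ ψ' ψ'' s b σ hsb hs (fun x hx => h1 x (sub hx)) (fun x hx => h2 x (sub hx))
        (h3.mono sub) (fun x hx => hκ.le.trans (h4 x (sub hx)))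
      intro x hx
      have hx2 := hx.1
      have hxc : 1 / σ ≤ x - c := by linarith
      have := hc1 x (sub hx) (by linarith)
      have h6 : κ * (1 / σ) ≤ κ * (x - c) := mul_le_mul_of_nonneg_left hxc hκ.le
      rw [le_abs]
      left
      linarith
  have n2 : ‖∫ x in p..s, Complex.exp (Complex.I * (ψ x : ℝ))‖ ≤ 2 / σ := by
    have := intervalIntegral.norm_integral_le_of_norm_le_const (a := p) (b := s) (C := 1)
      (f := fun x => Complex.exp (Complex.I * (ψ x : ℝ))) (by
        intro x _
        rw [mul_comm]
        exact (Complex.norm_exp_ofReal_mul_I _).le)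
    refine this.trans ?_
    have e1 : c - 1 / σ ≤ p := le_max_right _ _
    have e2 : s ≤ c + 1 / σ := min_le_right _ _
    rw [one_mul, abs_of_nonneg (by linarith)]
    have : 2 / σ = 1 / σ + 1 / σ := by ring
    linarith
  refine (norm_add_le _ _).trans ?_
  have := norm_add_le (∫ x in p..s, Complex.exp (Complex.I * (ψ x : ℝ)))
    (∫ x in s..b, Complex.exp (Complex.I * (ψ x : ℝ)))
  have e : 10 / σ = 4 / σ + 2 / σ + 4 / σ := by ring
  rw [e]
  linarith

lemma lintegral_even (h : ℝ → ℝ≥0∞) :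
    ∫⁻ s, h |s| = 2 * ∫⁻ s in Set.Ioi (0 : ℝ), h s := by
  rw [← lintegral_add_compl (fun s => h |s|) (measurableSet_Ioi (a := (0 : ℝ))), two_mul]
  congr 1
  · apply setLIntegral_congr_fun measurableSet_Ioi
    intro s hs
    simp only [abs_of_pos (Set.mem_Ioi.1 hs)]
  · rw [Set.compl_Ioi]
    have e : ∫⁻ s in Set.Ioi (0 : ℝ), h s = ∫⁻ s in Set.Ici (0 : ℝ), h s :=
      setLIntegral_congr Ioi_ae_eq_Ici
    rw [e, ← lintegral_indicator measurableSet_Iic, ← lintegral_indicator measurableSet_Ici,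
      ← lintegral_neg_eq_self]
    congr 1
    ext s
    by_cases hs : 0 ≤ s
    · rw [Set.indicator_of_mem (by simpa using hs), Set.indicator_of_mem (by simpa using hs),
        abs_neg, abs_of_nonneg hs]
    · rw [Set.indicator_of_notMem (by simpa using hs), Set.indicator_of_notMem (by simpa using hs)]

def kern (t : ℝ) : ℝ≥0∞ := ENNReal.ofReal (|t| ^ (-(1 / 2) : ℝ))

lemma kern_meas : Measurable kern := by
  unfold kern
  fun_prop

lemma kern_near (R : ℝ) (hR : 0 < R) :
    ∫⁻ s, (if |s| < R then kern s else 0) ≤ ENNReal.ofReal (4 * R ^ ((1 : ℝ) / 2)) := by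
  have := lintegral_even (fun s => if s < R then ENNReal.ofReal (s ^ (-(1 / 2) : ℝ)) else 0)
  unfold kern
  rw [this]
  have h1 : ∫⁻ s in Set.Ioi (0 : ℝ), (if s < R then ENNReal.ofReal (s ^ (-(1 / 2) : ℝ)) else 0)
      ≤ ∫⁻ s in Set.Ioc (0 : ℝ) R, ENNReal.ofReal (s ^ (-(1 / 2) : ℝ)) := by
    rw [← lintegral_indicator measurableSet_Ioi, ← lintegral_indicator measurableSet_Ioc]
    apply lintegral_mono
    intro s
    by_cases h0 : 0 < s
    · by_cases h2 : s < R
      · rw [Set.indicator_of_mem (by exact h0), Set.indicator_of_mem (by exact ⟨h0, h2.le⟩), if_pos h2]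
      · rw [Set.indicator_of_mem (by exact h0), if_neg h2]; exact bot_le
    · rw [Set.indicator_of_notMem (by exact h0)]; exact bot_le
  refine (mul_le_mul_right h1 2).trans ?_
  have hi : IntervalIntegrable (fun s : ℝ => s ^ (-(1 / 2) : ℝ)) volume 0 R :=
    intervalIntegral.intervalIntegrable_rpow' (by norm_num)
  rw [← ofReal_integral_eq_lintegral_ofReal ((intervalIntegrable_iff_integrableOn_Ioc_of_le hR.le).1 hi)
    (by
      filter_upwards [ae_restrict_mem measurableSet_Ioc] with s hs
      exact Real.rpow_nonneg hs.1.le _), ← intervalIntegral.integral_of_le hR.le,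
    integral_rpow (Or.inl (by norm_num))]
  have e2 : (2 : ℝ≥0∞) = ENNReal.ofReal 2 := by simp
  rw [e2, ← ENNReal.ofReal_mul (by norm_num)]
  apply ENNReal.ofReal_le_ofReal
  rw [Real.zero_rpow (by norm_num)]
  norm_num
  apply le_of_eq
  ring

lemma kern_far (R : ℝ) (hR : 0 < R) :
    ∫⁻ s, (if R ≤ |s| then kern s else 0) ^ (4 : ℝ) ≤ ENNReal.ofReal (2 / R) := by
  have := lintegral_even (fun s => (if R ≤ s then ENNReal.ofReal (s ^ (-(1 / 2) : ℝ)) else 0) ^ (4 : ℝ))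
  unfold kern
  rw [this]
  have h1 : ∫⁻ s in Set.Ioi (0 : ℝ), (if R ≤ s then ENNReal.ofReal (s ^ (-(1 / 2) : ℝ)) else 0) ^ (4 : ℝ)
      ≤ ∫⁻ s in Set.Ici R, ENNReal.ofReal (s ^ (-2 : ℝ)) := by
    rw [← lintegral_indicator measurableSet_Ioi, ← lintegral_indicator measurableSet_Ici]
    apply lintegral_mono
    intro s
    by_cases h0 : 0 < s
    · by_cases h2 : R ≤ s
      · rw [Set.indicator_of_mem (by exact h0), Set.indicator_of_mem (by exact h2), if_pos h2,
          ENNReal.ofReal_rpow_of_nonneg (Real.rpow_nonneg h0.le _) (by norm_num), ← Real.rpow_mul h0.le]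
        norm_num
      · rw [Set.indicator_of_mem (by exact h0), if_neg h2, ENNReal.zero_rpow_of_pos (by norm_num)]
        exact bot_le
    · rw [Set.indicator_of_notMem (by exact h0)]; exact bot_le
  refine (mul_le_mul_right h1 2).trans ?_
  rw [setLIntegral_congr Ioi_ae_eq_Ici.symm, ← ofReal_integral_eq_lintegral_ofReal
    (integrableOn_Ioi_rpow_of_lt (by norm_num) hR)
    (by
      filter_upwards [ae_restrict_mem measurableSet_Ioi] with s hs
      exact Real.rpow_nonneg (hR.le.trans (le_of_lt hs)) _),
    integral_Ioi_rpow_of_lt (by norm_num) hR]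
  have e2 : (2 : ℝ≥0∞) = ENNReal.ofReal 2 := by simp
  rw [e2, ← ENNReal.ofReal_mul (by norm_num)]
  apply ENNReal.ofReal_le_ofReal
  norm_num
  rw [Real.rpow_neg_one]
  rfl

lemma hls_inner (g : ℝ → ℝ≥0∞) (hg : Measurable g) (N : ℝ) (hN : 0 < N)
    (hgN : ∫⁻ s, g s ^ (4 / 3 : ℝ) ≤ ENNReal.ofReal N) (c : ℝ) (hc : 0 < c) (t : ℝ) :
    ∫⁻ s, (if g s ≤ ENNReal.ofReal c then g s else 0) * kern (t - s) ≤
      ENNReal.ofReal (6 * c ^ (1 / 3 : ℝ) * N ^ (1 / 2 : ℝ)) := by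
  set R : ℝ := N * c ^ (-(4 / 3) : ℝ) with hR
  have hRp : 0 < R := by positivity
  set n : ℝ → ℝ≥0∞ := fun s => if |s| < R then kern s else 0 with hn
  set f : ℝ → ℝ≥0∞ := fun s => if R ≤ |s| then kern s else 0 with hf
  have hnm : Measurable n := Measurable.ite (measurableSet_lt (by fun_prop) (by fun_prop)) kern_meas
    measurable_const
  have hfm : Measurable f := Measurable.ite (measurableSet_le (by fun_prop) (by fun_prop)) kern_meas
    measurable_const
  have h1 : ∀ s, (if g s ≤ ENNReal.ofReal c then g s else 0) * kern (t - s) ≤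
      ENNReal.ofReal c * n (t - s) + (g * fun s => f (t - s)) s := by
    intro s
    simp only [Pi.mul_apply, hn, hf]
    by_cases hs : |t - s| < R
    · rw [if_pos hs, if_neg (not_le.2 hs), mul_zero, add_zero]
      apply mul_le_mul_left
      split_ifs with h
      · exact h
      · exact bot_le
    · rw [if_neg hs, if_pos (not_lt.1 hs), mul_zero, zero_add]
      apply mul_le_mul_left
      split_ifs with h
      · exact le_rfl
      · exact bot_le
  refine (lintegral_mono h1).trans ?_
  rw [lintegral_add_left (by fun_prop), lintegral_const_mul _ (by fun_prop),
    lintegral_sub_left_eq_self n t]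
  have h2 := ENNReal.lintegral_mul_le_Lp_mul_Lq volume (p := 4 / 3) (q := 4)
    ⟨by norm_num, by norm_num, by norm_num⟩ hg.aemeasurable (g := fun s => f (t - s)) (by fun_prop)
  rw [lintegral_sub_left_eq_self (fun s => f s ^ (4 : ℝ)) t] at h2
  have h3 : (∫⁻ s, g s ^ (4 / 3 : ℝ)) ^ (1 / (4 / 3) : ℝ) * (∫⁻ s, f s ^ (4 : ℝ)) ^ (1 / 4 : ℝ) ≤
      (ENNReal.ofReal N) ^ (1 / (4 / 3) : ℝ) * (ENNReal.ofReal (2 / R)) ^ (1 / 4 : ℝ) := by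
    gcongr
    exact kern_far R hRp
  have h4 : ENNReal.ofReal c * ∫⁻ s, n s ≤ ENNReal.ofReal c * ENNReal.ofReal (4 * R ^ ((1 : ℝ) / 2)) := by
    gcongr
    exact kern_near R hRp
  refine (add_le_add h4 (h2.trans h3)).trans ?_
  rw [ENNReal.ofReal_rpow_of_pos hN, ENNReal.ofReal_rpow_of_pos (by positivity),
    ← ENNReal.ofReal_mul hc.le, ← ENNReal.ofReal_mul (by positivity),
    ← ENNReal.ofReal_add (by positivity) (by positivity)]
  apply ENNReal.ofReal_le_ofReal
  have e1 : c * (4 * R ^ ((1 : ℝ) / 2)) = 4 * c ^ (1 / 3 : ℝ) * N ^ (1 / 2 : ℝ) := by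
    rw [hR, Real.mul_rpow hN.le (by positivity), ← Real.rpow_mul hc.le]
    have : c ^ (1 / 3 : ℝ) = c * c ^ (-(4 / 3) * (1 / 2) : ℝ) := by
      nth_rewrite 2 [← Real.rpow_one c]
      rw [← Real.rpow_add hc]
      norm_num
    rw [this]
    ring
  have e2 : N ^ (1 / (4 / 3) : ℝ) * (2 / R) ^ (1 / 4 : ℝ) =
      2 ^ (1 / 4 : ℝ) * (c ^ (1 / 3 : ℝ) * N ^ (1 / 2 : ℝ)) := by
    rw [hR, Real.div_rpow (by norm_num) (by positivity), Real.mul_rpow hN.le (by positivity),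
      ← Real.rpow_mul hc.le]
    have a1 : N ^ (1 / (4 / 3) : ℝ) = N ^ (1 / 2 : ℝ) * N ^ (1 / 4 : ℝ) := by
      rw [← Real.rpow_add hN]; norm_num
    have a2 : c ^ (-(4 / 3) * (1 / 4) : ℝ) = (c ^ (1 / 3 : ℝ))⁻¹ := by
      rw [← Real.rpow_neg hc.le]; norm_num
    rw [a1, a2]
    field_simp
  have e3 : (2 : ℝ) ^ (1 / 4 : ℝ) ≤ 2 := by
    nth_rewrite 2 [← Real.rpow_one 2]
    exact Real.rpow_le_rpow_of_exponent_le (by norm_num) (by norm_num)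
  rw [e1, e2]
  have : 0 ≤ c ^ (1 / 3 : ℝ) * N ^ (1 / 2 : ℝ) := by positivity
  nlinarith

lemma kern_neg (t : ℝ) : kern (-t) = kern t := by simp [kern]

lemma hls_diag (g : ℝ → ℝ≥0∞) (hg : Measurable g) (hfin : ∀ s, g s ≠ ∞)
    (hN : ∫⁻ s, g s ^ (4 / 3 : ℝ) ≠ ∞) :
    ∫⁻ t, ∫⁻ s, g t * g s * kern (t - s) ≤ 12 * (∫⁻ s, g s ^ (4 / 3 : ℝ)) ^ (3 / 2 : ℝ) := by
  by_cases h0 : ∫⁻ s, g s ^ (4 / 3 : ℝ) = 0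
  · rw [lintegral_eq_zero_iff (by fun_prop)] at h0
    have : ∀ t, ∫⁻ s, g t * g s * kern (t - s) = 0 := by
      intro t
      rw [lintegral_eq_zero_iff (by have := kern_meas; fun_prop)]
      filter_upwards [h0] with s hs
      have : g s = 0 := by
        simpa [ENNReal.rpow_eq_zero_iff_of_pos (show (0 : ℝ) < 4 / 3 by norm_num)] using hs
      simp [this]
    simp [this]
  set N := (∫⁻ s, g s ^ (4 / 3 : ℝ)).toReal with hNdef
  have hNN : ∫⁻ s, g s ^ (4 / 3 : ℝ) = ENNReal.ofReal N := (ENNReal.ofReal_toReal hN).symm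
  have hNp : 0 < N := ENNReal.toReal_pos h0 hN
  have hk := kern_meas
  -- the half of the region where g s ≤ g t
  set A : ℝ → ℝ → ℝ≥0∞ := fun t s => g t * ((if g s ≤ g t then g s else 0) * kern (t - s)) with hA
  have hAm : Measurable (Function.uncurry A) := by
    have : Measurable (fun p : ℝ × ℝ => if g p.2 ≤ g p.1 then g p.2 else 0) :=
      Measurable.ite (measurableSet_le (by fun_prop) (by fun_prop)) (by fun_prop) measurable_const
    simp only [hA, Function.uncurry_def]
    fun_prop
  have hhalf : ∫⁻ t, ∫⁻ s, A t s ≤ 6 * (ENNReal.ofReal N) ^ (3 / 2 : ℝ) := by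
    have hin : ∀ t, ∫⁻ s, A t s ≤ ENNReal.ofReal (6 * N ^ (1 / 2 : ℝ)) * g t ^ (4 / 3 : ℝ) := by
      intro t
      by_cases ht : g t = 0
      · simp [hA, ht]
      set c := (g t).toReal with hcdef
      have hc : g t = ENNReal.ofReal c := (ENNReal.ofReal_toReal (hfin t)).symm
      have hcp : 0 < c := ENNReal.toReal_pos ht (hfin t)
      have h := hls_inner g hg N hNp hNN.le c hcp t
      have hm : Measurable (fun s => (if g s ≤ g t then g s else 0) * kern (t - s)) :=
        (Measurable.ite (measurableSet_le (by fun_prop) (by fun_prop)) (by fun_prop)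
          measurable_const).mul (by fun_prop)
      simp only [hA]
      rw [lintegral_const_mul _ hm, hc]
      refine (mul_le_mul_right h _).trans ?_
      rw [ENNReal.ofReal_rpow_of_pos hcp, ← ENNReal.ofReal_mul hcp.le,
        ← ENNReal.ofReal_mul (by positivity)]
      apply ENNReal.ofReal_le_ofReal
      have : c ^ (4 / 3 : ℝ) = c * c ^ (1 / 3 : ℝ) := by
        nth_rewrite 2 [← Real.rpow_one c]
        rw [← Real.rpow_add hcp]
        norm_num
      rw [this]
      apply le_of_eq
      ring
    refine (lintegral_mono hin).trans ?_
    rw [lintegral_const_mul _ (by fun_prop), hNN, ENNReal.ofReal_rpow_of_pos hNp,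
      ← ENNReal.ofReal_mul (by positivity)]
    have e6 : (6 : ℝ≥0∞) = ENNReal.ofReal 6 := by simp
    rw [e6, ← ENNReal.ofReal_mul (by positivity)]
    apply ENNReal.ofReal_le_ofReal
    have : N ^ (3 / 2 : ℝ) = N ^ (1 / 2 : ℝ) * N := by
      nth_rewrite 3 [← Real.rpow_one N]
      rw [← Real.rpow_add hNp]
      norm_num
    rw [this]
    apply le_of_eq
    ring
  have hle : ∀ t s, g t * g s * kern (t - s) ≤ A t s + A s t := by
    intro t s
    rcases le_total (g s) (g t) with h | h
    · refine le_trans (le_of_eq ?_) le_self_add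
      simp only [hA, if_pos h]
      ring
    · refine le_trans (le_of_eq ?_) le_add_self
      simp only [hA, if_pos h]
      rw [← kern_neg (s - t), neg_sub]
      ring
  calc ∫⁻ t, ∫⁻ s, g t * g s * kern (t - s)
      ≤ ∫⁻ t, ∫⁻ s, (A t s + A s t) := lintegral_mono fun t => lintegral_mono fun s => hle t s
    _ = ∫⁻ t, ((∫⁻ s, A t s) + ∫⁻ s, A s t) := by
        congr 1
        ext t
        exact lintegral_add_left (hAm.comp (measurable_const.prodMk measurable_id)) _
    _ = (∫⁻ t, ∫⁻ s, A t s) + ∫⁻ t, ∫⁻ s, A s t :=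
        lintegral_add_left hAm.lintegral_prod_right' _
    _ = (∫⁻ t, ∫⁻ s, A t s) + ∫⁻ t, ∫⁻ s, A t s := by
        congr 1
        exact lintegral_lintegral_swap (f := fun t s => A s t) (hAm.comp measurable_swap).aemeasurable
    _ ≤ 6 * (ENNReal.ofReal N) ^ (3 / 2 : ℝ) + 6 * (ENNReal.ofReal N) ^ (3 / 2 : ℝ) :=
        add_le_add hhalf hhalf
    _ = _ := by rw [hNN, ← add_mul]; norm_num

lemma norm_expI (y : ℝ) : ‖Complex.exp (Complex.I * (y : ℝ))‖ = 1 := by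
  rw [mul_comm]
  exact Complex.norm_exp_ofReal_mul_I y

lemma conj_expI (y : ℝ) : (starRingEnd ℂ) (Complex.exp (Complex.I * (y : ℝ))) =
    Complex.exp (Complex.I * ((-y : ℝ) : ℂ)) := by
  rw [← Complex.exp_conj]
  congr 1
  simp

/-- TT* bound for the dual operator. -/
lemma dual_bound (ν τ : Measure ℝ) [IsFiniteMeasure ν] [IsFiniteMeasure τ] (hτ : τ ≤ volume)
    (θ : ℝ → ℝ → ℝ) (hθ : Measurable (Function.uncurry θ)) (B : ℝ) (hB : 0 ≤ B)
    (hK : ∀ t s, t ≠ s → ‖∫ ξ, Complex.exp (Complex.I * ((θ t ξ - θ s ξ : ℝ) : ℂ)) ∂ν‖ ≤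
      B * |t - s| ^ (-(1 / 2) : ℝ))
    (w : ℝ → ℂ) (hw : Measurable w) (M : ℝ) (hM : ∀ t, ‖w t‖ ≤ M) :
    ∫⁻ ξ, ‖∫ t, w t * Complex.exp (Complex.I * (θ t ξ : ℝ)) ∂τ‖ₑ ^ 2 ∂ν ≤
      ∫⁻ t, ∫⁻ s, ENNReal.ofReal B * (‖w t‖ₑ * ‖w s‖ₑ * kern (t - s)) ∂τ ∂τ := by
  have hM0 : 0 ≤ M := (norm_nonneg _).trans (hM 0)
  set W : ℝ → ℂ := fun ξ => ∫ t, w t * Complex.exp (Complex.I * (θ t ξ : ℝ)) ∂τ with hW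
  set E : ℝ → ℝ → ℂ := fun t ξ => w t * Complex.exp (Complex.I * (θ t ξ : ℝ)) with hE
  have hEm : Measurable (Function.uncurry E) := by
    have h1 : Measurable (fun p : ℝ × ℝ => θ p.1 p.2) := hθ
    simp only [hE, Function.uncurry_def]
    fun_prop
  have hEb : ∀ t ξ, ‖E t ξ‖ ≤ M := by
    intro t ξ
    simp only [hE, norm_mul, norm_expI, mul_one, hM]
  have hWm : StronglyMeasurable W := by
    have : StronglyMeasurable (Function.uncurry fun ξ t => E t ξ) :=
      (hEm.comp measurable_swap).stronglyMeasurable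
    exact this.integral_prod_right
  have hWb : ∀ ξ, ‖W ξ‖ ≤ M * τ.real Set.univ := by
    intro ξ
    exact norm_integral_le_of_norm_le_const (ae_of_all _ fun t => hEb t ξ)
  -- the L² norm as an integral
  have h1 : ∫⁻ ξ, ‖W ξ‖ₑ ^ 2 ∂ν = ‖∫ ξ, W ξ * (starRingEnd ℂ) (W ξ) ∂ν‖ₑ := by
    have e1 : ∀ ξ, W ξ * (starRingEnd ℂ) (W ξ) = ((‖W ξ‖ ^ 2 : ℝ) : ℂ) := by
      intro ξ
      rw [Complex.mul_conj, Complex.normSq_eq_norm_sq]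
    simp_rw [e1]
    have e2 : ∫ ξ, ((‖W ξ‖ ^ 2 : ℝ) : ℂ) ∂ν = ((∫ ξ, ‖W ξ‖ ^ 2 ∂ν : ℝ) : ℂ) := integral_ofReal
    have hnn : 0 ≤ ∫ ξ, ‖W ξ‖ ^ 2 ∂ν := integral_nonneg fun _ => by positivity
    rw [e2, ← ofReal_norm, Complex.norm_real, Real.norm_of_nonneg hnn,
      ofReal_integral_eq_lintegral_ofReal]
    · congr 1
      ext ξ
      rw [ENNReal.ofReal_pow (norm_nonneg _), ofReal_norm]
    · apply Integrable.of_bound (C := (M * τ.real Set.univ) ^ 2)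
        ((hWm.norm.pow 2).aestronglyMeasurable)
      apply ae_of_all
      intro ξ
      change ‖‖W ξ‖ ^ 2‖ ≤ _
      rw [Real.norm_of_nonneg (by positivity)]
      gcongr
      exact hWb ξ
    · exact ae_of_all _ fun _ => by positivity
  have h2 : ∫ ξ, W ξ * (starRingEnd ℂ) (W ξ) ∂ν =
      ∫ t, ∫ s, ∫ ξ, E t ξ * (starRingEnd ℂ) (E s ξ) ∂ν ∂τ ∂τ := by
    have e1 : ∀ ξ, W ξ * (starRingEnd ℂ) (W ξ) = ∫ t, E t ξ * (starRingEnd ℂ) (W ξ) ∂τ := by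
      intro ξ
      rw [integral_mul_const]
    have e2 : ∀ ξ t, E t ξ * (starRingEnd ℂ) (W ξ) = ∫ s, E t ξ * (starRingEnd ℂ) (E s ξ) ∂τ := by
      intro ξ t
      rw [integral_const_mul, integral_conj]
    simp_rw [e1]
    rw [integral_integral_swap]
    · congr 1
      ext t
      simp_rw [e2]
      rw [integral_integral_swap]
      apply Integrable.of_bound (C := M * M)
      · apply Measurable.aestronglyMeasurable
        have a1 : Measurable (fun p : ℝ × ℝ => E t p.1) :=
          hEm.comp (measurable_const.prodMk measurable_fst)
        have a2 : Measurable (fun p : ℝ × ℝ => E p.2 p.1) := hEm.comp measurable_swap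
        exact a1.mul (Complex.continuous_conj.measurable.comp a2)
      · apply ae_of_all
        intro p
        simp only [Function.uncurry_def, norm_mul, RCLike.norm_conj]
        exact mul_le_mul (hEb _ _) (hEb _ _) (norm_nonneg _) hM0
    · apply Integrable.of_bound (C := M * (M * τ.real Set.univ))
      · apply Measurable.aestronglyMeasurable
        have a1 : Measurable (fun p : ℝ × ℝ => W p.1) := hWm.measurable.comp measurable_fst
        have a2 : Measurable (fun p : ℝ × ℝ => E p.2 p.1) := hEm.comp measurable_swap
        exact a2.mul (Complex.continuous_conj.measurable.comp a1)
      · apply ae_of_all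
        intro p
        simp only [Function.uncurry_def, norm_mul, RCLike.norm_conj]
        exact mul_le_mul (hEb _ _) (hWb _) (norm_nonneg _) hM0
  rw [h1, h2]
  refine (enorm_integral_le_lintegral_enorm _).trans (lintegral_mono fun t => ?_)
  refine (enorm_integral_le_lintegral_enorm _).trans (lintegral_mono_ae ?_)
  have hne : ∀ᵐ s ∂τ, t ≠ s := by
    apply ae_mono hτ
    have : ∀ᵐ s ∂(volume : Measure ℝ), s ≠ t := by
      simp [ae_iff]
    filter_upwards [this] with s hs using hs.symm
  filter_upwards [hne] with s hs
  have e3 : ∀ ξ, E t ξ * (starRingEnd ℂ) (E s ξ) =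
      (w t * (starRingEnd ℂ) (w s)) * Complex.exp (Complex.I * ((θ t ξ - θ s ξ : ℝ) : ℂ)) := by
    intro ξ
    simp only [hE, map_mul, conj_expI]
    rw [show ((θ t ξ - θ s ξ : ℝ) : ℂ) = (θ t ξ : ℂ) + ((-θ s ξ : ℝ) : ℂ) by push_cast; ring,
      mul_add, Complex.exp_add]
    ring
  simp_rw [e3]
  rw [integral_const_mul, enorm_mul, enorm_mul, RCLike.enorm_conj]
  have h4 : ‖∫ ξ, Complex.exp (Complex.I * ((θ t ξ - θ s ξ : ℝ) : ℂ)) ∂ν‖ₑ ≤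
      ENNReal.ofReal B * kern (t - s) := by
    rw [kern, ← ENNReal.ofReal_mul hB, ← ofReal_norm]
    exact ENNReal.ofReal_le_ofReal (hK t s hs)
  refine (mul_le_mul_right h4 _).trans (le_of_eq ?_)
  ring

lemma l4_bound_trunc (ν : Measure ℝ) [IsFiniteMeasure ν]
    (θ : ℝ → ℝ → ℝ) (hθ : Measurable (Function.uncurry θ)) (B : ℝ) (hB : 0 ≤ B)
    (hK : ∀ t s, t ≠ s → ‖∫ ξ, Complex.exp (Complex.I * ((θ t ξ - θ s ξ : ℝ) : ℂ)) ∂ν‖ ≤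
      B * |t - s| ^ (-(1 / 2) : ℝ))
    (F : ℝ → ℂ) (hF : Measurable F) (M : ℝ) (hM : ∀ t, ‖F t‖ ≤ M) (T : ℝ) :
    ∫⁻ t in Set.Icc (-T) T, ‖∫ ξ, F ξ * Complex.exp (Complex.I * (θ t ξ : ℝ)) ∂ν‖ₑ ^ 4 ≤
      (12 * ENNReal.ofReal B * ∫⁻ ξ, ‖F ξ‖ₑ ^ 2 ∂ν) ^ 2 := by
  have hM0 : 0 ≤ M := (norm_nonneg _).trans (hM 0)
  set τ : Measure ℝ := volume.restrict (Set.Icc (-T) T) with hτ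
  have : IsFiniteMeasure τ := by rw [hτ]; infer_instance
  set E : ℝ → ℝ → ℂ := fun t ξ => F ξ * Complex.exp (Complex.I * (θ t ξ : ℝ)) with hE
  have hθ' : Measurable (fun p : ℝ × ℝ => θ p.1 p.2) := hθ
  have hEm : Measurable (Function.uncurry E) := by
    simp only [hE, Function.uncurry_def]
    fun_prop
  set U : ℝ → ℂ := fun t => ∫ ξ, E t ξ ∂ν with hU
  have hUm : Measurable U := hEm.stronglyMeasurable.integral_prod_right.measurable
  have hUb : ∀ t, ‖U t‖ ≤ M * ν.real Set.univ := by
    intro t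
    apply norm_integral_le_of_norm_le_const (ae_of_all _ fun ξ => _)
    intro ξ
    simp only [hE, norm_mul, norm_expI, mul_one, hM]
  set M' := M * ν.real Set.univ with hM'
  have hM'0 : 0 ≤ M' := (norm_nonneg _).trans (hUb 0)
  set w : ℝ → ℂ := fun t => ((‖U t‖ ^ 2 : ℝ) : ℂ) * (starRingEnd ℂ) (U t) with hw
  have hwn : ∀ t, ‖w t‖ = ‖U t‖ ^ 3 := by
    intro t
    simp only [hw, norm_mul, RCLike.norm_conj, Complex.norm_real]
    rw [Real.norm_of_nonneg (by positivity)]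
    ring
  have hwm : Measurable w := by
    have : Measurable (fun t => (starRingEnd ℂ) (U t)) := Complex.continuous_conj.measurable.comp hUm
    simp only [hw]
    fun_prop
  have hwb : ∀ t, ‖w t‖ ≤ M' ^ 3 := by
    intro t
    rw [hwn]
    gcongr
    exact hUb t
  set Y := ∫⁻ t, ‖U t‖ₑ ^ 4 ∂τ with hY
  set Φ := ∫⁻ ξ, ‖F ξ‖ₑ ^ 2 ∂ν with hΦ
  have hYfin : Y ≠ ∞ := by
    have : Y ≤ ∫⁻ t, ENNReal.ofReal (M' ^ 4) ∂τ := by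
      apply lintegral_mono
      intro t
      dsimp only
      rw [← ofReal_norm, ← ENNReal.ofReal_pow (norm_nonneg _)]
      apply ENNReal.ofReal_le_ofReal
      gcongr
      exact hUb t
    refine ne_top_of_le_ne_top ?_ this
    rw [lintegral_const]
    exact ENNReal.mul_ne_top ENNReal.ofReal_ne_top (measure_ne_top _ _)
  set W : ℝ → ℂ := fun ξ => ∫ t, w t * Complex.exp (Complex.I * (θ t ξ : ℝ)) ∂τ with hW
  have hWm : Measurable W := by
    have : StronglyMeasurable (Function.uncurry fun ξ t => w t * Complex.exp (Complex.I * (θ t ξ : ℝ))) := by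
      apply Measurable.stronglyMeasurable
      have : Measurable (fun p : ℝ × ℝ => θ p.2 p.1) := hθ.comp measurable_swap
      simp only [Function.uncurry_def]
      fun_prop
    exact this.integral_prod_right.measurable
  -- duality
  have d1 : Y = ‖∫ t, w t * U t ∂τ‖ₑ := by
    have e1 : ∀ t, w t * U t = ((‖U t‖ ^ 4 : ℝ) : ℂ) := by
      intro t
      simp only [hw]
      rw [mul_assoc, mul_comm ((starRingEnd ℂ) (U t)), Complex.mul_conj, Complex.normSq_eq_norm_sq]
      push_cast
      ring
    simp_rw [e1]
    have e2 : ∫ t, ((‖U t‖ ^ 4 : ℝ) : ℂ) ∂τ = ((∫ t, ‖U t‖ ^ 4 ∂τ : ℝ) : ℂ) := integral_ofReal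
    have hnn : 0 ≤ ∫ t, ‖U t‖ ^ 4 ∂τ := integral_nonneg fun _ => by positivity
    rw [e2, ← ofReal_norm, Complex.norm_real, Real.norm_of_nonneg hnn,
      ofReal_integral_eq_lintegral_ofReal]
    · rw [hY]
      congr 1
      ext ξ
      rw [ENNReal.ofReal_pow (norm_nonneg _), ofReal_norm]
    · apply Integrable.of_bound (C := M' ^ 4) (by fun_prop)
      apply ae_of_all
      intro t
      rw [Real.norm_of_nonneg (by positivity)]
      gcongr
      exact hUb t
    · exact ae_of_all _ fun _ => by positivity
  have d2 : ∫ t, w t * U t ∂τ = ∫ ξ, F ξ * W ξ ∂ν := by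
    have e1 : ∀ t, w t * U t = ∫ ξ, w t * E t ξ ∂ν := by
      intro t
      rw [integral_const_mul]
    have e2 : ∀ ξ, F ξ * W ξ = ∫ t, w t * E t ξ ∂τ := by
      intro ξ
      rw [hW, ← integral_const_mul]
      congr 1
      ext t
      simp only [hE]
      ring
    simp_rw [e1, e2]
    rw [integral_integral_swap]
    refine Integrable.of_bound (C := M' ^ 3 * M) ?_ ?_
    · apply Measurable.aestronglyMeasurable
      exact (hwm.comp measurable_fst).mul hEm
    · apply ae_of_all
      intro p
      simp only [Function.uncurry_def, hE, norm_mul, norm_expI, mul_one]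
      exact mul_le_mul (hwb _) (hM _) (norm_nonneg _) (by positivity)
  have d3 : Y ≤ Φ ^ (1 / 2 : ℝ) * (∫⁻ ξ, ‖W ξ‖ₑ ^ 2 ∂ν) ^ (1 / 2 : ℝ) := by
    rw [d1, d2]
    refine (enorm_integral_le_lintegral_enorm _).trans ?_
    have h := ENNReal.lintegral_mul_le_Lp_mul_Lq ν (p := 2) (q := 2)
      ⟨by norm_num, by norm_num, by norm_num⟩ (f := fun ξ => ‖F ξ‖ₑ) (g := fun ξ => ‖W ξ‖ₑ)
      (by fun_prop) (by fun_prop)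
    simp only [ENNReal.rpow_ofNat, Pi.mul_apply, ← enorm_mul] at h
    exact h
  have d4 : ∫⁻ ξ, ‖W ξ‖ₑ ^ 2 ∂ν ≤ ENNReal.ofReal B * (12 * Y ^ (3 / 2 : ℝ)) := by
    refine (dual_bound ν τ Measure.restrict_le_self θ hθ B hB hK w hwm _ hwb).trans ?_
    set g : ℝ → ℝ≥0∞ := (Set.Icc (-T) T).indicator (fun t => ‖w t‖ₑ) with hg
    have hgm : Measurable g := Measurable.indicator (by fun_prop) measurableSet_Icc
    have hg43 : ∫⁻ s, g s ^ (4 / 3 : ℝ) = Y := by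
      rw [hY, hτ, ← lintegral_indicator measurableSet_Icc]
      congr 1
      ext t
      by_cases ht : t ∈ Set.Icc (-T) T
      · simp only [hg, Set.indicator_of_mem ht]
        rw [← ofReal_norm (w t), hwn, ENNReal.ofReal_pow (norm_nonneg _), ofReal_norm,
          ← ENNReal.rpow_natCast, ← ENNReal.rpow_mul, ← ENNReal.rpow_natCast]
        norm_num
      · simp only [hg, Set.indicator_of_notMem ht]
        norm_num
    have hh := hls_diag g hgm (by
      intro s
      simp only [hg, Set.indicator]
      split_ifs <;> simp) (by rw [hg43]; exact hYfin)
    rw [hg43] at hh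
    have hk := kern_meas
    have e1 : ∀ t, ∫⁻ s, ENNReal.ofReal B * (‖w t‖ₑ * ‖w s‖ₑ * kern (t - s)) ∂τ =
        ENNReal.ofReal B * ∫⁻ s, ‖w t‖ₑ * g s * kern (t - s) := by
      intro t
      rw [lintegral_const_mul _ (by fun_prop), hτ, ← lintegral_indicator measurableSet_Icc]
      congr 2
      ext s
      by_cases hs : s ∈ Set.Icc (-T) T
      · simp only [hg, Set.indicator_of_mem hs]
      · simp only [hg, Set.indicator_of_notMem hs]
        simp
    simp_rw [e1]
    rw [lintegral_const_mul]
    · gcongr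
      refine le_trans (le_of_eq ?_) hh
      rw [hτ, ← lintegral_indicator measurableSet_Icc]
      congr 1
      ext t
      by_cases hs : t ∈ Set.Icc (-T) T
      · simp only [hg, Set.indicator_of_mem hs]
      · simp only [hg, Set.indicator_of_notMem hs]
        simp
    · apply Measurable.lintegral_prod_right'
        (f := fun p : ℝ × ℝ => ‖w p.1‖ₑ * g p.2 * kern (p.1 - p.2))
      fun_prop
  by_cases hY0 : Y = 0
  · rw [hY0]; exact bot_le
  have d5 : Y ^ (2 : ℝ) ≤ (12 * ENNReal.ofReal B * Φ) * Y ^ (3 / 2 : ℝ) := by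
    have : Y ≤ ((12 * ENNReal.ofReal B * Φ) * Y ^ (3 / 2 : ℝ)) ^ (1 / 2 : ℝ) := by
      refine d3.trans ?_
      rw [← ENNReal.mul_rpow_of_nonneg _ _ (by norm_num)]
      refine ENNReal.rpow_le_rpow ?_ (by norm_num)
      refine (mul_le_mul_right d4 _).trans (le_of_eq ?_)
      ring
    calc Y ^ (2 : ℝ) ≤ (((12 * ENNReal.ofReal B * Φ) * Y ^ (3 / 2 : ℝ)) ^ (1 / 2 : ℝ)) ^ (2 : ℝ) := by
          gcongr
      _ = _ := by rw [← ENNReal.rpow_mul]; norm_num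
  have d6 : Y ^ (1 / 2 : ℝ) ≤ 12 * ENNReal.ofReal B * Φ := by
    have e : Y ^ (2 : ℝ) = Y ^ (1 / 2 : ℝ) * Y ^ (3 / 2 : ℝ) := by
      rw [← ENNReal.rpow_add _ _ hY0 hYfin]; norm_num
    rw [e] at d5
    refine (ENNReal.mul_le_mul_iff_left ?_ ?_).1 d5
    · simp [hY0, hYfin]
    · exact ENNReal.rpow_ne_top_of_nonneg (by norm_num) hYfin
  calc Y = (Y ^ (1 / 2 : ℝ)) ^ 2 := by
        rw [← ENNReal.rpow_natCast, ← ENNReal.rpow_mul]; norm_num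
    _ ≤ _ := by gcongr

lemma l4_bound (ν : Measure ℝ) [IsFiniteMeasure ν]
    (θ : ℝ → ℝ → ℝ) (hθ : Measurable (Function.uncurry θ)) (B : ℝ) (hB : 0 ≤ B)
    (hK : ∀ t s, t ≠ s → ‖∫ ξ, Complex.exp (Complex.I * ((θ t ξ - θ s ξ : ℝ) : ℂ)) ∂ν‖ ≤
      B * |t - s| ^ (-(1 / 2) : ℝ))
    (F : ℝ → ℂ) (hF : Measurable F) (M : ℝ) (hM : ∀ t, ‖F t‖ ≤ M) :
    ∫⁻ t, ‖∫ ξ, F ξ * Complex.exp (Complex.I * (θ t ξ : ℝ)) ∂ν‖ₑ ^ 4 ≤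
      (12 * ENNReal.ofReal B * ∫⁻ ξ, ‖F ξ‖ₑ ^ 2 ∂ν) ^ 2 := by
  have hU : (⋃ n : ℕ, Set.Icc (-(n : ℝ)) n) = Set.univ := by
    rw [Set.eq_univ_iff_forall]
    intro x
    obtain ⟨n, hn⟩ := exists_nat_ge |x|
    exact Set.mem_iUnion.2 ⟨n, abs_le.1 hn⟩
  rw [← setLIntegral_univ, ← hU, setLIntegral_iUnion_of_directed]
  · exact iSup_le fun n => l4_bound_trunc ν θ hθ B hB hK F hF M hM n
  · apply Monotone.directed_le
    intro m n h
    have : (m : ℝ) ≤ n := by exact_mod_cast h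
    exact Set.Icc_subset_Icc (neg_le_neg this) this

def wave (ν : Measure ℝ) (φ : ℝ → ℝ) (F : ℝ → ℂ) (t x : ℝ) : ℂ :=
  ∫ ξ, F ξ * Complex.exp (Complex.I * ((2 * Real.pi * x * ξ + t * φ ξ : ℝ) : ℂ)) ∂ν

def sel (u : ℝ → ℝ → ℂ) (xs : ℕ → ℝ) : ℕ → ℝ → ℝ
  | 0 => fun _ => xs 0
  | (n + 1) => fun t => if ‖u t (sel u xs n t)‖ₑ ≤ ‖u t (xs (n + 1))‖ₑ then xs (n + 1) else sel u xs n t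

lemma sel_meas (u : ℝ → ℝ → ℂ) (hu : Measurable (Function.uncurry u)) (xs : ℕ → ℝ) (n : ℕ) :
    Measurable (sel u xs n) := by
  induction n with
  | zero => exact measurable_const
  | succ n ih =>
    apply Measurable.ite _ measurable_const ih
    apply measurableSet_le
    · exact (hu.comp (measurable_id.prodMk ih)).enorm
    · exact (hu.comp (measurable_id.prodMk measurable_const)).enorm

lemma sel_mono (u : ℝ → ℝ → ℂ) (xs : ℕ → ℝ) (t : ℝ) : Monotone fun n => ‖u t (sel u xs n t)‖ₑ := by
  apply monotone_nat_of_le_succ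
  intro n
  simp only [sel]
  split_ifs with h
  · exact h
  · exact le_rfl

lemma sel_ge (u : ℝ → ℝ → ℂ) (xs : ℕ → ℝ) (t : ℝ) (n : ℕ) :
    ‖u t (xs n)‖ₑ ≤ ‖u t (sel u xs n t)‖ₑ := by
  cases n with
  | zero => exact le_rfl
  | succ n =>
    simp only [sel]
    split_ifs with h
    · exact le_rfl
    · exact (not_le.1 h).le

lemma wave_meas (ν : Measure ℝ) [IsFiniteMeasure ν] (φ : ℝ → ℝ) (hφ : Measurable φ) (F : ℝ → ℂ)
    (hF : Measurable F) : Measurable (Function.uncurry (wave ν φ F)) := by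
  have : StronglyMeasurable (Function.uncurry fun (p : ℝ × ℝ) (ξ : ℝ) =>
      F ξ * Complex.exp (Complex.I * ((2 * Real.pi * p.2 * ξ + p.1 * φ ξ : ℝ) : ℂ))) := by
    apply Measurable.stronglyMeasurable
    simp only [Function.uncurry_def]
    fun_prop
  exact this.integral_prod_right.measurable

lemma sup_bound (ν : Measure ℝ) [IsFiniteMeasure ν] (φ : ℝ → ℝ) (hφ : Measurable φ)
    (B : ℝ) (hB : 0 ≤ B)
    (hK : ∀ t y : ℝ, t ≠ 0 →
      ‖∫ ξ, Complex.exp (Complex.I * ((2 * Real.pi * y * ξ + t * φ ξ : ℝ) : ℂ)) ∂ν‖ ≤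
      B * |t| ^ (-(1 / 2) : ℝ))
    (F : ℝ → ℂ) (hF : Measurable F) (M : ℝ) (hM : ∀ t, ‖F t‖ ≤ M) (xs : ℕ → ℝ) :
    ∫⁻ t, (⨆ n, ‖wave ν φ F t (xs n)‖ₑ) ^ 4 ≤
      (12 * ENNReal.ofReal B * ∫⁻ ξ, ‖F ξ‖ₑ ^ 2 ∂ν) ^ 2 := by
  set u := wave ν φ F with hu
  have hum : Measurable (Function.uncurry u) := wave_meas ν φ hφ F hF
  have h1 : ∀ t, (⨆ n, ‖u t (xs n)‖ₑ) ^ 4 ≤ ⨆ n, ‖u t (sel u xs n t)‖ₑ ^ 4 := by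
    intro t
    rw [Monotone.map_iSup_of_continuousAt (f := fun x : ℝ≥0∞ => x ^ 4)
      (ENNReal.continuous_pow 4).continuousAt (fun a b h => by dsimp only; gcongr) (by simp)]
    exact iSup_mono fun n => by gcongr; exact sel_ge u xs t n
  refine (lintegral_mono h1).trans ?_
  rw [lintegral_iSup]
  · apply iSup_le
    intro n
    have hX := sel_meas u hum xs n
    have := l4_bound ν (fun t ξ => 2 * Real.pi * sel u xs n t * ξ + t * φ ξ) (by
        simp only [Function.uncurry_def]
        fun_prop) B hB (by
        intro t s hts
        have := hK (t - s) (sel u xs n t - sel u xs n s) (sub_ne_zero.2 hts)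
        convert this using 5
        ring_nf) F hF M hM
    exact this
  · intro n
    have hX := sel_meas u hum xs n
    exact ((hum.comp (measurable_id.prodMk hX)).enorm).pow_const 4
  · intro m n h t
    have := sel_mono u xs t h
    dsimp only at this ⊢
    gcongr

lemma hasDerivAt_tanh' (x : ℝ) : HasDerivAt Real.tanh (1 - Real.tanh x ^ 2) x := by
  have h := (Real.hasDerivAt_sinh x).div (Real.hasDerivAt_cosh x) (Real.cosh_pos x).ne'
  have e : Real.tanh = Real.sinh / Real.cosh := by
    ext y
    exact Real.tanh_eq_sinh_div_cosh y
  rw [e]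
  refine h.congr_deriv ?_
  have := (Real.cosh_pos x).ne'
  simp only [Pi.div_apply]
  field_simp

lemma tanh_le_self' (x : ℝ) (hx : 0 ≤ x) : Real.tanh x ≤ x := by
  have := Convex.image_sub_le_mul_sub_of_deriv_le (convex_Icc 0 x) (f := Real.tanh) (C := 1)
    (fun y _ => (hasDerivAt_tanh' y).continuousAt.continuousWithinAt)
    (fun y _ => (hasDerivAt_tanh' y).differentiableAt.differentiableWithinAt)
    (fun y _ => by rw [(hasDerivAt_tanh' y).deriv]; nlinarith [sq_nonneg (Real.tanh y)])
    0 ⟨le_rfl, hx⟩ x ⟨hx, le_rfl⟩ hx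
  simpa using this

lemma tanh_pos' (x : ℝ) (hx : 0 < x) : 0 < Real.tanh x := by
  rw [Real.tanh_eq_sinh_div_cosh]
  exact div_pos (Real.sinh_pos_iff.2 hx) (Real.cosh_pos x)

lemma tanh_lower_s7 (x : ℝ) (hx : 0 < x) : x / Real.sqrt (1 + x ^ 2) ≤ Real.tanh x := by
  have hs : x ≤ Real.sinh x := Real.self_le_sinh_iff.2 hx.le
  have hc := Real.cosh_pos x
  rw [Real.tanh_eq_sinh_div_cosh, div_le_div_iff₀ (by positivity) hc]
  have hs0 : 0 ≤ Real.sinh x := hx.le.trans hs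
  refine (sq_le_sq₀ (by positivity) (by positivity)).1 ?_
  rw [mul_pow, mul_pow, Real.sq_sqrt (by positivity), Real.cosh_sq']
  nlinarith

def mp (x : ℝ) : ℝ := (Real.tanh x + x * (1 - Real.tanh x ^ 2)) / (2 * Real.sqrt (x * Real.tanh x))

def mpp (x : ℝ) : ℝ := -(((Real.tanh x - x * (1 - Real.tanh x ^ 2)) ^ 2 +
  4 * x ^ 2 * Real.tanh x ^ 2 * (1 - Real.tanh x ^ 2)) /
    (4 * (x * Real.tanh x) * Real.sqrt (x * Real.tanh x)))

lemma m1_pos (x : ℝ) (hx : 0 < x) : m1 x = Real.sqrt (x * Real.tanh x) := by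
  rw [m1, if_neg hx.ne', abs_of_pos hx]
  nth_rewrite 1 [← Real.sqrt_sq hx.le]
  rw [← Real.sqrt_mul (by positivity)]
  congr 1
  field_simp

lemma m1_neg (x : ℝ) : m1 (-x) = - m1 x := by
  simp only [m1, neg_eq_zero, abs_neg]
  split_ifs <;> simp

lemma m1_hasDerivAt (x : ℝ) (hx : 0 < x) : HasDerivAt m1 (mp x) x := by
  have hT := tanh_pos' x hx
  have h : HasDerivAt (fun x => Real.sqrt (x * Real.tanh x)) (mp x) x := by
    have := (((hasDerivAt_id x).mul (hasDerivAt_tanh' x)).sqrt (by simp; exact ⟨hx.ne', hT.ne'⟩))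
    refine this.congr_deriv ?_
    simp [mp]
  apply h.congr_of_eventuallyEq
  filter_upwards [lt_mem_nhds hx] with y hy using m1_pos y hy

lemma mp_hasDerivAt (x : ℝ) (hx : 0 < x) : HasDerivAt mp (mpp x) x := by
  have hT := tanh_pos' x hx
  have hxT : 0 < x * Real.tanh x := mul_pos hx hT
  have hs : 0 < Real.sqrt (x * Real.tanh x) := Real.sqrt_pos.2 hxT
  have h2 : HasDerivAt (fun x => Real.sqrt (x * Real.tanh x)) (mp x) x := by
    have := (((hasDerivAt_id x).mul (hasDerivAt_tanh' x)).sqrt (by simp; exact ⟨hx.ne', hT.ne'⟩))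
    refine this.congr_deriv ?_
    simp [mp]
  have h3 : HasDerivAt (fun x => Real.tanh x + x * (1 - Real.tanh x ^ 2))
      ((1 - Real.tanh x ^ 2) + (1 * (1 - Real.tanh x ^ 2) +
        x * (-(2 * Real.tanh x * (1 - Real.tanh x ^ 2))))) x := by
    have a := ((hasDerivAt_tanh' x).pow 2).const_sub 1
    have b := (hasDerivAt_tanh' x).add ((hasDerivAt_id x).mul a)
    refine b.congr_deriv ?_
    simp
  have h4 := h3.div (h2.const_mul 2) (by positivity)
  refine h4.congr_deriv ?_
  have hss : Real.sqrt (x * Real.tanh x) ^ 2 = x * Real.tanh x := Real.sq_sqrt hxT.le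
  simp only [mp, mpp]
  set s := Real.sqrt (x * Real.tanh x) with hsd
  set T := Real.tanh x with hTd
  rw [← hss]
  have e : ∀ n n' : ℝ, (n' * (2 * s) - n * (2 * (n / (2 * s)))) / (2 * s) ^ 2 =
      (2 * n' * s ^ 2 - n ^ 2) / (4 * s ^ 2 * s) := by
    intro n n'
    field_simp
    ring
  rw [e, ← neg_div]
  congr 1
  rw [hss]
  ring

lemma pow_aux (J : ℝ) (hJ : 0 < J) :
    J ^ (-(5 / 4) : ℝ) = ((Real.sqrt J)⁻¹) ^ 2 * Real.sqrt ((Real.sqrt J)⁻¹) := by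
  rw [Real.sqrt_eq_rpow, Real.sqrt_eq_rpow, ← Real.rpow_neg hJ.le, ← Real.rpow_mul hJ.le,
      ← Real.rpow_natCast, ← Real.rpow_mul hJ.le, ← Real.rpow_add hJ]
  norm_num

lemma mpp_bound (x : ℝ) (hx : 0 < x) :
    mpp x ≤ -(1 / 16 * x * (1 + x ^ 2) ^ (-(5 / 4) : ℝ)) := by
  have hT := tanh_pos' x hx
  have hT1 : Real.tanh x ^ 2 < 1 := Real.tanh_sq_lt_one x
  have hTx := tanh_le_self' x hx.le
  have hTl := tanh_lower_s7 x hx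
  have hxT : 0 < x * Real.tanh x := mul_pos hx hT
  have hs : 0 < Real.sqrt (x * Real.tanh x) := Real.sqrt_pos.2 hxT
  rw [mpp, neg_le_neg_iff, le_div_iff₀ (by positivity)]
  set T := Real.tanh x with hTd
  have hJ : 0 < 1 + x ^ 2 := by positivity
  set e := (Real.sqrt (1 + x ^ 2))⁻¹ with he
  have hep : 0 < e := by positivity
  have hxe : x * e ≤ T := by rw [he, ← div_eq_mul_inv]; exact hTl
  have hpow : (1 + x ^ 2) ^ (-(5 / 4) : ℝ) = e ^ 2 * Real.sqrt e := by
    exact pow_aux _ hJ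
  have hD : T ^ 4 / 4 ≤ (T - x * (1 - T ^ 2)) ^ 2 + 4 * x ^ 2 * T ^ 2 * (1 - T ^ 2) := by
    set S := 1 - T ^ 2 with hS
    have hSp : 0 < S := by linarith
    have hT4 : T ^ 4 ≤ T ^ 2 := by nlinarith [sq_nonneg T]
    rcases le_total (x * S) (T / 2) with h | h
    · have : (T / 2) ^ 2 ≤ (T - x * S) ^ 2 := by
        apply pow_le_pow_left₀ (by positivity); linarith
      have : 0 ≤ 4 * x ^ 2 * T ^ 2 * S := by positivity
      nlinarith
    · have h1 : 4 * x * T ^ 2 * (T / 2) ≤ 4 * x * T ^ 2 * (x * S) := by gcongr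
      have h2 : T ^ 3 * T ≤ T ^ 3 * x := by gcongr
      have h3 : 0 ≤ T ^ 4 := by positivity
      nlinarith [sq_nonneg (T - x * S)]
  refine le_trans ?_ hD
  rw [hpow]
  have h5 : Real.sqrt e * Real.sqrt (x * T) ≤ T := by
    rw [← Real.sqrt_mul hep.le]
    apply Real.sqrt_le_iff.2 ⟨hT.le, _⟩
    nlinarith
  have h6 : (x * e) ^ 2 ≤ T ^ 2 := by gcongr
  calc 1 / 16 * x * (e ^ 2 * Real.sqrt e) * (4 * (x * T) * Real.sqrt (x * T))
      = 1 / 4 * T * ((x * e) ^ 2 * (Real.sqrt e * Real.sqrt (x * T))) := by ring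
    _ ≤ 1 / 4 * T * (T ^ 2 * T) := by gcongr
    _ = T ^ 4 / 4 := by ring

lemma mpp_cont : ContinuousOn mpp (Set.Ioi 0) := by
  have ht : Continuous Real.tanh := continuous_iff_continuousAt.2
    fun x => (hasDerivAt_tanh' x).continuousAt
  unfold mpp
  apply ContinuousOn.neg
  apply ContinuousOn.div (by fun_prop) (by fun_prop)
  intro x hx
  have hT := tanh_pos' x hx
  have hx' : 0 < x := hx
  positivity

def phi (μ ξ : ℝ) : ℝ := m1 (Real.sqrt μ * ξ) / Real.sqrt μ

lemma m1_meas : Measurable m1 := by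
  unfold m1
  apply Measurable.ite (measurableSet_singleton 0) measurable_const
  have := tanh_cont.measurable
  fun_prop

lemma phi_meas (μ : ℝ) : Measurable (phi μ) := by
  have := m1_meas
  unfold phi
  fun_prop

lemma phi_neg (μ ξ : ℝ) : phi μ (-ξ) = - phi μ ξ := by
  simp only [phi, mul_neg, m1_neg, neg_div]

lemma four_aux : (1 / 8 : ℝ) ≤ (4 : ℝ) ^ (-(5 / 4) : ℝ) := by
  rw [show (1 / 8 : ℝ) = (4 : ℝ) ^ (-(3 / 2) : ℝ) by
    rw [show (4 : ℝ) = 2 ^ (2 : ℝ) by norm_num, ← Real.rpow_mul (by norm_num)]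
    rw [show (2 * (-(3 / 2)) : ℝ) = ((-3 : ℤ) : ℝ) by norm_num, Real.rpow_intCast]
    norm_num]
  apply Real.rpow_le_rpow_of_exponent_le <;> norm_num

lemma curv_bound (μ lam ξ : ℝ) (hμ : 0 < μ) (hl : 0 < lam) (h1 : lam / 2 ≤ ξ) (h2 : ξ ≤ 2 * lam) :
    μ * lam * (1 + (Real.sqrt μ * lam) ^ 2) ^ (-(5 / 4) : ℝ) / 256 ≤
      -(Real.sqrt μ * mpp (Real.sqrt μ * ξ)) := by
  have hs : 0 < Real.sqrt μ := Real.sqrt_pos.2 hμ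
  have hξ : 0 < ξ := by linarith
  have hb := mpp_bound (Real.sqrt μ * ξ) (by positivity)
  have hK : 0 < 1 + (Real.sqrt μ * lam) ^ 2 := by positivity
  have h3 : (4 * (1 + (Real.sqrt μ * lam) ^ 2)) ^ (-(5 / 4) : ℝ) ≤
      (1 + (Real.sqrt μ * ξ) ^ 2) ^ (-(5 / 4) : ℝ) := by
    apply Real.rpow_le_rpow_of_nonpos (by positivity) _ (by norm_num)
    have : (Real.sqrt μ * ξ) ^ 2 ≤ (Real.sqrt μ * (2 * lam)) ^ 2 := by gcongr
    nlinarith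
  rw [Real.mul_rpow (by norm_num) hK.le] at h3
  set Q := (1 + (Real.sqrt μ * lam) ^ 2) ^ (-(5 / 4) : ℝ) with hQ
  have hQp : 0 < Q := by positivity
  have h4 : 1 / 8 * Q ≤ (1 + (Real.sqrt μ * ξ) ^ 2) ^ (-(5 / 4) : ℝ) :=
    le_trans (by gcongr; exact four_aux) h3
  have h5 : Real.sqrt μ * (1 / 16 * (Real.sqrt μ * (lam / 2)) * (1 / 8 * Q)) ≤
      Real.sqrt μ * (1 / 16 * (Real.sqrt μ * ξ) * (1 + (Real.sqrt μ * ξ) ^ 2) ^ (-(5 / 4) : ℝ)) := by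
    gcongr
  have h6 : Real.sqrt μ * mpp (Real.sqrt μ * ξ) ≤ Real.sqrt μ *
    -(1 / 16 * (Real.sqrt μ * ξ) * (1 + (Real.sqrt μ * ξ) ^ 2) ^ (-(5 / 4) : ℝ)) := by gcongr
  have h7 : Real.sqrt μ * Real.sqrt μ = μ := Real.mul_self_sqrt hμ.le
  calc _ = Real.sqrt μ * (1 / 16 * (Real.sqrt μ * (lam / 2)) * (1 / 8 * Q)) := by
        linear_combination (-(lam * Q / 256)) * h7
    _ ≤ _ := h5
    _ ≤ _ := by linarith

lemma osc_neg (μ lam t y κ : ℝ) (hμ : 0 < μ) (hl : 0 < lam) (ht : t < 0) (hκ : 0 < κ)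
    (hk : κ = μ * lam * (1 + (Real.sqrt μ * lam) ^ 2) ^ (-(5 / 4) : ℝ) / 256) :
    ‖∫ ξ in (lam / 2)..(2 * lam),
      Complex.exp (Complex.I * ((2 * Real.pi * y * ξ + t * phi μ ξ : ℝ) : ℂ))‖
      ≤ 10 / Real.sqrt (|t| * κ) := by
  have hs : 0 < Real.sqrt μ := Real.sqrt_pos.2 hμ
  have hpos : ∀ x ∈ Set.Icc (lam / 2) (2 * lam), 0 < Real.sqrt μ * x := fun x hx =>
    mul_pos hs (by linarith [hx.1])
  have hlin : ∀ x : ℝ, HasDerivAt (fun ξ : ℝ => Real.sqrt μ * ξ) (Real.sqrt μ) x := fun x => by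
    simpa using (hasDerivAt_id x).const_mul (Real.sqrt μ)
  apply vdc_second (fun ξ => 2 * Real.pi * y * ξ + t * phi μ ξ)
    (fun ξ => 2 * Real.pi * y + t * mp (Real.sqrt μ * ξ))
    (fun ξ => t * (Real.sqrt μ * mpp (Real.sqrt μ * ξ)))
  · linarith
  · have := abs_pos.2 ht.ne
    positivity
  · intro x hx
    have a := (m1_hasDerivAt _ (hpos x hx)).comp x (hlin x)
    have b := ((hasDerivAt_id x).const_mul (2 * Real.pi * y)).add
      ((a.div_const (Real.sqrt μ)).const_mul t)
    refine b.congr_deriv ?_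
    field_simp
  · intro x hx
    have a := (mp_hasDerivAt _ (hpos x hx)).comp x (hlin x)
    have b := (a.const_mul t).const_add (2 * Real.pi * y)
    refine b.congr_deriv ?_
    ring
  · have : ContinuousOn (fun ξ => mpp (Real.sqrt μ * ξ)) (Set.Icc (lam / 2) (2 * lam)) :=
      mpp_cont.comp (by fun_prop) (fun x hx => hpos x hx)
    fun_prop
  · intro x hx
    have h := curv_bound μ lam x hμ hl hx.1 hx.2
    rw [← hk] at h
    rw [abs_of_neg ht]
    nlinarith

lemma osc (μ lam t y κ : ℝ) (hμ : 0 < μ) (hl : 0 < lam) (ht : t ≠ 0) (hκ : 0 < κ)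
    (hk : κ = μ * lam * (1 + (Real.sqrt μ * lam) ^ 2) ^ (-(5 / 4) : ℝ) / 256) :
    ‖∫ ξ in (lam / 2)..(2 * lam),
      Complex.exp (Complex.I * ((2 * Real.pi * y * ξ + t * phi μ ξ : ℝ) : ℂ))‖
      ≤ 10 / Real.sqrt (|t| * κ) := by
  rcases lt_or_gt_of_ne ht with h | h
  · exact osc_neg μ lam t y κ hμ hl h hκ hk
  · have := osc_neg μ lam (-t) (-y) κ hμ hl (by linarith) hκ hk
    rw [abs_neg] at this
    refine le_trans (le_of_eq ?_) this
    rw [intervalIntegral.integral_of_le (by linarith), intervalIntegral.integral_of_le (by linarith),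
      ← RCLike.norm_conj, ← integral_conj]
    congr 2
    ext ξ
    rw [conj_expI]
    congr 4
    ring

def annul (lam : ℝ) : Set ℝ := Set.Ioc (-(2 * lam)) (-(lam / 2)) ∪ Set.Ioc (lam / 2) (2 * lam)

lemma annul_meas (lam : ℝ) : MeasurableSet (annul lam) := measurableSet_Ioc.union measurableSet_Ioc

instance annul_finite (lam : ℝ) : IsFiniteMeasure (volume.restrict (annul lam)) :=
  ⟨by
    rw [Measure.restrict_apply_univ]
    exact measure_union_lt_top (by simp) (by simp)⟩

lemma kernel_aux (μ lam t y κ : ℝ) (hμ : 0 < μ) (hl : 0 < lam) (ht : t ≠ 0) (hκ : 0 < κ)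
    (hk : κ = μ * lam * (1 + (Real.sqrt μ * lam) ^ 2) ^ (-(5 / 4) : ℝ) / 256) :
    ‖∫ ξ, Complex.exp (Complex.I * ((2 * Real.pi * y * ξ + t * phi μ ξ : ℝ) : ℂ))
      ∂(volume.restrict (annul lam))‖ ≤ 20 / Real.sqrt (|t| * κ) := by
  have hpm := phi_meas μ
  have hitg : ∀ s : Set ℝ, volume s < ∞ → IntegrableOn (fun ξ : ℝ =>
      Complex.exp (Complex.I * ((2 * Real.pi * y * ξ + t * phi μ ξ : ℝ) : ℂ))) s := by
    intro s hs
    have : IsFiniteMeasure (volume.restrict s) := ⟨by rwa [Measure.restrict_apply_univ]⟩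
    refine Integrable.of_bound (C := 1) ?_ ?_
    · apply Measurable.aestronglyMeasurable
      fun_prop
    · filter_upwards with ξ
      rw [norm_expI]
  rw [annul, setIntegral_union _ measurableSet_Ioc (hitg _ (by simp)) (hitg _ (by simp))]
  · have a := osc μ lam t y κ hμ hl ht hκ hk
    have b := osc μ lam (-t) (-y) κ hμ hl (neg_ne_zero.2 ht) hκ hk
    rw [abs_neg] at b
    rw [← intervalIntegral.integral_of_le (by linarith),
      ← intervalIntegral.integral_of_le (by linarith), ← intervalIntegral.integral_comp_neg]
    refine (norm_add_le _ _).trans ?_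
    have e : (20 : ℝ) / Real.sqrt (|t| * κ) = 10 / Real.sqrt (|t| * κ) + 10 / Real.sqrt (|t| * κ) := by
      ring
    rw [e]
    refine add_le_add (le_trans (le_of_eq ?_) b) a
    congr 1
    apply intervalIntegral.integral_congr
    intro ξ _
    simp only [phi_neg]
    congr 3
    ring
  · rw [Set.disjoint_left]
    intro x h1 h2
    have := h1.2
    have := h2.1
    linarith

def amp (μ lam : ℝ) : ℝ := μ ^ (-(1 : ℝ) / 2) * lam ^ (-(1 : ℝ) / 2) *
                  jap (Real.sqrt μ * lam) ^ ((5 : ℝ) / 4)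

lemma amp_pos (μ lam : ℝ) (hμ : 0 < μ) (hl : 0 < lam) : 0 < amp μ lam := by
  unfold amp jap
  positivity

lemma kernel_bound_s7 (μ lam t y : ℝ) (hμ : 0 < μ) (hl : 0 < lam) (ht : t ≠ 0) :
    ‖∫ ξ, Complex.exp (Complex.I * ((2 * Real.pi * y * ξ + t * phi μ ξ : ℝ) : ℂ))
      ∂(volume.restrict (annul lam))‖ ≤ 320 * amp μ lam * |t| ^ (-(1 / 2) : ℝ) := by
  have hK : 0 < 1 + (Real.sqrt μ * lam) ^ 2 := by positivity
  have h := kernel_aux μ lam t y _ hμ hl ht (by positivity) rfl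
  refine h.trans (le_of_eq ?_)
  have ht' : 0 < |t| := abs_pos.2 ht
  unfold amp jap
  generalize 1 + (Real.sqrt μ * lam) ^ 2 = K at *
  rw [← Real.rpow_mul hK.le, Real.sqrt_eq_rpow, Real.mul_rpow (by positivity) (by positivity),
    Real.div_rpow (by positivity) (by positivity), Real.mul_rpow (by positivity) (by positivity),
    Real.mul_rpow (by positivity) (by positivity), ← Real.rpow_mul hK.le,
    show (256 : ℝ) ^ (1 / 2 : ℝ) = 16 by
      rw [← Real.sqrt_eq_rpow]; exact Real.sqrt_eq_cases.2 (Or.inl ⟨by norm_num, by norm_num⟩)]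
  rw [show (-(1 : ℝ) / 2) = -(1 / 2) by norm_num, Real.rpow_neg hμ.le, Real.rpow_neg hl.le,
    Real.rpow_neg ht'.le, show (-(5 / 4) * (1 / 2) : ℝ) = -(5 / 8) by norm_num,
    show (1 / 2 * (5 / 4) : ℝ) = 5 / 8 by norm_num, Real.rpow_neg hK.le]
  field_simp
  norm_num

lemma cut_schwartz (G : ℝ → ℂ) (lam : ℝ) (hl : 0 < lam)
    (h0 : ∀ ξ, |ξ| ≤ lam / 2 → G ξ = 0) (h2 : ∀ ξ, 2 * lam ≤ |ξ| → G ξ = 0)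
    (hs : ∀ ξ, ξ ≠ 0 → ContDiffAt ℝ (⊤ : ℕ∞) G ξ) : ∃ g : 𝓢(ℝ, ℂ), ⇑g = G := by
  have hc : HasCompactSupport G := by
    apply HasCompactSupport.intro (isCompact_Icc (a := -(2 * lam)) (b := 2 * lam))
    intro x hx
    apply h2
    by_contra h
    push Not at h
    rw [abs_lt] at h
    exact hx ⟨h.1.le, h.2.le⟩
  have hd : ContDiff ℝ (⊤ : ℕ∞) G := by
    rw [contDiff_iff_contDiffAt]
    intro ξ
    by_cases hξ : ξ = 0
    · subst hξ
      apply (contDiffAt_const (c := (0 : ℂ))).congr_of_eventuallyEq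
      have : ∀ᶠ ξ : ℝ in nhds 0, |ξ| < lam / 2 := by
        have hh : ContinuousAt (fun ξ : ℝ => |ξ|) 0 := continuous_abs.continuousAt
        exact hh.eventually_lt_const (by simpa using hl)
      filter_upwards [this] with ξ h using h0 ξ h.le
    · exact hs ξ hξ
  exact ⟨hc.toSchwartzMap hd, rfl⟩

lemma m1_smooth (ξ : ℝ) (hξ : ξ ≠ 0) : ContDiffAt ℝ (⊤ : ℕ∞) m1 ξ := by
  have habs : ContDiffAt ℝ (⊤ : ℕ∞) (fun x : ℝ => |x|) ξ := contDiffAt_norm ℝ hξ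
  have hpos : 0 < |ξ| := abs_pos.2 hξ
  have htanh : ContDiff ℝ (⊤ : ℕ∞) Real.tanh := by
    have e : Real.tanh = fun x => Real.sinh x / Real.cosh x := by
      ext y
      exact Real.tanh_eq_sinh_div_cosh y
    rw [e]
    exact Real.contDiff_sinh.div Real.contDiff_cosh (fun x => (Real.cosh_pos x).ne')
  have h : ContDiffAt ℝ (⊤ : ℕ∞) (fun x : ℝ => x * Real.sqrt (Real.tanh |x| / |x|)) ξ := by
    apply contDiffAt_id.mul
    apply ContDiffAt.sqrt
    · exact (htanh.contDiffAt.comp ξ habs).div habs hpos.ne'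
    · exact (div_pos (tanh_pos' _ hpos) hpos).ne'
  apply h.congr_of_eventuallyEq
  filter_upwards [isOpen_ne.mem_nhds hξ] with y hy
  rw [m1, if_neg hy]

lemma phi_smooth (μ : ℝ) (hμ : 0 < μ) (ξ : ℝ) (hξ : ξ ≠ 0) :
    ContDiffAt ℝ (⊤ : ℕ∞) (phi μ) ξ := by
  have hs : 0 < Real.sqrt μ := Real.sqrt_pos.2 hμ
  have h := (m1_smooth (Real.sqrt μ * ξ) (mul_ne_zero hs.ne' hξ))
  unfold phi
  apply ContDiffAt.div_const
  exact h.comp ξ (contDiffAt_const.mul contDiffAt_id)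

lemma ofReal_smooth (g : ℝ → ℝ) (ξ : ℝ) (h : ContDiffAt ℝ (⊤ : ℕ∞) g ξ) :
    ContDiffAt ℝ (⊤ : ℕ∞) (fun x => ((g x : ℝ) : ℂ)) ξ :=
  Complex.ofRealCLM.contDiff.contDiffAt.comp ξ h

lemma exp_smooth (μ t : ℝ) (hμ : 0 < μ) (ξ : ℝ) (hξ : ξ ≠ 0) :
    ContDiffAt ℝ (⊤ : ℕ∞) (fun x => Complex.exp (Complex.I * ((t * phi μ x : ℝ) : ℂ))) ξ := by
  apply ContDiffAt.cexp
  apply contDiffAt_const.mul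
  exact ofReal_smooth _ ξ (contDiffAt_const.mul (phi_smooth μ hμ ξ hξ))

def cut (χ : ℝ → ℝ) (lam : ℝ) (f : 𝓢(ℝ, ℂ)) (ξ : ℝ) : ℂ :=
  ((χ (|ξ| / lam) - χ (2 * |ξ| / lam) : ℝ) : ℂ) * 𝓕 (⇑f) ξ

lemma cut_zero (χ : ℝ → ℝ) (hsupp : Function.support χ ⊆ Set.Ioo (-2 : ℝ) 2)
    (hone : ∀ s ∈ Set.Icc (-1 : ℝ) 1, χ s = 1) (lam : ℝ) (hl : 0 < lam) (f : 𝓢(ℝ, ℂ)) (ξ : ℝ)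
    (h : |ξ| ≤ lam / 2 ∨ 2 * lam ≤ |ξ|) : cut χ lam f ξ = 0 := by
  have hz : ∀ s, 2 ≤ s → χ s = 0 := by
    intro s hs
    by_contra hn
    have := (hsupp hn).2
    linarith
  have h0 := abs_nonneg ξ
  unfold cut
  rcases h with h | h
  · rw [hone, hone]
    · simp
    · refine ⟨by have : 0 ≤ 2 * |ξ| / lam := by positivity
                 linarith, ?_⟩
      rw [div_le_one hl]
      linarith
    · refine ⟨by have : 0 ≤ |ξ| / lam := by positivity
                 linarith, ?_⟩
      rw [div_le_one hl]
      linarith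
  · rw [hz, hz]
    · simp
    · rw [le_div_iff₀ hl]
      linarith
    · rw [le_div_iff₀ hl]
      linarith

lemma cut_smooth (χ : ℝ → ℝ) (hχ : ContDiff ℝ (⊤ : ℕ∞) χ) (lam : ℝ)
    (f : 𝓢(ℝ, ℂ)) (ξ : ℝ) (hξ : ξ ≠ 0) : ContDiffAt ℝ (⊤ : ℕ∞) (cut χ lam f) ξ := by
  have habs : ContDiffAt ℝ (⊤ : ℕ∞) (fun x : ℝ => |x|) ξ := contDiffAt_norm ℝ hξ
  have hf : ContDiff ℝ (⊤ : ℕ∞) (𝓕 (⇑f)) := by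
    rw [← SchwartzMap.fourier_coe]
    exact (𝓕 f).smooth ⊤
  unfold cut
  refine ContDiffAt.mul (ofReal_smooth _ ξ ?_) hf.contDiffAt
  apply ContDiffAt.sub
  · exact hχ.contDiffAt.comp ξ (habs.div_const lam)
  · exact hχ.contDiffAt.comp ξ ((contDiffAt_const.mul habs).div_const lam)

lemma plancherel (g : 𝓢(ℝ, ℂ)) : eLpNorm (𝓕⁻ (⇑g)) 2 volume = eLpNorm (⇑g) 2 volume := by
  rw [← SchwartzMap.fourierInv_coe]
  have h := SchwartzMap.norm_fourier_toL2_eq (𝓕⁻ g)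
  rw [FourierTransform.fourier_fourierInv_eq, SchwartzMap.norm_toLp, SchwartzMap.norm_toLp] at h
  rw [ENNReal.toReal_eq_toReal_iff' ((SchwartzMap.memLp _ _ _).eLpNorm_ne_top)
    ((SchwartzMap.memLp _ _ _).eLpNorm_ne_top)] at h
  exact h.symm

lemma eLpNorm_two_sq (g : ℝ → ℂ) : eLpNorm g 2 volume ^ 2 = ∫⁻ x, ‖g x‖ₑ ^ 2 := by
  rw [eLpNorm_eq_lintegral_rpow_enorm_toReal (by norm_num) (by norm_num), ← ENNReal.rpow_natCast,
    ← ENNReal.rpow_mul]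
  simp

lemma annul_compl (lam ξ : ℝ) (h : ξ ∉ annul lam) : |ξ| ≤ lam / 2 ∨ 2 * lam ≤ |ξ| := by
  by_contra hn
  push Not at hn
  apply h
  rcases abs_cases ξ with ⟨e, _⟩ | ⟨e, _⟩
  · right
    exact ⟨by linarith, by linarith⟩
  · left
    exact ⟨by linarith, by linarith⟩

lemma main_rep (χ : ℝ → ℝ) (hχ : ContDiff ℝ (⊤ : ℕ∞) χ)
    (hsupp : Function.support χ ⊆ Set.Ioo (-2 : ℝ) 2)
    (hone : ∀ s ∈ Set.Icc (-1 : ℝ) 1, χ s = 1) (μ : ℝ) (hμ : 0 < μ) (lam : ℝ) (hl : 0 < lam)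
    (f : 𝓢(ℝ, ℂ)) : ∃ F : ℝ → ℂ, Measurable F ∧ (∃ M, ∀ ξ, ‖F ξ‖ ≤ M) ∧
      eLpNorm (proj1 χ lam ⇑f) 2 volume ^ 2 = ∫⁻ ξ, ‖F ξ‖ₑ ^ 2 ∂(volume.restrict (annul lam)) ∧
      ∀ t, Continuous (prop1 μ t (proj1 χ lam ⇑f)) ∧
        eLpNorm (prop1 μ t (proj1 χ lam ⇑f)) 2 volume = eLpNorm (proj1 χ lam ⇑f) 2 volume ∧
        ∀ x, prop1 μ t (proj1 χ lam ⇑f) x = wave (volume.restrict (annul lam)) (phi μ) F t x := by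
  have hz := cut_zero χ hsupp hone lam hl f
  have hsm := cut_smooth χ hχ lam f
  obtain ⟨g, hg⟩ := cut_schwartz (cut χ lam f) lam hl (fun ξ h => hz ξ (Or.inl h))
    (fun ξ h => hz ξ (Or.inr h)) hsm
  have hproj : proj1 χ lam ⇑f = 𝓕⁻ (⇑g) := by
    rw [hg]
    rfl
  have hhat : 𝓕 (proj1 χ lam ⇑f) = ⇑g := by
    rw [hproj, ← SchwartzMap.fourierInv_coe, ← SchwartzMap.fourier_coe,
      FourierTransform.fourier_fourierInv_eq]
  have hF2 : eLpNorm (proj1 χ lam ⇑f) 2 volume = eLpNorm (⇑g) 2 volume := by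
    rw [hproj, plancherel]
  refine ⟨g, g.continuous.measurable, ?_, ?_, ?_⟩
  · obtain ⟨C, _, hC⟩ := g.decay 0 0
    exact ⟨C, fun ξ => by simpa using hC ξ⟩
  · rw [hF2, eLpNorm_two_sq, ← lintegral_indicator (annul_meas lam)]
    congr 1
    ext ξ
    by_cases h : ξ ∈ annul lam
    · rw [Set.indicator_of_mem h]
    · rw [Set.indicator_of_notMem h, hg, hz ξ (annul_compl lam ξ h)]
      simp
  · intro t
    obtain ⟨k, hk⟩ := cut_schwartz
      (fun ξ => Complex.exp (Complex.I * ((t * phi μ ξ : ℝ) : ℂ)) * cut χ lam f ξ) lam hl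
      (fun ξ h => by rw [hz ξ (Or.inl h), mul_zero]) (fun ξ h => by rw [hz ξ (Or.inr h), mul_zero])
      (fun ξ h => (exp_smooth μ t hμ ξ h).mul (hsm ξ h))
    have hp : prop1 μ t (proj1 χ lam ⇑f) = 𝓕⁻ (⇑k) := by
      rw [prop1, hhat, hk, hg]
      congr 1
      ext ξ
      congr 4
      rw [phi]
      ring
    refine ⟨?_, ?_, ?_⟩
    · rw [hp, ← SchwartzMap.fourierInv_coe]
      exact (𝓕⁻ k).continuous
    · rw [hp, plancherel, hF2]
      apply eLpNorm_congr_norm_ae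
      filter_upwards with ξ
      rw [hk, hg, norm_mul, norm_expI, one_mul]
    · intro x
      rw [hp, Real.fourierInv_eq', wave, setIntegral_eq_integral_of_forall_compl_eq_zero]
      · congr 1
        ext ξ
        rw [hk, hg, smul_eq_mul, ← mul_assoc, ← Complex.exp_add, mul_comm]
        congr 2
        simp
        ring
      · intro ξ h
        rw [hg, hz ξ (annul_compl lam ξ h), zero_mul]

lemma interp (u : ℝ → ℂ) (hu : Measurable u) (G : ℝ≥0∞) (hG : ∀ x, ‖u x‖ₑ ≤ G) (r : ℝ≥0∞)
    (hr : 2 ≤ r) : eLpNorm u r volume ≤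
      G ^ (1 - 2 / r.toReal) * (eLpNorm u 2 volume) ^ (2 / r.toReal) := by
  by_cases hrt : r = ∞
  · subst hrt
    simp only [ENNReal.toReal_top, div_zero, sub_zero, ENNReal.rpow_one, ENNReal.rpow_zero, mul_one]
    rw [eLpNorm_exponent_top]
    exact essSup_le_of_ae_le _ (Filter.Eventually.of_forall hG)
  · have hρ : 2 ≤ r.toReal := by
      have := (ENNReal.toReal_le_toReal (by norm_num) hrt).2 hr
      simpa using this
    have hr0 : r ≠ 0 := by
      rintro rfl
      simp at hr
    rw [eLpNorm_eq_lintegral_rpow_enorm_toReal hr0 hrt]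
    have h2 := eLpNorm_two_sq u
    set N := eLpNorm u 2 volume
    set ρ := r.toReal
    have hb : ∫⁻ x, ‖u x‖ₑ ^ ρ ≤ G ^ (ρ - 2) * N ^ 2 := by
      rw [h2, ← lintegral_const_mul _ (by fun_prop)]
      apply lintegral_mono
      intro x
      have e : ‖u x‖ₑ ^ ρ = ‖u x‖ₑ ^ (ρ - 2) * ‖u x‖ₑ ^ 2 := by
        rw [← ENNReal.rpow_natCast, ← ENNReal.rpow_add_of_nonneg _ _ (by linarith) (by norm_num)]
        congr 1
        push_cast
        ring
      simp only [e]
      exact mul_le_mul' (ENNReal.rpow_le_rpow (hG x) (by linarith)) le_rfl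
    refine (ENNReal.rpow_le_rpow hb (by positivity)).trans (le_of_eq ?_)
    rw [ENNReal.mul_rpow_of_nonneg _ _ (by positivity), ← ENNReal.rpow_mul, ← ENNReal.rpow_natCast,
      ← ENNReal.rpow_mul]
    congr 2
    · field_simp
    · push_cast
      ring

lemma adm_real (q r : ℝ≥0∞) (hqt : q ≠ ∞) (hq : 2 < q) (hr : 2 ≤ r)
    (hadm : 2 / q = 1 / 2 - 1 / r) : 2 / q.toReal = 1 / 2 - 1 / r.toReal := by
  have h := congrArg ENNReal.toReal hadm
  rw [ENNReal.toReal_sub_of_le _ (by norm_num)] at h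
  · simpa using h
  · rw [one_div, one_div]
    exact ENNReal.inv_le_inv.2 hr

lemma adm_top (r : ℝ≥0∞) (hr : 2 ≤ r) (hadm : 2 / ∞ = 1 / 2 - 1 / r) : r = 2 := by
  rw [ENNReal.div_top] at hadm
  have h := tsub_eq_zero_iff_le.1 hadm.symm
  rw [one_div, one_div, ENNReal.inv_le_inv] at h
  exact le_antisymm h hr

lemma final_bound (q r : ℝ≥0∞) (hqt : q ≠ ∞) (hq : 2 < q) (hr : 2 ≤ r)
    (hadm : 2 / q = 1 / 2 - 1 / r) (v : ℝ → ℝ → ℂ) (hv : ∀ t, Continuous (v t))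
    (N D : ℝ≥0∞) (hN : ∀ t, eLpNorm (v t) 2 volume = N) (G : ℝ → ℝ≥0∞) (hGm : Measurable G)
    (hG : ∀ t x, ‖v t x‖ₑ ≤ G t) (hG4 : ∫⁻ t, G t ^ 4 ≤ (D * N ^ 2) ^ 2) :
    timeNorm q (fun t => eLpNorm (v t) r volume) ≤ D ^ ((1 : ℝ) / 2 - 1 / r.toReal) * N := by
  have he := adm_real q r hqt hq hr hadm
  rw [timeNorm, if_neg hqt]
  have hQ : 2 < q.toReal := by
    have := (ENNReal.toReal_lt_toReal (by norm_num) hqt).2 hq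
    simpa using this
  have hρ : 0 ≤ r.toReal := ENNReal.toReal_nonneg
  have hitg := fun t => interp (v t) (hv t).measurable (G t) (hG t) r hr
  simp only [hN] at hitg
  set Q := q.toReal
  set ρ := r.toReal
  have hQ0 : 0 < Q := by linarith
  have ha : 1 - 2 / ρ = 4 / Q := by
    have e1 : 4 / Q = 2 * (2 / Q) := by ring
    have e2 : 2 / ρ = 2 * (1 / ρ) := by ring
    rw [e1, he, e2]
    ring
  rw [ha] at hitg
  have h1 : ∫⁻ t, eLpNorm (v t) r volume ^ Q ≤ (D * N ^ 2) ^ 2 * N ^ (2 / ρ * Q) := by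
    refine le_trans ?_ (mul_le_mul' hG4 le_rfl)
    rw [← lintegral_mul_const _ (by fun_prop)]
    apply lintegral_mono
    intro t
    refine (ENNReal.rpow_le_rpow (hitg t) hQ0.le).trans (le_of_eq ?_)
    beta_reduce
    rw [ENNReal.mul_rpow_of_nonneg _ _ hQ0.le, ← ENNReal.rpow_mul, ← ENNReal.rpow_mul,
      ← ENNReal.rpow_natCast]
    congr 2
    field_simp
    norm_num
  refine (ENNReal.rpow_le_rpow h1 (by positivity)).trans (le_of_eq ?_)
  have hQ1 : 0 ≤ 1 / Q := by positivity
  rw [ENNReal.mul_rpow_of_nonneg _ _ hQ1, mul_pow, ENNReal.mul_rpow_of_nonneg _ _ hQ1,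
    ← pow_mul, ← ENNReal.rpow_natCast, ← ENNReal.rpow_natCast, ← ENNReal.rpow_mul,
    ← ENNReal.rpow_mul, ← ENNReal.rpow_mul, mul_assoc,
    ← ENNReal.rpow_add_of_nonneg _ _ (by positivity) (by positivity), ← he]
  have e3 : ((2 * 2 : ℕ) : ℝ) * (1 / Q) + 2 / ρ * Q * (1 / Q) = 1 := by
    have : 2 / ρ * Q * (1 / Q) = 2 / ρ := by field_simp
    rw [this]
    push_cast
    linear_combination -ha
  rw [e3, ENNReal.rpow_one]
  congr 2
  push_cast
  ring

/-- Frequency-localized Strichartz estimate in dimension one: for admissible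
`(q,r)` with `2/q = 1/2 − 1/r`, there is `C = C(q,r)`, independent of `μ ∈ (0,1]` and `λ > 0`,
such that `‖S_{μ,1}(t) P_λ f‖_{L^q_t L^r_x} ≤ C (μ^{-1/2} λ^{-1/2} ⟨√μ λ⟩^{5/4})^{1/2−1/r}
‖P_λ f‖_{L^2}`. -/
theorem strichartz_1d (χ : ℝ → ℝ) (hχ : ContDiff ℝ (⊤ : ℕ∞) χ)
    (hsupp : Function.support χ ⊆ Set.Ioo (-2 : ℝ) 2)
    (hone : ∀ s ∈ Set.Icc (-1 : ℝ) 1, χ s = 1)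
    (q r : ℝ≥0∞) (hq : 2 < q) (hr2 : 2 ≤ r)
    (hadm : 2 / q = 1 / 2 - 1 / r) :
    ∃ C : ℝ, 0 < C ∧
      ∀ μ : ℝ, 0 < μ → μ ≤ 1 → ∀ lam : ℝ, 0 < lam → ∀ f : 𝓢(ℝ, ℂ),
        timeNorm q (fun t => eLpNorm (prop1 μ t (proj1 χ lam ⇑f)) r volume)
          ≤ ENNReal.ofReal
              (C * (μ ^ (-(1 : ℝ) / 2) * lam ^ (-(1 : ℝ) / 2) *
                  jap (Real.sqrt μ * lam) ^ ((5 : ℝ) / 4)) ^ ((1 : ℝ) / 2 - 1 / r.toReal)) *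
            eLpNorm (proj1 χ lam ⇑f) 2 volume := by
  refine ⟨3840 ^ ((1 : ℝ) / 2 - 1 / r.toReal), by positivity, ?_⟩
  intro μ hμ _ lam hl f
  obtain ⟨F, hFm, ⟨M, hM⟩, hN, hrep⟩ := main_rep χ hχ hsupp hone μ hμ lam hl f
  change _ ≤ ENNReal.ofReal (_ * (amp μ lam) ^ _) * _
  have hA := amp_pos μ lam hμ hl
  by_cases hqt : q = ∞
  · subst hqt
    have h2 := adm_top r hr2 hadm
    subst h2
    rw [timeNorm, if_pos rfl]
    simp only [(hrep _).2.1]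
    refine (essSup_le_of_ae_le _ (Filter.Eventually.of_forall fun t => le_rfl)).trans ?_
    simp
  · rw [← Real.mul_rpow (by norm_num) hA.le]
    have h0 : (0 : ℝ) ≤ 1 / 2 - 1 / r.toReal := by
      rw [← adm_real q r hqt hq hr2 hadm]
      positivity
    rw [← ENNReal.ofReal_rpow_of_nonneg (by positivity) h0]
    have hsup := sup_bound (volume.restrict (annul lam)) (phi μ) (phi_meas μ) (320 * amp μ lam)
      (by positivity) (fun t y ht => kernel_bound_s7 μ lam t y hμ hl ht) F hFm M hM
      (TopologicalSpace.denseSeq ℝ)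
    apply final_bound q r hqt hq hr2 hadm (fun t => prop1 μ t (proj1 χ lam ⇑f))
      (fun t => (hrep t).1) _ _ (fun t => (hrep t).2.1)
      (fun t => ⨆ n, ‖wave (volume.restrict (annul lam)) (phi μ) F t
        (TopologicalSpace.denseSeq ℝ n)‖ₑ)
    · apply Measurable.iSup
      intro n
      have := wave_meas (volume.restrict (annul lam)) (phi μ) (phi_meas μ) F hFm
      exact (this.comp (measurable_id.prodMk measurable_const)).enorm
    · intro t x
      have hc : Continuous fun x => ‖prop1 μ t (proj1 χ lam ⇑f) x‖ₑ := (hrep t).1.enorm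
      have hcl : IsClosed {x | ‖prop1 μ t (proj1 χ lam ⇑f) x‖ₑ ≤
          ⨆ n, ‖wave (volume.restrict (annul lam)) (phi μ) F t
            (TopologicalSpace.denseSeq ℝ n)‖ₑ} := isClosed_le hc continuous_const
      refine (TopologicalSpace.denseRange_denseSeq ℝ).induction_on x hcl ?_
      intro n
      rw [(hrep t).2.2]
      exact le_iSup (fun n => ‖wave (volume.restrict (annul lam)) (phi μ) F t
            (TopologicalSpace.denseSeq ℝ n)‖ₑ) n
    · refine hsup.trans (le_of_eq ?_)
      rw [hN]
      congr 2
      rw [show (3840 : ℝ) * amp μ lam = 12 * (320 * amp μ lam) by ring,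
        ENNReal.ofReal_mul (by norm_num)]
      norm_num
end
end
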